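/- Let c be a negative integer and suppose that c = L_n − 2^x·3^y = L_{n₁} − 2^{x₁}·3^{y₁} for nonnegative integers n, n₁, x, x₁, y, y₁ with n > n₁ > 500. Set X = x·log 2 + y·log 3 and X₁ = x₁·log 2 + y₁·log 3. Then X − X₁ < 1.7·10^12 · log n. -/

import Mathlib

/-- The Lucas sequence: L 0 = 2, L 1 = 1, L (n+2) = L (n+1) + L n. -/
def lucas : ℕ → ℤ
  | 0 => 2
  | 1 => 1
  | n + 2 => lucas (n + 1) + lucas n

/-!
If `X - X₁` were large, then `2 ^ x * 3 ^ y = L_n - c` would be so close to `L_n`, hence to `φ ^ n`,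
that the linear form `n * log φ - x * log 2 - y * log 3` would be too small.

The lower bound for the linear form is proved in Feldman's way. Siegel's lemma yields a nonzero
function `∑ P_v(z) * exp (logWeight v * z / 2 ^ 25)`, with each `P_v` an integer combination of
Feldman polynomials, whose derivatives along the kernel of the linear form vanish to high order at
the odd multiples of `2 ^ 25`. If the linear form is tiny, Hermite interpolation and the maximum
principle make half as many derivatives tiny at the odd multiples of half the step. A value there
lies in `ℤ[√φ, √2, √3]` up to known factors, so a Liouville inequality makes it vanish; by Kummer
theory the part of it carried by each residue class of exponents `v` modulo `2` then vanishes
separately. After `25` halvings the residue classes are singletons, and every `P_v` has more zeros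
than its degree allows.
-/

section

open Polynomial Finset

section Divisibility

variable {F : ℂ → ℂ}

lemma exists_eq_sub_pow_mul (hF : Differentiable ℂ F) {a : ℂ} {τ : ℕ}
    (h : (τ : ℕ∞) ≤ analyticOrderAt F a) :
    ∃ q : ℂ → ℂ, Differentiable ℂ q ∧ ∀ z, F z = (z - a) ^ τ * q z := by
  induction τ generalizing F with
  | zero => exact ⟨F, hF, by simp⟩
  | succ τ ih =>
    have hFa : F a = 0 := apply_eq_zero_of_analyticOrderAt_ne_zero fun h0 => by
      rw [h0, nonpos_iff_eq_zero, Nat.cast_eq_zero] at h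
      omega
    have hq : Differentiable ℂ (dslope F a) := by
      rw [← differentiableOn_univ, Complex.differentiableOn_dslope Filter.univ_mem]
      exact hF.differentiableOn
    have hmul : F = (· - a) * dslope F a := by
      funext z
      simpa only [hFa, sub_zero, smul_eq_mul, Pi.mul_apply] using (sub_smul_dslope F a z).symm
    have hord : analyticOrderAt F a = 1 + analyticOrderAt (dslope F a) a := by
      conv_lhs => rw [hmul]
      rw [analyticOrderAt_mul (by fun_prop) (hq.analyticAt a), analyticOrderAt_id_sub_const_self]
    obtain ⟨q, hqd, hFq⟩ := ih hq (by
      rw [hord, Nat.cast_add, add_comm, Nat.cast_one] at h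
      exact (ENat.add_le_add_iff_left ENat.one_ne_top).1 h)
    refine ⟨q, hqd, fun z => ?_⟩
    rw [congrFun hmul z, Pi.mul_apply, hFq z, pow_succ', mul_assoc]

lemma exists_eq_prod_sub_pow_mul {ι : Type*} (hF : Differentiable ℂ F) {a : ι → ℂ} {τ : ℕ}
    (s : Finset ι) (ha : Set.InjOn a s) (h : ∀ i ∈ s, (τ : ℕ∞) ≤ analyticOrderAt F (a i)) :
    ∃ q : ℂ → ℂ, Differentiable ℂ q ∧ ∀ z, F z = (∏ i ∈ s, (z - a i) ^ τ) * q z := by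
  classical
  induction s using Finset.induction_on with
  | empty => exact ⟨F, hF, by simp⟩
  | insert j s hj ih =>
    obtain ⟨q, hq, hFq⟩ := ih (ha.mono (by simp)) fun i hi => h i (mem_insert_of_mem hi)
    set Q : ℂ → ℂ := fun z => ∏ i ∈ s, (z - a i) ^ τ
    have hQj : AnalyticAt ℂ Q (a j) := by fun_prop
    have hQ0 : Q (a j) ≠ 0 := by
      refine prod_ne_zero_iff.2 fun i hi => pow_ne_zero _ (sub_ne_zero.2 fun e => hj ?_)
      exact ha (mem_insert_self j s) (mem_insert_of_mem hi) e ▸ hi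
    have hord : analyticOrderAt F (a j) = analyticOrderAt q (a j) := by
      rw [show F = Q * q from funext hFq, analyticOrderAt_mul hQj (hq.analyticAt _),
        hQj.analyticOrderAt_eq_zero.2 hQ0, zero_add]
    obtain ⟨q', hq', hqq'⟩ := exists_eq_sub_pow_mul hq (hord ▸ h j (mem_insert_self _ _))
    refine ⟨q', hq', fun z => ?_⟩
    rw [hFq z, hqq' z, prod_insert hj]
    ring

lemma le_analyticOrderAt_of_X_pow_dvd {τ : ℕ} {p : ℂ[X]} (h : (X : ℂ[X]) ^ τ ∣ p) (a : ℂ) :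
    (τ : ℕ∞) ≤ analyticOrderAt (fun z => p.eval (z - a)) a := by
  obtain ⟨q, rfl⟩ := h
  have hd : Differentiable ℂ fun z => ((X : ℂ[X]) ^ τ * q).eval (z - a) := by fun_prop
  have hq : Differentiable ℂ fun z => q.eval (z - a) := by fun_prop
  rw [natCast_le_analyticOrderAt (hd.analyticAt a)]
  exact ⟨fun z => q.eval (z - a), hq.analyticAt a, by simp⟩

lemma le_analyticOrderAt_sum {ι : Type*} {τ : ℕ∞} {a : ℂ} (s : Finset ι) (f : ι → ℂ → ℂ)
    (h : ∀ i ∈ s, τ ≤ analyticOrderAt (f i) a) :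
    τ ≤ analyticOrderAt (fun z => ∑ i ∈ s, f i z) a := by
  classical
  induction s using Finset.induction_on with
  | empty => simp only [sum_empty, analyticOrderAt_eq_top.2 (Filter.Eventually.of_forall
      fun _ => rfl), le_top]
  | insert j s hj ih =>
    rw [show (fun z => ∑ i ∈ insert j s, f i z) = f j + fun z => ∑ i ∈ s, f i z by
      funext z; simp only [sum_insert hj, Pi.add_apply]]
    exact (le_min (h j (mem_insert_self _ _)) (ih fun i hi => h i (mem_insert_of_mem hi))).trans
      le_analyticOrderAt_add

end Divisibility

section TruncNorm

variable {𝕜 : Type*} [NormedField 𝕜] {ι : Type*} {τ : ℕ} {r : ℝ}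

/-- The weighted `ℓ¹` norm `∑_{j < τ} ‖p_j‖ r ^ j` of a polynomial modulo `X ^ τ`. It is
submultiplicative, and measures how far a Taylor polynomial is from vanishing to order `τ`. -/
noncomputable def truncNorm (τ : ℕ) (r : ℝ) (p : 𝕜[X]) : ℝ := ∑ j ∈ range τ, ‖p.coeff j‖ * r ^ j

lemma truncNorm_nonneg (hr : 0 ≤ r) (p : 𝕜[X]) : 0 ≤ truncNorm τ r p :=
  sum_nonneg fun _ _ => by positivity

lemma truncNorm_add_le (hr : 0 ≤ r) (p q : 𝕜[X]) :
    truncNorm τ r (p + q) ≤ truncNorm τ r p + truncNorm τ r q := by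
  unfold truncNorm
  rw [← sum_add_distrib]
  refine sum_le_sum fun j _ => ?_
  rw [coeff_add, ← add_mul]
  gcongr
  exact norm_add_le _ _

lemma truncNorm_sum_le (hr : 0 ≤ r) (s : Finset ι) (p : ι → 𝕜[X]) :
    truncNorm τ r (∑ i ∈ s, p i) ≤ ∑ i ∈ s, truncNorm τ r (p i) := by
  unfold truncNorm
  rw [sum_comm]
  refine sum_le_sum fun j _ => ?_
  rw [← sum_mul, finsetSum_coeff]
  gcongr
  exact norm_sum_le _ _

lemma truncNorm_C_mul (τ : ℕ) (r : ℝ) (c : 𝕜) (p : 𝕜[X]) :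
    truncNorm τ r (C c * p) = ‖c‖ * truncNorm τ r p := by
  simp only [truncNorm, coeff_C_mul, norm_mul, mul_sum, mul_assoc]

lemma truncNorm_one_le (τ : ℕ) (r : ℝ) : truncNorm τ r (1 : 𝕜[X]) ≤ 1 := by
  rcases τ with _ | τ
  · simp [truncNorm]
  · rw [truncNorm, sum_eq_single 0 (by intro b _ hb; simp [coeff_one, hb]) (by simp)]
    simp

lemma truncNorm_C_le (τ : ℕ) (r : ℝ) (c : 𝕜) : truncNorm τ r (C c) ≤ ‖c‖ := by
  rw [← mul_one (C c), truncNorm_C_mul]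
  exact mul_le_of_le_one_right (norm_nonneg _) (truncNorm_one_le τ r)

lemma truncNorm_X_le (τ : ℕ) (hr : 0 ≤ r) : truncNorm τ r (X : 𝕜[X]) ≤ r := by
  have hcoeff : ∀ j, ‖(X : 𝕜[X]).coeff j‖ * r ^ j = if 1 = j then r else 0 := by
    intro j
    rw [coeff_X]
    split_ifs with h
    · subst h; simp
    · simp
  rw [truncNorm, sum_congr rfl fun j _ => hcoeff j, sum_ite_eq]
  split_ifs
  exacts [le_rfl, hr]

lemma norm_coeff_mul_le (hr : 0 ≤ r) (p q : 𝕜[X]) (j : ℕ) :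
    ‖(p * q).coeff j‖ * r ^ j ≤
      ∑ x ∈ antidiagonal j, ‖p.coeff x.1‖ * r ^ x.1 * (‖q.coeff x.2‖ * r ^ x.2) :=
  calc ‖(p * q).coeff j‖ * r ^ j
      ≤ (∑ x ∈ antidiagonal j, ‖p.coeff x.1 * q.coeff x.2‖) * r ^ j := by
        rw [coeff_mul]
        gcongr
        exact norm_sum_le _ _
    _ = _ := by
        rw [sum_mul]
        refine sum_congr rfl fun x hx => ?_
        rw [norm_mul, ← mem_antidiagonal.1 hx, pow_add]
        ring

lemma sum_range_antidiagonal_le_mul_sum {f g : ℕ → ℝ} (hf : ∀ i, 0 ≤ f i) (hg : ∀ i, 0 ≤ g i)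
    (n : ℕ) :
    ∑ j ∈ range n, ∑ x ∈ antidiagonal j, f x.1 * g x.2 ≤
      (∑ i ∈ range n, f i) * ∑ j ∈ range n, g j := by
  have hmaps : ∀ x ∈ (range n ×ˢ range n).filter (fun x => x.1 + x.2 < n), x.1 + x.2 ∈ range n :=
    fun x hx => mem_range.2 (mem_filter.1 hx).2
  calc ∑ j ∈ range n, ∑ x ∈ antidiagonal j, f x.1 * g x.2
      = ∑ x ∈ (range n ×ˢ range n).filter (fun x => x.1 + x.2 < n), f x.1 * g x.2 := by
        rw [← sum_fiberwise_of_maps_to hmaps]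
        refine sum_congr rfl fun j hj => sum_congr ?_ fun _ _ => rfl
        ext x
        simp only [HasAntidiagonal.mem_antidiagonal, mem_filter, mem_product, mem_range] at hj ⊢
        omega
    _ ≤ ∑ x ∈ range n ×ˢ range n, f x.1 * g x.2 :=
        sum_le_sum_of_subset_of_nonneg (filter_subset _ _) fun _ _ _ => mul_nonneg (hf _) (hg _)
    _ = _ := by rw [sum_product, sum_mul_sum]

lemma truncNorm_mul_le (hr : 0 ≤ r) (p q : 𝕜[X]) :
    truncNorm τ r (p * q) ≤ truncNorm τ r p * truncNorm τ r q :=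
  (sum_le_sum fun j _ => norm_coeff_mul_le hr p q j).trans <|
    sum_range_antidiagonal_le_mul_sum (f := fun i => ‖p.coeff i‖ * r ^ i)
      (g := fun i => ‖q.coeff i‖ * r ^ i) (fun _ => by positivity) (fun _ => by positivity) τ

lemma truncNorm_prod_le (hr : 0 ≤ r) (s : Finset ι) (p : ι → 𝕜[X]) :
    truncNorm τ r (∏ i ∈ s, p i) ≤ ∏ i ∈ s, truncNorm τ r (p i) := by
  classical
  induction s using Finset.induction_on with
  | empty => simpa only [prod_empty] using truncNorm_one_le τ r
  | insert j s hj ih =>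
    rw [prod_insert hj, prod_insert hj]
    exact (truncNorm_mul_le hr _ _).trans (by gcongr; exact truncNorm_nonneg hr _)

lemma truncNorm_pow_le (hr : 0 ≤ r) (p : 𝕜[X]) (m : ℕ) :
    truncNorm τ r (p ^ m) ≤ truncNorm τ r p ^ m := by
  simpa only [prod_const, card_range] using truncNorm_prod_le hr (range m) fun _ => p

lemma X_pow_dvd_sub_trunc (τ : ℕ) (p : 𝕜[X]) :
    (X : 𝕜[X]) ^ τ ∣ p - PowerSeries.trunc τ (p : PowerSeries 𝕜) := by
  rw [X_pow_dvd_iff]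
  intro j hj
  rw [coeff_sub, PowerSeries.coeff_trunc, if_pos hj, coeff_coe, sub_self]

lemma norm_eval_trunc_le {p : 𝕜[X]} {D : ℝ} (hr : 0 < r) (hD : r ≤ D) {w : 𝕜} (hw : ‖w‖ ≤ D) :
    ‖(PowerSeries.trunc τ (p : PowerSeries 𝕜)).eval w‖ ≤ truncNorm τ r p * (D / r) ^ τ := by
  rw [eval, PowerSeries.eval₂_trunc_eq_sum_range, truncNorm, sum_mul]
  refine (norm_sum_le _ _).trans (sum_le_sum fun j hj => ?_)
  have hone : 1 ≤ D / r := (one_le_div hr).2 hD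
  rw [coeff_coe, RingHom.id_apply, norm_mul, norm_pow]
  calc ‖p.coeff j‖ * ‖w‖ ^ j ≤ ‖p.coeff j‖ * D ^ j := by gcongr
    _ = ‖p.coeff j‖ * r ^ j * (D / r) ^ j := by rw [div_pow]; field_simp
    _ ≤ _ := by
      gcongr
      exact (mem_range.1 hj).le

/-- The truncation modulo `X ^ τ` of the power series of `1 / (d + X)`. -/
noncomputable def geomPoly (τ : ℕ) (d : 𝕜) : 𝕜[X] := ∑ j ∈ range τ, C (d⁻¹ * (-d⁻¹) ^ j) * X ^ j

lemma coeff_geomPoly_of_lt (d : 𝕜) {j : ℕ} (hj : j < τ) :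
    (geomPoly τ d).coeff j = d⁻¹ * (-d⁻¹) ^ j := by
  simp only [geomPoly, finsetSum_coeff, coeff_C_mul_X_pow, sum_ite_eq, mem_range, if_pos hj]

lemma X_pow_dvd_one_sub_mul_geomPoly (τ : ℕ) {d : 𝕜} (hd : d ≠ 0) :
    (X : 𝕜[X]) ^ τ ∣ 1 - (X + C d) * geomPoly τ d := by
  have hgeom : geomPoly τ d = C d⁻¹ * ∑ j ∈ range τ, (C (-d⁻¹) * X) ^ j := by
    simp only [geomPoly, mul_sum, mul_pow, C_mul, C_pow, mul_assoc]
  have hfactor : (X + C d) * C d⁻¹ = 1 - C (-d⁻¹) * X := by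
    rw [add_mul, ← C_mul, mul_inv_cancel₀ hd, C_neg, C_1]; ring
  rw [hgeom, ← mul_assoc, hfactor, mul_neg_geom_sum, sub_sub_cancel, mul_pow]
  exact Dvd.intro_left _ rfl

lemma truncNorm_geomPoly_le (τ : ℕ) {d : 𝕜} (hr : 0 ≤ r) (hd : r < ‖d‖) :
    truncNorm τ r (geomPoly τ d) ≤ (‖d‖ - r)⁻¹ := by
  have hd0 : 0 < ‖d‖ := hr.trans_lt hd
  have hratio : r / ‖d‖ < 1 := (div_lt_one hd0).2 hd
  calc truncNorm τ r (geomPoly τ d) = ‖d‖⁻¹ * ∑ j ∈ range τ, (r / ‖d‖) ^ j := by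
        rw [truncNorm, mul_sum]
        refine sum_congr rfl fun j hj => ?_
        rw [coeff_geomPoly_of_lt d (mem_range.1 hj), norm_mul, norm_pow, norm_neg, norm_inv,
          div_pow, inv_pow]
        field_simp
    _ ≤ ‖d‖⁻¹ * (1 - r / ‖d‖)⁻¹ := by
        rw [← tsum_geometric_of_lt_one (by positivity) hratio]
        gcongr
        exact (summable_geometric_of_lt_one (by positivity) hratio).sum_le_tsum _
          fun _ _ => by positivity
    _ = _ := by
        rw [← mul_inv]
        congr 1
        field_simp

end TruncNorm

section HermiteInterpolation

variable {ι : Type*} [DecidableEq ι] {s : Finset ι} {a : ι → ℂ} {τ : ℕ} {p : ι → ℂ[X]} {g : ℝ}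

/-- The local factor at the node `a i` of the Hermite interpolant: the Taylor polynomial of order
`τ`, in the variable `z - a i`, of `p i` divided by `∏_{j ≠ i} (z - a j) ^ τ`. -/
noncomputable def hermiteFactor (s : Finset ι) (a : ι → ℂ) (τ : ℕ) (p : ι → ℂ[X]) (i : ι) : ℂ[X] :=
  PowerSeries.trunc τ
    ((p i * ∏ j ∈ s.erase i, geomPoly τ (a i - a j) ^ τ : ℂ[X]) : PowerSeries ℂ)

/-- The summand at the node `a i` of the Hermite interpolant: it agrees with `p i` to order `τ` at
`a i`, and vanishes to order `τ` at the other nodes. -/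
noncomputable def hermiteTerm (s : Finset ι) (a : ι → ℂ) (τ : ℕ) (p : ι → ℂ[X]) (i : ι) (z : ℂ) :
    ℂ :=
  (∏ j ∈ s.erase i, (z - a j) ^ τ) * (hermiteFactor s a τ p i).eval (z - a i)

lemma differentiable_hermiteTerm (i : ι) : Differentiable ℂ (hermiteTerm s a τ p i) := by
  unfold hermiteTerm
  fun_prop

lemma X_pow_dvd_one_sub_prod_geomPoly {i : ι} (hi : ∀ j ∈ s.erase i, a i ≠ a j) :
    (X : ℂ[X]) ^ τ ∣ 1 - (∏ j ∈ s.erase i, (X + C (a i - a j)) ^ τ) *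
      ∏ j ∈ s.erase i, geomPoly τ (a i - a j) ^ τ := by
  rw [← prod_mul_distrib]
  refine prod_induction _ (fun q => (X : ℂ[X]) ^ τ ∣ 1 - q) (fun q q' hq hq' => ?_) (by simp)
    fun j hj => ?_
  · rw [show 1 - q * q' = (1 - q) + q * (1 - q') by ring]
    exact dvd_add hq (hq'.mul_left _)
  · rw [← mul_pow]
    exact (X_pow_dvd_one_sub_mul_geomPoly τ (sub_ne_zero.2 (hi j hj))).trans
      (by simpa only [one_pow] using sub_dvd_pow_sub_pow (1 : ℂ[X]) _ τ)

lemma le_analyticOrderAt_sub_hermiteTerm {i : ι} (hi : ∀ j ∈ s.erase i, a i ≠ a j) :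
    (τ : ℕ∞) ≤ analyticOrderAt (fun z => (p i).eval (z - a i) - hermiteTerm s a τ p i z) (a i) := by
  set Q : ℂ[X] := ∏ j ∈ s.erase i, (X + C (a i - a j)) ^ τ with hQ
  set I : ℂ[X] := ∏ j ∈ s.erase i, geomPoly τ (a i - a j) ^ τ
  have hdvd : (X : ℂ[X]) ^ τ ∣ p i - Q * hermiteFactor s a τ p i := by
    rw [show p i - Q * hermiteFactor s a τ p i =
      p i * (1 - Q * I) + Q * (p i * I - hermiteFactor s a τ p i) by ring]
    exact dvd_add ((X_pow_dvd_one_sub_prod_geomPoly hi).mul_left _)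
      ((X_pow_dvd_sub_trunc _ _).mul_left _)
  convert le_analyticOrderAt_of_X_pow_dvd hdvd (a i) using 3 with z
  simp only [hermiteTerm, hQ, eval_sub, eval_mul, eval_prod, eval_pow, eval_add, eval_X, eval_C,
    sub_add_sub_cancel]

lemma le_analyticOrderAt_hermiteTerm_of_ne {i j : ι} (hi : i ∈ s.erase j) :
    (τ : ℕ∞) ≤ analyticOrderAt (fun z => -hermiteTerm s a τ p j z) (a i) := by
  have hd : Differentiable ℂ fun z =>
      -((∏ l ∈ (s.erase j).erase i, (z - a l) ^ τ) * (hermiteFactor s a τ p j).eval (z - a j)) := by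
    fun_prop
  rw [natCast_le_analyticOrderAt ((differentiable_hermiteTerm j).fun_neg.analyticAt _)]
  refine ⟨_, hd.analyticAt _, Filter.Eventually.of_forall fun z => ?_⟩
  rw [hermiteTerm, smul_eq_mul, ← mul_prod_erase _ _ hi]
  ring

lemma truncNorm_mul_prod_geomPoly_le (hg : 0 ≤ g) {ε : ℝ} {i : ι} (hε : truncNorm τ g (p i) ≤ ε)
    (hsep : ∀ j ∈ s.erase i, g < ‖a i - a j‖) :
    truncNorm τ g (p i * ∏ j ∈ s.erase i, geomPoly τ (a i - a j) ^ τ) ≤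
      ε * (∏ j ∈ s.erase i, (‖a i - a j‖ - g)⁻¹) ^ τ := by
  refine (truncNorm_mul_le hg _ _).trans ?_
  refine mul_le_mul hε ?_ (truncNorm_nonneg hg _) ((truncNorm_nonneg hg _).trans hε)
  rw [← prod_pow]
  refine (truncNorm_prod_le hg _ _).trans ?_
  refine prod_le_prod (fun _ _ => truncNorm_nonneg hg _) fun j hj => ?_
  refine (truncNorm_pow_le hg _ _).trans ?_
  exact pow_le_pow_left₀ (truncNorm_nonneg hg _) (truncNorm_geomPoly_le τ hg (hsep j hj)) _

lemma norm_hermiteTerm_le (hg : 0 < g) {ε : ℝ} {i : ι} (hi : i ∈ s)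
    (hε : truncNorm τ g (p i) ≤ ε) (hsep : ∀ j ∈ s.erase i, g < ‖a i - a j‖) {w : ℂ} {D : ℝ}
    (hD : g ≤ D) (hw : ∀ j ∈ s, ‖w - a j‖ ≤ D) :
    ‖hermiteTerm s a τ p i w‖ ≤
      ε * (D ^ #(s.erase i) * (∏ j ∈ s.erase i, (‖a i - a j‖ - g)⁻¹) * (D / g)) ^ τ := by
  have hD0 : 0 < D := hg.trans_le hD
  have hprod : ∏ j ∈ s.erase i, ‖w - a j‖ ≤ D ^ #(s.erase i) :=
    (prod_le_prod (fun _ _ => norm_nonneg _) fun j hj => hw j (mem_of_mem_erase hj)).trans_eq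
      (prod_const D)
  have hfactor := (norm_eval_trunc_le hg hD (hw i hi)).trans
    (mul_le_mul_of_nonneg_right (truncNorm_mul_prod_geomPoly_le hg.le hε hsep) (by positivity))
  rw [hermiteTerm, prod_pow, norm_mul, norm_pow, norm_prod]
  calc _ ≤ (D ^ #(s.erase i)) ^ τ *
        (ε * (∏ j ∈ s.erase i, (‖a i - a j‖ - g)⁻¹) ^ τ * (D / g) ^ τ) := by
        gcongr
        exact hfactor
    _ = _ := by rw [mul_pow, mul_pow]; ring

theorem exists_hermite_interpolant {f : ℂ → ℂ}
    (hp : ∀ i ∈ s, (τ : ℕ∞) ≤ analyticOrderAt (fun z => f z - (p i).eval (z - a i)) (a i))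
    (hg : 0 < g) {ε : ℝ} (hε : ∀ i ∈ s, truncNorm τ g (p i) ≤ ε)
    (hsep : ∀ i ∈ s, ∀ j ∈ s.erase i, g < ‖a i - a j‖) :
    ∃ H : ℂ → ℂ, Differentiable ℂ H ∧
      (∀ i ∈ s, (τ : ℕ∞) ≤ analyticOrderAt (fun z => f z - H z) (a i)) ∧
      ∀ (w : ℂ) (D : ℝ), g ≤ D → (∀ i ∈ s, ‖w - a i‖ ≤ D) → ‖H w‖ ≤ ∑ i ∈ s,
        ε * (D ^ #(s.erase i) * (∏ j ∈ s.erase i, (‖a i - a j‖ - g)⁻¹) * (D / g)) ^ τ := by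
  refine ⟨fun z => ∑ i ∈ s, hermiteTerm s a τ p i z,
    Differentiable.fun_sum fun i _ => differentiable_hermiteTerm i, fun i hi => ?_,
    fun w D hD hw => (norm_sum_le _ _).trans <|
      sum_le_sum fun i hi => norm_hermiteTerm_le hg hi (hε i hi) (hsep i hi) hD hw⟩
  have hne : ∀ j ∈ s.erase i, a i ≠ a j := fun j hj =>
    sub_ne_zero.1 (norm_pos_iff.1 (hg.trans (hsep i hi j hj)))
  have hsplit : (fun z => f z - ∑ i ∈ s, hermiteTerm s a τ p i z) =
      ((fun z => f z - (p i).eval (z - a i)) +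
        fun z => (p i).eval (z - a i) - hermiteTerm s a τ p i z) +
        fun z => ∑ j ∈ s.erase i, -hermiteTerm s a τ p j z := by
    funext z
    simp only [Pi.add_apply]
    rw [← add_sum_erase _ _ hi, sum_neg_distrib]
    ring
  rw [hsplit]
  refine (le_min ((le_min (hp i hi) (le_analyticOrderAt_sub_hermiteTerm hne)).trans
    le_analyticOrderAt_add) (le_analyticOrderAt_sum _ _ fun j hj => ?_)).trans
    le_analyticOrderAt_add
  exact le_analyticOrderAt_hermiteTerm_of_ne
    (mem_erase.2 ⟨(ne_of_mem_erase hj).symm, hi⟩)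

end HermiteInterpolation

section SchwarzLemma

lemma factorial_le_prod_range_odd_gap (i : ℕ) :
    (i.factorial : ℝ) ≤ ∏ j ∈ range i, (2 * |(i : ℝ) - j| - 1) := by
  rw [← prod_range_add_one_eq_factorial, ← prod_range_reflect, Nat.cast_prod]
  refine prod_le_prod (fun _ _ => by positivity) fun j hjmem => ?_
  have hj := mem_range.1 hjmem
  have hji : (j : ℝ) + 1 ≤ i := by exact_mod_cast hj
  have hcast : ((i - 1 - j + 1 : ℕ) : ℝ) = i - j := by
    rw [← Nat.cast_sub hj.le, show i - 1 - j + 1 = i - j by omega]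
  rw [hcast, abs_of_nonneg (by linarith)]
  linarith

lemma factorial_le_prod_Ico_odd_gap (i n : ℕ) :
    ((n - 1 - i).factorial : ℝ) ≤ ∏ j ∈ Ico (i + 1) n, (2 * |(i : ℝ) - j| - 1) := by
  rw [prod_Ico_eq_prod_range, ← prod_range_add_one_eq_factorial,
    show n - (i + 1) = n - 1 - i by omega]
  push_cast
  refine prod_le_prod (fun _ _ => by positivity) fun j _ => ?_
  have : (0 : ℝ) ≤ j := j.cast_nonneg
  rw [abs_of_nonpos (by linarith)]
  linarith

lemma factorial_le_prod_erase_odd_gap {n i : ℕ} (hi : i < n) :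
    ((n - 1).factorial : ℝ) ≤ 2 ^ (n - 1) * ∏ j ∈ (range n).erase i, (2 * |(i : ℝ) - j| - 1) := by
  have hunion : (range n).erase i = range i ∪ Ico (i + 1) n := by
    ext j
    simp only [mem_erase, mem_range, mem_union, mem_Ico]
    omega
  have hdisj : Disjoint (range i) (Ico (i + 1) n) := by
    rw [disjoint_left]
    intro j
    simp only [mem_range, mem_Ico]
    omega
  have hchoose : ((n - 1).choose i : ℝ) ≤ 2 ^ (n - 1) := by
    exact_mod_cast Nat.choose_le_two_pow _ _
  have hleft := factorial_le_prod_range_odd_gap i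
  rw [hunion, prod_union hdisj, ← Nat.choose_mul_factorial_mul_factorial (Nat.le_sub_one_of_lt hi),
    mul_assoc]
  push_cast
  gcongr
  · exact (Nat.cast_nonneg _).trans hleft
  · exact factorial_le_prod_Ico_odd_gap i n

lemma natCast_pow_self_le (n : ℕ) : (n : ℝ) ^ n ≤ 4 ^ n * n.factorial := by
  have h := Real.pow_div_factorial_le_exp (n : ℝ) n.cast_nonneg n
  rw [div_le_iff₀ (by positivity), ← Real.exp_one_pow] at h
  exact h.trans (by gcongr; linarith [Real.exp_one_lt_d9])

lemma natCast_pow_self_le_prod_erase_odd_gap {n i : ℕ} (hi : i < n) :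
    (n : ℝ) ^ n ≤ 16 ^ n * ∏ j ∈ (range n).erase i, (2 * |(i : ℝ) - j| - 1) := by
  have hgap := factorial_le_prod_erase_odd_gap hi
  set R := ∏ j ∈ (range n).erase i, (2 * |(i : ℝ) - j| - 1)
  have hR : 0 ≤ R :=
    (pos_of_mul_pos_right ((Nat.cast_pos.2 (n - 1).factorial_pos).trans_le hgap)
      (by positivity)).le
  have hfac : (n.factorial : ℝ) = n * (n - 1).factorial := by
    exact_mod_cast (Nat.mul_factorial_pred (Nat.ne_zero_of_lt hi)).symm
  have hn : (n : ℝ) ≤ 2 ^ n := by exact_mod_cast Nat.lt_two_pow_self.le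
  calc (n : ℝ) ^ n ≤ 4 ^ n * n.factorial := natCast_pow_self_le n
    _ ≤ 4 ^ n * (2 ^ n * (2 ^ (n - 1) * R)) := by rw [hfac]; gcongr
    _ ≤ 4 ^ n * (2 ^ n * (2 ^ n * R)) := by gcongr <;> norm_num
    _ = 16 ^ n * R := by
      rw [show (16 : ℝ) = 4 * (2 * 2) by norm_num, mul_pow, mul_pow]
      ring

lemma prod_abs_sub_odd_le {n : ℕ} {g x : ℝ} (hg : 0 < g) (hx0 : 0 ≤ x) (hx : x ≤ 2 * (g * n)) :
    ∏ i ∈ range n, |x - g * (2 * i + 1)| ≤ (g * n) ^ n := by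
  refine le_of_sq_le_sq ?_ (by positivity)
  -- Pair each node with its mirror image in the centre `g * n`.
  calc (∏ i ∈ range n, |x - g * (2 * i + 1)|) ^ 2
      = ∏ i ∈ range n, (|x - g * (2 * i + 1)| * |x - g * (2 * ((n - 1 - i : ℕ) : ℝ) + 1)|) := by
        rw [prod_mul_distrib, prod_range_reflect (fun i : ℕ => |x - g * (2 * (i : ℝ) + 1)|), sq]
    _ ≤ ∏ i ∈ range n, (g * n) ^ 2 := by
        refine prod_le_prod (fun _ _ => by positivity) fun i hi => ?_
        have hi := mem_range.1 hi
        have hcast : ((n - 1 - i : ℕ) : ℝ) = n - 1 - i := by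
          rw [Nat.sub_sub, Nat.cast_sub (by omega)]
          push_cast
          ring
        have hin : g * i + g ≤ g * n := by
          rw [← mul_add_one]
          gcongr
          exact_mod_cast hi
        have hgi : 0 ≤ g * i := by positivity
        rw [hcast, ← abs_mul, abs_le]
        constructor <;>
          nlinarith [mul_nonneg hx0 (sub_nonneg.2 hx), mul_nonneg hgi (sub_nonneg.2 hin),
            sq_nonneg (x - g * n), sq_nonneg (g * (2 * i + 1) - g * n), mul_pos hg hg]
    _ = ((g * n) ^ n) ^ 2 := by rw [prod_const, card_range, ← pow_mul, ← pow_mul, mul_comm 2 n]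

/-- The interpolation nodes `g, 3 g, 5 g, …`, seen in the complex plane; the first `n` of them are
symmetric about `g * n`. -/
def oddNode (g : ℝ) (i : ℕ) : ℂ :=
  ((g * (2 * i + 1) : ℝ) : ℂ)

variable {n τ : ℕ} {g : ℝ}

lemma norm_oddNode_sub (hg : 0 ≤ g) (i j : ℕ) :
    ‖oddNode g i - oddNode g j‖ = g * (2 * |(i : ℝ) - j|) := by
  rw [oddNode, oddNode, ← Complex.ofReal_sub, Complex.norm_real, Real.norm_eq_abs,
    show g * (2 * (i : ℝ) + 1) - g * (2 * j + 1) = g * (2 * (i - j)) by ring, abs_mul, abs_mul,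
    abs_of_nonneg hg, abs_two]

lemma lt_norm_oddNode_sub (hg : 0 < g) {i j : ℕ} (hij : i ≠ j) :
    g < ‖oddNode g i - oddNode g j‖ := by
  have hgap : (1 : ℝ) ≤ |(i : ℝ) - j| := by
    exact_mod_cast Int.one_le_abs (show (i : ℤ) - j ≠ 0 by omega)
  rw [norm_oddNode_sub hg.le]
  nlinarith

lemma norm_sub_oddNode_le (hg : 0 < g) {i : ℕ} (hi : i < n) :
    ‖((g * n : ℝ) : ℂ) - oddNode g i‖ ≤ g * n := by
  have hin : (i : ℝ) + 1 ≤ n := by exact_mod_cast hi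
  have hi0 : 0 ≤ g * i := by positivity
  rw [oddNode, ← Complex.ofReal_sub, Complex.norm_real, Real.norm_eq_abs, abs_le]
  constructor <;> nlinarith

lemma oddNode_interpolation_weight_le (hg : 0 < g) {σ : ℝ} (hσ : 0 ≤ σ) {i : ℕ} (hi : i < n) :
    (σ * (g * n)) ^ #((range n).erase i) *
        (∏ j ∈ (range n).erase i, (‖oddNode g i - oddNode g j‖ - g)⁻¹) * (σ * (g * n) / g) ≤
      (16 * σ) ^ n := by
  have hcard : #((range n).erase i) = n - 1 := by
    rw [card_erase_of_mem (mem_range.2 hi), card_range]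
  have hsep : 0 < ∏ j ∈ (range n).erase i, (‖oddNode g i - oddNode g j‖ - g) :=
    prod_pos fun j hj => sub_pos.2 (lt_norm_oddNode_sub hg (ne_of_mem_erase hj).symm)
  have hprod : ∏ j ∈ (range n).erase i, (‖oddNode g i - oddNode g j‖ - g) =
      g ^ (n - 1) * ∏ j ∈ (range n).erase i, (2 * |(i : ℝ) - j| - 1) := by
    rw [← hcard, ← prod_const, ← prod_mul_distrib]
    refine prod_congr rfl fun j _ => ?_
    rw [norm_oddNode_sub hg.le]
    ring
  rw [prod_inv_distrib, hcard]
  rw [hprod] at hsep ⊢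
  have hgap := natCast_pow_self_le_prod_erase_odd_gap hi
  set R := ∏ j ∈ (range n).erase i, (2 * |(i : ℝ) - j| - 1)
  obtain ⟨m, rfl⟩ : ∃ m, n = m + 1 := ⟨n - 1, by omega⟩
  have hR : 0 < R := pos_of_mul_pos_right hsep (by positivity)
  calc _ = σ ^ (m + 1) * ((m + 1 : ℕ) : ℝ) ^ (m + 1) / R := by
        simp only [Nat.add_sub_cancel, mul_pow, pow_succ]
        field_simp
    _ ≤ (16 * σ) ^ (m + 1) := by
        rw [div_le_iff₀ hR, mul_pow, mul_comm (16 ^ _), mul_assoc]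
        gcongr

lemma exists_hermite_interpolant_oddNode (hn : 0 < n) (hg : 0 < g) {f : ℂ → ℂ} {p : ℕ → ℂ[X]}
    (hp : ∀ i < n, (τ : ℕ∞) ≤
      analyticOrderAt (fun z => f z - (p i).eval (z - oddNode g i)) (oddNode g i))
    {ε : ℝ} (hε : ∀ i < n, truncNorm τ g (p i) ≤ ε) {ρ : ℝ} (hρ : 0 ≤ ρ) :
    ∃ H : ℂ → ℂ, Differentiable ℂ H ∧
      (∀ i ∈ range n, (τ : ℕ∞) ≤ analyticOrderAt (fun z => f z - H z) (oddNode g i)) ∧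
      ∀ w : ℂ, ‖w - (g * n : ℝ)‖ ≤ ρ * (g * n) → ‖H w‖ ≤ n * ε * (16 * (ρ + 1)) ^ (τ * n) := by
  obtain ⟨H, hH, hord, hbound⟩ := exists_hermite_interpolant (s := range n) (a := oddNode g)
    (fun i hi => hp i (mem_range.1 hi)) hg (fun i hi => hε i (mem_range.1 hi))
    fun i _ j hj => lt_norm_oddNode_sub hg (ne_of_mem_erase hj).symm
  refine ⟨H, hH, hord, fun w hw => ?_⟩
  have hε0 : 0 ≤ ε := (truncNorm_nonneg hg.le _).trans (hε 0 hn)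
  have hn1 : (1 : ℝ) ≤ n := by exact_mod_cast hn
  have hgD : g ≤ (ρ + 1) * (g * n) := by
    nlinarith [mul_nonneg hρ (mul_nonneg hg.le (zero_le_one.trans hn1))]
  have hwD : ∀ i ∈ range n, ‖w - oddNode g i‖ ≤ (ρ + 1) * (g * n) := fun i hi => by
    linarith [norm_sub_le_norm_sub_add_norm_sub w (g * n : ℝ) (oddNode g i),
      norm_sub_oddNode_le hg (mem_range.1 hi)]
  calc ‖H w‖ ≤ ∑ i ∈ range n, ε * ((16 * (ρ + 1)) ^ n) ^ τ := by
        refine (hbound w _ hgD hwD).trans (sum_le_sum fun i hi => ?_)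
        gcongr
        · refine mul_nonneg (mul_nonneg (by positivity) (prod_nonneg fun j hj => ?_))
            (by positivity)
          exact inv_nonneg.2 (sub_pos.2 (lt_norm_oddNode_sub hg (ne_of_mem_erase hj).symm)).le
        · exact oddNode_interpolation_weight_le hg (by linarith) (mem_range.1 hi)
    _ = n * ε * (16 * (ρ + 1)) ^ (τ * n) := by
        rw [sum_const, card_range, nsmul_eq_mul, ← pow_mul, mul_comm n τ, mul_assoc]

lemma norm_quotient_le {ι : Type*} {s : Finset ι} {a : ι → ℂ} {F q : ℂ → ℂ}
    (hq : Differentiable ℂ q) (hF : ∀ z, F z = (∏ i ∈ s, (z - a i) ^ τ) * q z) {c : ℂ} {r R : ℝ}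
    (hr : 0 ≤ r) (hrR : r < R) (ha : ∀ i ∈ s, ‖c - a i‖ ≤ r) {κ M : ℝ}
    (hM : ∀ z : ℂ, ‖z - c‖ = R → ‖F z‖ ≤ M * Real.exp (κ * z.re)) {w : ℂ} (hw : ‖w - c‖ < R) :
    ‖q w‖ ≤ M / (R - r) ^ (τ * #s) * Real.exp (κ * w.re) := by
  have : 0 < R - r := sub_pos.2 hrR
  -- The maximum principle is applied to `q z * exp (-κ z)`.
  have hnorm : ∀ z, ‖q z * Complex.exp (-κ * z)‖ = ‖q z‖ / Real.exp (κ * z.re) := fun z => by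
    rw [norm_mul, Complex.norm_exp, div_eq_mul_inv, ← Real.exp_neg]
    simp
  have hG : Differentiable ℂ fun z => q z * Complex.exp (-κ * z) := by fun_prop
  have hsphere : ∀ z ∈ frontier (Metric.ball c R),
      ‖q z * Complex.exp (-κ * z)‖ ≤ M / (R - r) ^ (τ * #s) := by
    intro z hz
    rw [frontier_ball _ (hr.trans_lt hrR).ne', mem_sphere_iff_norm] at hz
    have hprod : (R - r) ^ (τ * #s) ≤ ‖∏ i ∈ s, (z - a i) ^ τ‖ := by
      rw [pow_mul, ← prod_const, norm_prod]
      refine prod_le_prod (fun _ _ => by positivity) fun i hi => ?_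
      rw [norm_pow]
      gcongr
      linarith [norm_sub_le_norm_sub_add_norm_sub z (a i) c, ha i hi, norm_sub_rev (a i) c]
    rw [hnorm, div_le_div_iff₀ (Real.exp_pos _) (by positivity)]
    calc ‖q z‖ * (R - r) ^ (τ * #s) ≤ ‖q z‖ * ‖∏ i ∈ s, (z - a i) ^ τ‖ := by gcongr
      _ = ‖F z‖ := by rw [hF, norm_mul, mul_comm]
      _ ≤ M * Real.exp (κ * z.re) := hM z hz
  have hmax := Complex.norm_le_of_forall_mem_frontier_norm_le Metric.isBounded_ball
    hG.diffContOnCl hsphere (subset_closure (mem_ball_iff_norm.2 hw))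
  rwa [hnorm, div_le_iff₀ (Real.exp_pos _)] at hmax

lemma norm_le_of_zeros_oddNode (hn : 0 < n) (hg : 0 < g) {F : ℂ → ℂ} (hF : Differentiable ℂ F)
    (hord : ∀ i ∈ range n, (τ : ℕ∞) ≤ analyticOrderAt F (oddNode g i)) {ρ κ M : ℝ} (hρ : 1 < ρ)
    (hM : ∀ z : ℂ, ‖z - (g * n : ℝ)‖ = ρ * (g * n) → ‖F z‖ ≤ M * Real.exp (κ * z.re))
    {x : ℝ} (hx0 : 0 ≤ x) (hx : x ≤ 2 * (g * n)) :
    ‖F x‖ ≤ Real.exp (κ * x) * M / (ρ - 1) ^ (τ * n) := by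
  have hc : 0 < g * n := by positivity
  have hinj : Set.InjOn (oddNode g) (range n) := fun i _ j _ hij => by
    by_contra hne
    have hlt := lt_norm_oddNode_sub hg hne
    rw [hij, sub_self, norm_zero] at hlt
    exact hlt.not_gt hg
  obtain ⟨q, hq, hFq⟩ := exists_eq_prod_sub_pow_mul hF (range n) hinj hord
  have hxc : ‖(x : ℂ) - (g * n : ℝ)‖ ≤ g * n := by
    rw [← Complex.ofReal_sub, Complex.norm_real, Real.norm_eq_abs, abs_le]
    constructor <;> linarith
  have hqx := norm_quotient_le hq hFq hc.le (by nlinarith : g * n < ρ * (g * n))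
    (fun i hi => norm_sub_oddNode_le hg (mem_range.1 hi)) hM (hxc.trans_lt (by nlinarith))
  have hprod : ‖∏ i ∈ range n, ((x : ℂ) - oddNode g i) ^ τ‖ ≤ (g * n) ^ (τ * n) := by
    rw [prod_pow, norm_pow, norm_prod, mul_comm τ n, pow_mul]
    gcongr
    simp_rw [oddNode, ← Complex.ofReal_sub, Complex.norm_real, Real.norm_eq_abs]
    exact prod_abs_sub_odd_le hg hx0 hx
  rw [card_range, Complex.ofReal_re, ← sub_one_mul, mul_pow] at hqx
  rw [hFq, norm_mul]
  calc _ ≤ (g * n) ^ (τ * n) *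
        (M / ((ρ - 1) ^ (τ * n) * (g * n) ^ (τ * n)) * Real.exp (κ * x)) := by gcongr
    _ = _ := by
      have hcn : (g * n) ^ (τ * n) ≠ 0 := by positivity
      generalize (g * n) ^ (τ * n) = u at hcn ⊢
      generalize (ρ - 1) ^ (τ * n) = v
      field_simp

theorem norm_le_of_almost_vanishing (hn : 0 < n) (hg : 0 < g) {f : ℂ → ℂ}
    (hf : Differentiable ℂ f) {p : ℕ → ℂ[X]}
    (hp : ∀ i < n, (τ : ℕ∞) ≤
      analyticOrderAt (fun z => f z - (p i).eval (z - oddNode g i)) (oddNode g i))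
    {ε : ℝ} (hε : ∀ i < n, truncNorm τ g (p i) ≤ ε) {ρ κ M : ℝ} (hρ : 1 < ρ) (hκ : 0 ≤ κ)
    (hM : ∀ z : ℂ, ‖z - (g * n : ℝ)‖ = ρ * (g * n) → ‖f z‖ ≤ M * Real.exp (κ * z.re))
    {x : ℝ} (hx0 : 0 ≤ x) (hx : x ≤ 2 * (g * n)) :
    ‖f x‖ ≤ n * ε * (16 * (ρ + 1)) ^ (τ * n) + Real.exp (κ * x) *
      (M + n * ε * (16 * (ρ + 1)) ^ (τ * n) * Real.exp (κ * ((ρ + 1) * (g * n)))) /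
        (ρ - 1) ^ (τ * n) := by
  obtain ⟨H, hH, hord, hsmall⟩ :=
    exists_hermite_interpolant_oddNode hn hg hp hε (zero_le_one.trans hρ.le)
  have hε0 : 0 ≤ ε := (truncNorm_nonneg hg.le _).trans (hε 0 hn)
  set δ := n * ε * (16 * (ρ + 1)) ^ (τ * n)
  have hδ : 0 ≤ δ := by positivity
  have hc : 0 < g * n := by positivity
  have hsphere : ∀ z : ℂ, ‖z - (g * n : ℝ)‖ = ρ * (g * n) → ‖f z - H z‖ ≤
      (M + δ * Real.exp (κ * ((ρ + 1) * (g * n)))) * Real.exp (κ * z.re) := by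
    intro z hz
    have hre : -((ρ + 1) * (g * n)) ≤ z.re := by
      have habs := (abs_le.1 ((Complex.abs_re_le_norm (z - (g * n : ℝ))).trans hz.le)).1
      rw [Complex.sub_re, Complex.ofReal_re] at habs
      linarith
    have hexp : 1 ≤ Real.exp (κ * ((ρ + 1) * (g * n))) * Real.exp (κ * z.re) := by
      rw [← Real.exp_add, Real.one_le_exp_iff]
      nlinarith
    calc ‖f z - H z‖ ≤ ‖f z‖ + ‖H z‖ := norm_sub_le _ _
      _ ≤ M * Real.exp (κ * z.re) + δ := add_le_add (hM z hz) (hsmall z hz.le)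
      _ ≤ _ := by nlinarith [mul_le_mul_of_nonneg_left hexp hδ]
  have hxc : ‖(x : ℂ) - (g * n : ℝ)‖ ≤ ρ * (g * n) := by
    rw [← Complex.ofReal_sub, Complex.norm_real, Real.norm_eq_abs, abs_le]
    constructor <;> nlinarith
  calc ‖f x‖ = ‖H x + (f x - H x)‖ := by rw [add_sub_cancel]
    _ ≤ ‖H x‖ + ‖f x - H x‖ := norm_add_le _ _
    _ ≤ _ := add_le_add (hsmall x hxc)
        (norm_le_of_zeros_oddNode hn hg (hf.sub hH) hord hρ hsphere hx0 hx)

end SchwarzLemma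

section LiouvilleInequality

variable {R : Type*} [CommRing R]

/-- The ring seminorm `x ↦ |σ x|`. -/
def absSeminorm (σ : R →+* ℝ) : RingSeminorm R where
  toFun x := |σ x|
  map_zero' := by rw [map_zero, abs_zero]
  add_le' x y := by rw [map_add]; exact abs_add_le _ _
  neg' x := by rw [map_neg, abs_neg]
  mul_le' x y := by rw [map_mul, abs_mul]

@[simp]
lemma absSeminorm_apply (σ : R →+* ℝ) (x : R) : absSeminorm σ x = |σ x| := rfl

/-- The ring seminorm on `R[√a]` extending `ν`, for which `√a` has size `s`. -/
noncomputable def adjoinSeminorm (ν : RingSeminorm R) {a : R} {s : ℝ} (hs0 : 0 ≤ s)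
    (hs : ν a ≤ s ^ 2) : RingSeminorm (QuadraticAlgebra R a 0) where
  toFun x := ν x.re + s * ν x.im
  map_zero' := by simp
  add_le' x y := by
    have him := mul_le_mul_of_nonneg_left (map_add_le_add ν x.im y.im) hs0
    rw [QuadraticAlgebra.re_add, QuadraticAlgebra.im_add]
    linarith [map_add_le_add ν x.re y.re]
  neg' x := by simp
  mul_le' x y := by
    simp only [QuadraticAlgebra.re_mul, QuadraticAlgebra.im_mul, zero_mul, add_zero]
    have hre := map_add_le_add ν (x.re * y.re) (a * x.im * y.im)
    have him := map_add_le_add ν (x.re * y.im) (x.im * y.re)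
    have haim : ν (a * x.im * y.im) ≤ s ^ 2 * ν x.im * ν y.im :=
      (map_mul_le_mul ν _ _).trans (mul_le_mul_of_nonneg_right ((map_mul_le_mul ν _ _).trans
        (mul_le_mul_of_nonneg_right hs (apply_nonneg ν _))) (apply_nonneg ν _))
    nlinarith [map_mul_le_mul ν x.re y.re, mul_le_mul_of_nonneg_left
      (him.trans (add_le_add (map_mul_le_mul ν x.re y.im) (map_mul_le_mul ν x.im y.re))) hs0]

section AdjoinSeminorm

variable {a : R} {s : ℝ} (ν : RingSeminorm R) (hs0 : 0 ≤ s) (hs : ν a ≤ s ^ 2)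

@[simp]
lemma adjoinSeminorm_apply (x : QuadraticAlgebra R a 0) :
    adjoinSeminorm ν hs0 hs x = ν x.re + s * ν x.im := rfl

lemma adjoinSeminorm_star (x : QuadraticAlgebra R a 0) :
    adjoinSeminorm ν hs0 hs (star x) = adjoinSeminorm ν hs0 hs x := by
  simp

lemma seminorm_norm_le (x : QuadraticAlgebra R a 0) :
    ν x.norm ≤ adjoinSeminorm ν hs0 hs x ^ 2 := by
  calc ν x.norm = adjoinSeminorm ν hs0 hs (x * star x) := by
        rw [← QuadraticAlgebra.algebraMap_norm_eq_mul_star]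
        simp
    _ ≤ adjoinSeminorm ν hs0 hs x * adjoinSeminorm ν hs0 hs (star x) := map_mul_le_mul _ _ _
    _ = adjoinSeminorm ν hs0 hs x ^ 2 := by rw [adjoinSeminorm_star, sq]

end AdjoinSeminorm

/-- The ring homomorphism from the quadratic extension of `R` with `ω ^ 2 = a + b * ω` to `ℝ` that
extends `σ` and sends `ω` to `t`. -/
noncomputable def quadraticEval (σ : R →+* ℝ) {a b : R} {t : ℝ} (ht : t ^ 2 = σ a + σ b * t) :
    QuadraticAlgebra R a b →+* ℝ where
  toFun x := σ x.re + t * σ x.im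
  map_one' := by simp [QuadraticAlgebra.re_one, QuadraticAlgebra.im_one]
  map_zero' := by simp
  map_add' x y := by
    simp only [QuadraticAlgebra.re_add, QuadraticAlgebra.im_add, map_add]
    ring
  map_mul' x y := by
    simp only [QuadraticAlgebra.re_mul, QuadraticAlgebra.im_mul, map_add, map_mul]
    linear_combination (-(σ x.im * σ y.im)) * ht

@[simp]
lemma quadraticEval_apply (σ : R →+* ℝ) {a b : R} {t : ℝ} (ht : t ^ 2 = σ a + σ b * t)
    (x : QuadraticAlgebra R a b) : quadraticEval σ ht x = σ x.re + t * σ x.im := rfl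

/-- A real embedding `σ` of an order `R` of degree `2 * (m + 1)` containing a real quadratic ring.
The seminorm `ν₁` (resp. `ν₂`) bounds the conjugates of an element that agree (resp. disagree) with
`σ` on the quadratic ring, so that the norm of `x ≠ 0` being a nonzero integer gives `liouville`. -/
structure SizedEmbedding (R : Type*) [CommRing R] (m : ℕ) where
  σ : R →+* ℝ
  ν₁ : RingSeminorm R
  ν₂ : RingSeminorm R
  abs_le : ∀ x, |σ x| ≤ ν₁ x
  liouville : ∀ x, x ≠ 0 → 1 ≤ |σ x| * ν₁ x ^ m * ν₂ x ^ (m + 1)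

/-- `a` is a strong non-square: the norm form `p ^ 2 - a * q ^ 2` of `R[√a]` is anisotropic. When
`R` is not a domain this says more than `a` not being a square. -/
def IsStronglyNonSquare (a : R) : Prop :=
  ∀ x : QuadraticAlgebra R a 0, x.norm = 0 → x = 0

namespace SizedEmbedding

variable {m : ℕ} (E : SizedEmbedding R m)

lemma eq_zero_of_σ_eq_zero {x : R} (h : E.σ x = 0) : x = 0 := by
  by_contra hx
  have hx1 := E.liouville x hx
  rw [h, abs_zero, zero_mul, zero_mul] at hx1
  exact hx1.not_gt one_pos

lemma isStronglyNonSquare {a : R} (ha : E.σ a < 0) : IsStronglyNonSquare a := by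
  intro x hx
  have hσ : E.σ x.re ^ 2 = E.σ a * E.σ x.im ^ 2 := by
    have hσnorm := congrArg E.σ hx
    simp only [QuadraticAlgebra.norm_def, map_sub, map_add, map_mul, map_zero] at hσnorm
    linear_combination hσnorm
  have him : E.σ x.im ^ 2 = 0 := by
    nlinarith [sq_nonneg (E.σ x.re), sq_nonneg (E.σ x.im)]
  have hre : E.σ x.re ^ 2 = 0 := by rw [hσ, him, mul_zero]
  exact QuadraticAlgebra.ext (E.eq_zero_of_σ_eq_zero (eq_zero_of_pow_eq_zero hre))
    (E.eq_zero_of_σ_eq_zero (eq_zero_of_pow_eq_zero him))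

variable {a : R} {t s₁ s₂ : ℝ} (ht : t ^ 2 = E.σ a) (hts : |t| ≤ s₁) (hs₂0 : 0 ≤ s₂)
  (hs₁ : E.ν₁ a ≤ s₁ ^ 2) (hs₂ : E.ν₂ a ≤ s₂ ^ 2)

lemma abs_quadraticEval_le {ht : t ^ 2 = E.σ a + E.σ 0 * t} (x : QuadraticAlgebra R a 0) :
    |quadraticEval E.σ ht x| ≤ adjoinSeminorm E.ν₁ ((abs_nonneg t).trans hts) hs₁ x := by
  rw [quadraticEval_apply]
  refine (abs_add_le _ _).trans (add_le_add (E.abs_le _) ?_)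
  rw [abs_mul]
  exact mul_le_mul hts (E.abs_le _) (abs_nonneg _) ((abs_nonneg _).trans hts)

lemma abs_σ_norm_le {ht : t ^ 2 = E.σ a + E.σ 0 * t} (x : QuadraticAlgebra R a 0) :
    |E.σ x.norm| ≤
      |quadraticEval E.σ ht x| * adjoinSeminorm E.ν₁ ((abs_nonneg t).trans hts) hs₁ x := by
  calc |E.σ x.norm| = |quadraticEval E.σ ht (x * star x)| := by
        rw [← QuadraticAlgebra.algebraMap_norm_eq_mul_star]
        simp
    _ = |quadraticEval E.σ ht x| * |quadraticEval E.σ ht (star x)| := by rw [map_mul, abs_mul]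
    _ ≤ _ := by
      rw [← adjoinSeminorm_star E.ν₁ _ hs₁ x]
      exact mul_le_mul_of_nonneg_left (E.abs_quadraticEval_le hts hs₁ _) (abs_nonneg _)

lemma one_le_abs_quadraticEval_mul {ht : t ^ 2 = E.σ a + E.σ 0 * t} (hsq : IsStronglyNonSquare a)
    {x : QuadraticAlgebra R a 0} (hx : x ≠ 0) :
    1 ≤ |quadraticEval E.σ ht x| *
      adjoinSeminorm E.ν₁ ((abs_nonneg t).trans hts) hs₁ x ^ (2 * m + 1) *
        adjoinSeminorm E.ν₂ hs₂0 hs₂ x ^ (2 * m + 1 + 1) := by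
  have hσ := E.abs_σ_norm_le hts hs₁ (ht := ht) x
  have h₁ := seminorm_norm_le E.ν₁ ((abs_nonneg t).trans hts) hs₁ x
  have h₂ := seminorm_norm_le E.ν₂ hs₂0 hs₂ x
  have : 0 ≤ E.ν₁ x.norm := apply_nonneg _ _
  have : 0 ≤ E.ν₂ x.norm := apply_nonneg _ _
  have : 0 ≤ adjoinSeminorm E.ν₁ ((abs_nonneg t).trans hts) hs₁ x := apply_nonneg _ _
  generalize adjoinSeminorm E.ν₁ _ hs₁ x = A₁ at *
  generalize adjoinSeminorm E.ν₂ _ hs₂ x = A₂ at *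
  calc 1 ≤ |E.σ x.norm| * E.ν₁ x.norm ^ m * E.ν₂ x.norm ^ (m + 1) :=
        E.liouville x.norm (mt (hsq x) hx)
    _ ≤ (|quadraticEval E.σ ht x| * A₁) * (A₁ ^ 2) ^ m * (A₂ ^ 2) ^ (m + 1) := by gcongr
    _ = |quadraticEval E.σ ht x| * A₁ ^ (2 * m + 1) * A₂ ^ (2 * m + 1 + 1) := by
      rw [← pow_mul, ← pow_mul]
      ring

/-- The sized embedding of `R[√a]` extending `E` with `√a ↦ t`, where `s₁` and `s₂` are the sizes of
`√a` for the two seminorms. -/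
noncomputable def adjoin (hsq : IsStronglyNonSquare a) :
    SizedEmbedding (QuadraticAlgebra R a 0) (2 * m + 1) where
  σ := quadraticEval E.σ (t := t) (by rw [ht, map_zero, zero_mul, add_zero])
  ν₁ := adjoinSeminorm E.ν₁ ((abs_nonneg t).trans hts) hs₁
  ν₂ := adjoinSeminorm E.ν₂ hs₂0 hs₂
  abs_le := E.abs_quadraticEval_le hts hs₁
  liouville _ := E.one_le_abs_quadraticEval_mul hts hs₂0 hs₁ hs₂ hsq

end SizedEmbedding

end LiouvilleInequality

section KummerRing

lemma isStronglyNonSquare_of_descent {R : Type*} [CommRing R] {d : R} (hd : d ∈ nonZeroDivisors R)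
    (hdvd : ∀ x : R, d ∣ x ^ 2 → d ∣ x) (hsep : ∀ x : R, (∀ n : ℕ, d ^ n ∣ x) → x = 0) :
    IsStronglyNonSquare d := by
  have hpow : ∀ (n : ℕ) (p q : R), p ^ 2 = d * q ^ 2 → d ^ n ∣ p ∧ d ^ n ∣ q := by
    intro n
    induction n with
    | zero => simp
    | succ n ih =>
      intro p q h
      obtain ⟨p', rfl⟩ := hdvd p ⟨q ^ 2, h⟩
      have hq : q ^ 2 = d * p' ^ 2 := (mul_cancel_left_mem_nonZeroDivisors hd).1 <| by
        linear_combination -h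
      obtain ⟨q', rfl⟩ := hdvd q ⟨_, hq⟩
      have hp' : p' ^ 2 = d * q' ^ 2 := (mul_cancel_left_mem_nonZeroDivisors hd).1 <| by
        linear_combination -hq
      obtain ⟨hnp, hnq⟩ := ih _ _ hp'
      rw [pow_succ']
      exact ⟨mul_dvd_mul_left _ hnp, mul_dvd_mul_left _ hnq⟩
  intro x hx
  have hsq : x.re ^ 2 = d * x.im ^ 2 := by
    rw [QuadraticAlgebra.norm_def] at hx
    linear_combination hx
  exact QuadraticAlgebra.ext (hsep _ fun n => (hpow n _ _ hsq).1)
    (hsep _ fun n => (hpow n _ _ hsq).2)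

lemma eq_zero_of_forall_algebraMap_pow_dvd {R : Type*} [CommRing R] {d a b : R}
    (hsep : ∀ x : R, (∀ n : ℕ, d ^ n ∣ x) → x = 0) {x : QuadraticAlgebra R a b}
    (hx : ∀ n : ℕ, algebraMap R (QuadraticAlgebra R a b) d ^ n ∣ x) : x = 0 := by
  simp_rw [← map_pow, QuadraticAlgebra.algebraMap_dvd_iff] at hx
  exact QuadraticAlgebra.ext (hsep _ fun n => (hx n).1) (hsep _ fun n => (hx n).2)

lemma int_eq_zero_of_forall_pow_dvd {d : ℤ} (hd : d.natAbs ≠ 1) (x : ℤ) (h : ∀ n : ℕ, d ^ n ∣ x) :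
    x = 0 := by
  by_contra hx
  obtain ⟨n, hn⟩ := Int.finiteMultiplicity_iff.2 ⟨hd, hx⟩
  exact hn (h _)

/-- The ring `ℤ[φ]`, where `φ ^ 2 = φ + 1`. -/
abbrev Zphi := QuadraticAlgebra ℤ 1 1

/-- The ring `ℤ[φ, √2]`. -/
abbrev ZphiSqrtTwo := QuadraticAlgebra Zphi 2 0

/-- The ring `ℤ[φ, √2, √3]`. -/
abbrev ZphiSqrtTwoThree := QuadraticAlgebra ZphiSqrtTwo 3 0

/-- The image of `φ` in `ℤ[φ, √2, √3]`. -/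
def ZphiSqrtTwoThree.phi : ZphiSqrtTwoThree := ⟨⟨⟨0, 1⟩, 0⟩, 0⟩

/-- The Kummer extension `ℤ[√φ, √2, √3]` of `ℤ[φ]`. -/
abbrev KummerRing := QuadraticAlgebra ZphiSqrtTwoThree ZphiSqrtTwoThree.phi 0

lemma Zphi.two_dvd_of_two_dvd_sq (x : Zphi) (hx : 2 ∣ x ^ 2) : 2 ∣ x := by
  rw [← map_ofNat (algebraMap ℤ Zphi) 2, QuadraticAlgebra.algebraMap_dvd_iff] at hx ⊢
  obtain ⟨u, v⟩ := x
  simp only [sq, QuadraticAlgebra.mk_mul_mk] at hx ⊢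
  rw [← Nat.cast_ofNat] at hx ⊢
  simp only [← ZMod.intCast_zmod_eq_zero_iff_dvd, Int.cast_add, Int.cast_mul, Int.cast_one]
    at hx ⊢
  generalize (u : ZMod 2) = u at *
  generalize (v : ZMod 2) = v at *
  revert u v
  decide

lemma ZphiSqrtTwo.three_dvd_of_three_dvd_sq (x : ZphiSqrtTwo) (hx : 3 ∣ x ^ 2) : 3 ∣ x := by
  rw [← map_ofNat (algebraMap Zphi ZphiSqrtTwo) 3, ← map_ofNat (algebraMap ℤ Zphi) 3] at hx ⊢
  simp only [QuadraticAlgebra.algebraMap_dvd_iff] at hx ⊢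
  obtain ⟨⟨u, v⟩, ⟨w, z⟩⟩ := x
  rw [sq, QuadraticAlgebra.mk_mul_mk, show (2 : Zphi) = ⟨2, 0⟩ from rfl] at hx
  simp only [zero_mul, add_zero, QuadraticAlgebra.mk_mul_mk, QuadraticAlgebra.re_add,
    QuadraticAlgebra.im_add] at hx ⊢
  rw [← Nat.cast_ofNat] at hx ⊢
  simp only [← ZMod.intCast_zmod_eq_zero_iff_dvd] at hx ⊢
  push_cast at hx ⊢
  generalize (u : ZMod 3) = u at *
  generalize (v : ZMod 3) = v at *
  generalize (w : ZMod 3) = w at *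
  generalize (z : ZMod 3) = z at *
  revert u v w z
  decide +kernel

lemma Zphi.isStronglyNonSquare_two : IsStronglyNonSquare (2 : Zphi) := by
  refine isStronglyNonSquare_of_descent ?_ two_dvd_of_two_dvd_sq fun x => ?_ <;>
    rw [← map_ofNat (algebraMap ℤ Zphi) 2]
  · exact QuadraticAlgebra.algebraMap_mem_nonZeroDivisors_iff.2 (by simp)
  · exact eq_zero_of_forall_algebraMap_pow_dvd (int_eq_zero_of_forall_pow_dvd (by decide))

lemma ZphiSqrtTwo.isStronglyNonSquare_three : IsStronglyNonSquare (3 : ZphiSqrtTwo) := by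
  refine isStronglyNonSquare_of_descent ?_ three_dvd_of_three_dvd_sq fun x => ?_ <;>
    rw [← map_ofNat (algebraMap Zphi ZphiSqrtTwo) 3, ← map_ofNat (algebraMap ℤ Zphi) 3]
  · exact QuadraticAlgebra.algebraMap_mem_nonZeroDivisors_iff.2
      (QuadraticAlgebra.algebraMap_mem_nonZeroDivisors_iff.2 (by simp))
  · exact eq_zero_of_forall_algebraMap_pow_dvd fun _ =>
      eq_zero_of_forall_algebraMap_pow_dvd (int_eq_zero_of_forall_pow_dvd (by decide))

/-- The embedding of `ℤ[φ]` sending `φ` to the root `t` of `X ^ 2 - X - 1`. -/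
noncomputable def Zphi.eval {t : ℝ} (ht : t ^ 2 = t + 1) : Zphi →+* ℝ :=
  quadraticEval (Int.castRingHom ℝ) (t := t) (by rw [ht, map_one, one_mul, add_comm])

@[simp]
lemma Zphi.eval_apply {t : ℝ} (ht : t ^ 2 = t + 1) (x : Zphi) :
    Zphi.eval ht x = x.re + t * x.im := rfl

lemma Zphi.norm_ne_zero {x : Zphi} (hx : x ≠ 0) : x.norm ≠ 0 := by
  intro h
  have hdisc : (2 * x.re + x.im) * (2 * x.re + x.im) = 5 * (x.im * x.im) := by
    rw [QuadraticAlgebra.norm_def] at h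
    linear_combination 4 * h
  have him : x.im = 0 := by
    by_contra him
    have him' : (x.im : ℝ) ≠ 0 := Int.cast_ne_zero.2 him
    have hirr : Irrational √5 := by
      exact_mod_cast Nat.Prime.irrational_sqrt (p := 5) (by norm_num)
    refine hirr ⟨|(2 * x.re + x.im : ℚ) / x.im|, Eq.symm ?_⟩
    rw [Real.sqrt_eq_iff_mul_self_eq (by norm_num) (by positivity)]
    push_cast
    rw [abs_mul_abs_self]
    have hreal : (2 * x.re + x.im : ℝ) * (2 * x.re + x.im) = 5 * (x.im * x.im) := by
      exact_mod_cast hdisc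
    field_simp
    linear_combination -hreal
  rw [him] at hdisc
  exact hx (QuadraticAlgebra.ext (by simpa using hdisc) him)

/-- The sized embedding of `ℤ[φ]` sending `φ` to the root `t` of `X ^ 2 - X - 1`; the conjugate root
is `t'`. -/
noncomputable def Zphi.sizedEmbedding {t t' : ℝ} (ht : t ^ 2 = t + 1) (ht' : t' ^ 2 = t' + 1)
    (hadd : t + t' = 1) : SizedEmbedding Zphi 0 where
  σ := Zphi.eval ht
  ν₁ := absSeminorm (Zphi.eval ht)
  ν₂ := absSeminorm (Zphi.eval ht')
  abs_le _ := le_rfl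
  liouville x hx := by
    have hnorm : Zphi.eval ht x * Zphi.eval ht' x = x.norm := by
      rw [QuadraticAlgebra.norm_def, eval_apply, eval_apply, eq_sub_of_add_eq' hadd]
      push_cast
      linear_combination (-(x.im : ℝ) ^ 2) * ht
    rw [pow_zero, mul_one, zero_add, pow_one, absSeminorm_apply, ← abs_mul, hnorm, ← Int.cast_abs]
    exact_mod_cast Int.one_le_abs (Zphi.norm_ne_zero hx)

open Real in
/-- The sized embedding of `ℤ[φ, √2, √3]` with `√2` and `√3` positive and `φ` sent to `t`. -/
noncomputable def ZphiSqrtTwoThree.sizedEmbedding {t t' : ℝ} (ht : t ^ 2 = t + 1)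
    (ht' : t' ^ 2 = t' + 1) (hadd : t + t' = 1) : SizedEmbedding ZphiSqrtTwoThree 3 :=
  ((Zphi.sizedEmbedding ht ht' hadd).adjoin (t := √2) (s₁ := √2) (s₂ := √2) (by simp [map_ofNat])
    (abs_of_nonneg (sqrt_nonneg 2)).le (sqrt_nonneg 2)
    (by simp [Zphi.sizedEmbedding, QuadraticAlgebra.re_ofNat, QuadraticAlgebra.im_ofNat])
    (by simp [Zphi.sizedEmbedding, QuadraticAlgebra.re_ofNat, QuadraticAlgebra.im_ofNat])
    Zphi.isStronglyNonSquare_two).adjoin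
    (t := √3) (s₁ := √3) (s₂ := √3) (by simp [map_ofNat])
    (abs_of_nonneg (sqrt_nonneg 3)).le (sqrt_nonneg 3)
    (by simp [Zphi.sizedEmbedding, SizedEmbedding.adjoin, QuadraticAlgebra.re_ofNat,
      QuadraticAlgebra.im_ofNat])
    (by simp [Zphi.sizedEmbedding, SizedEmbedding.adjoin, QuadraticAlgebra.re_ofNat,
      QuadraticAlgebra.im_ofNat]) ZphiSqrtTwo.isStronglyNonSquare_three

open Real in
lemma ZphiSqrtTwoThree.isStronglyNonSquare_phi : IsStronglyNonSquare phi := by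
  refine (sizedEmbedding goldenConj_sq goldenRatio_sq
    (by rw [add_comm, goldenRatio_add_goldenConj])).isStronglyNonSquare ?_
  simpa [sizedEmbedding, SizedEmbedding.adjoin, Zphi.sizedEmbedding, phi] using goldenConj_neg

open Real in
/-- The sized embedding of `ℤ[√φ, √2, √3]` with `√φ`, `√2` and `√3` positive. -/
noncomputable def KummerRing.sizedEmbedding : SizedEmbedding KummerRing 7 :=
  (ZphiSqrtTwoThree.sizedEmbedding goldenRatio_sq goldenConj_sq goldenRatio_add_goldenConj).adjoin
    (t := √goldenRatio) (s₁ := √goldenRatio) (s₂ := √(goldenRatio⁻¹))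
    (by
      rw [sq_sqrt goldenRatio_pos.le]
      simp [ZphiSqrtTwoThree.sizedEmbedding, SizedEmbedding.adjoin, Zphi.sizedEmbedding,
        ZphiSqrtTwoThree.phi])
    (abs_of_nonneg (sqrt_nonneg _)).le (sqrt_nonneg _)
    (by
      rw [sq_sqrt goldenRatio_pos.le]
      simp [ZphiSqrtTwoThree.sizedEmbedding, SizedEmbedding.adjoin, Zphi.sizedEmbedding,
        ZphiSqrtTwoThree.phi, abs_of_pos goldenRatio_pos])
    (by
      rw [sq_sqrt (inv_nonneg.2 goldenRatio_pos.le), inv_goldenRatio]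
      simp [ZphiSqrtTwoThree.sizedEmbedding, SizedEmbedding.adjoin, Zphi.sizedEmbedding,
        ZphiSqrtTwoThree.phi, abs_of_neg goldenConj_neg])
    ZphiSqrtTwoThree.isStronglyNonSquare_phi

/-- The embedding `φ ↦ (1 + √5) / 2`. -/
noncomputable def Zphi.val : Zphi →+* ℝ :=
  Zphi.eval Real.goldenRatio_sq

/-- The embedding `φ ↦ (1 - √5) / 2`. -/
noncomputable def Zphi.conjVal : Zphi →+* ℝ :=
  Zphi.eval Real.goldenConj_sq

/-- The element `∑ c i j k * √φ ^ i * √2 ^ j * √3 ^ k`. -/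
def KummerRing.ofCoeffs (c : Fin 2 → Fin 2 → Fin 2 → Zphi) : KummerRing :=
  ⟨⟨⟨c 0 0 0, c 0 1 0⟩, ⟨c 0 0 1, c 0 1 1⟩⟩, ⟨⟨c 1 0 0, c 1 1 0⟩, ⟨c 1 0 1, c 1 1 1⟩⟩⟩

namespace KummerRing

open Real

variable {c : Fin 2 → Fin 2 → Fin 2 → Zphi}

lemma eq_zero_of_ofCoeffs_eq_zero (h : ofCoeffs c = 0) (i j k : Fin 2) : c i j k = 0 := by
  simp only [ofCoeffs, QuadraticAlgebra.ext_iff, QuadraticAlgebra.re_zero,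
    QuadraticAlgebra.im_zero] at h
  fin_cases i <;> fin_cases j <;> fin_cases k <;> exact QuadraticAlgebra.ext (by tauto) (by tauto)

variable (c) in
lemma sizedEmbedding_σ_ofCoeffs :
    sizedEmbedding.σ (ofCoeffs c) =
      ∑ i, ∑ j, ∑ k, Zphi.val (c i j k) * (√goldenRatio ^ (i : ℕ) * √2 ^ (j : ℕ) *
        √3 ^ (k : ℕ)) := by
  simp only [sizedEmbedding, ZphiSqrtTwoThree.sizedEmbedding, SizedEmbedding.adjoin,
    Zphi.sizedEmbedding, quadraticEval_apply, ofCoeffs, Fin.sum_univ_two, Fin.val_zero,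
    Fin.val_one, Zphi.val]
  ring

lemma ofCoeffs_size_le {B s : ℝ} (hB : 0 ≤ B) (hs0 : 0 ≤ s) (hs : s ≤ 1.28) :
    B + √2 * B + √3 * (B + √2 * B) + s * (B + √2 * B + √3 * (B + √2 * B)) ≤ 16 * B := by
  have htwo : √2 ≤ 1.42 := by rw [sqrt_le_left (by norm_num)]; norm_num
  have hthree : √3 ≤ 1.74 := by rw [sqrt_le_left (by norm_num)]; norm_num
  calc _ = ((1 + √2) * (1 + √3) * (1 + s)) * B := by ring
    _ ≤ ((1 + 1.42) * (1 + 1.74) * (1 + 1.28)) * B := by gcongr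
    _ ≤ 16 * B := by gcongr; norm_num

lemma sizedEmbedding_ν₁_ofCoeffs_le {B : ℝ} (h : ∀ i j k, |Zphi.val (c i j k)| ≤ B) :
    sizedEmbedding.ν₁ (ofCoeffs c) ≤ 16 * B := by
  have hgold : √goldenRatio ≤ 1.28 := by
    rw [sqrt_le_left (by norm_num)]
    nlinarith [goldenRatio_sq, goldenRatio_pos]
  refine le_trans ?_ (ofCoeffs_size_le ((abs_nonneg _).trans (h 0 0 0)) (sqrt_nonneg _) hgold)
  simp only [sizedEmbedding, ZphiSqrtTwoThree.sizedEmbedding, SizedEmbedding.adjoin,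
    Zphi.sizedEmbedding, ofCoeffs, adjoinSeminorm_apply, absSeminorm_apply]
  gcongr <;> exact h _ _ _

lemma sizedEmbedding_ν₂_ofCoeffs_le {B : ℝ} (h : ∀ i j k, |Zphi.conjVal (c i j k)| ≤ B) :
    sizedEmbedding.ν₂ (ofCoeffs c) ≤ 16 * B := by
  have hgold : √(goldenRatio⁻¹) ≤ 1.28 := by
    rw [sqrt_le_left (by norm_num)]
    exact (inv_le_one_of_one_le₀ one_lt_goldenRatio.le).trans (by norm_num)
  refine le_trans ?_ (ofCoeffs_size_le ((abs_nonneg _).trans (h 0 0 0)) (sqrt_nonneg _) hgold)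
  simp only [sizedEmbedding, ZphiSqrtTwoThree.sizedEmbedding, SizedEmbedding.adjoin,
    Zphi.sizedEmbedding, ofCoeffs, adjoinSeminorm_apply, absSeminorm_apply]
  gcongr <;> exact h _ _ _

end KummerRing

open Real in
theorem eq_zero_of_kummer_sum_small {c : Fin 2 → Fin 2 → Fin 2 → Zphi} {B₁ B₂ : ℝ}
    (h₁ : ∀ i j k, |Zphi.val (c i j k)| ≤ B₁) (h₂ : ∀ i j k, |Zphi.conjVal (c i j k)| ≤ B₂)
    (hS : |∑ i, ∑ j, ∑ k, Zphi.val (c i j k) * (√goldenRatio ^ (i : ℕ) * √2 ^ (j : ℕ) *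
      √3 ^ (k : ℕ))| * (16 * B₁) ^ 7 * (16 * B₂) ^ 8 < 1) (i j k : Fin 2) : c i j k = 0 := by
  refine KummerRing.eq_zero_of_ofCoeffs_eq_zero ?_ i j k
  by_contra hc
  have hliouville := KummerRing.sizedEmbedding.liouville _ hc
  rw [KummerRing.sizedEmbedding_σ_ofCoeffs] at hliouville
  refine hS.not_ge (hliouville.trans ?_)
  have hB₁ : 0 ≤ B₁ := (abs_nonneg _).trans (h₁ 0 0 0)
  have : 0 ≤ KummerRing.sizedEmbedding.ν₁ (KummerRing.ofCoeffs c) := apply_nonneg _ _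
  have : 0 ≤ KummerRing.sizedEmbedding.ν₂ (KummerRing.ofCoeffs c) := apply_nonneg _ _
  gcongr
  · exact KummerRing.sizedEmbedding_ν₁_ofCoeffs_le h₁
  · exact KummerRing.sizedEmbedding_ν₂_ofCoeffs_le h₂

end KummerRing

section FeldmanPolynomials

lemma succ_nsmul_ringChoose_succ {R : Type*} [CommRing R] [BinomialRing R] (r : R) (a : ℕ) :
    (a + 1) • Ring.choose r (a + 1) = Ring.choose r a * (r - a) := by
  have hsucc := Ring.descPochhammer_eq_factorial_smul_choose r (a + 1)
  rw [descPochhammer_succ_right, smeval_mul, Ring.descPochhammer_eq_factorial_smul_choose r a,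
    smeval_sub, smeval_X, smeval_natCast, Nat.factorial_succ, mul_comm (a + 1), mul_smul,
    smul_mul_assoc] at hsucc
  have := BinomialRing.toIsAddTorsionFree (R := R)
  simpa using (nsmul_right_injective (Nat.factorial_ne_zero a) hsucc).symm

section Integrality

variable {D k : ℕ} (hD : ∀ i, 1 ≤ i → i ≤ k → i ∣ D)

include hD in
lemma choose_natCast_mul_X_sub_one_mem_liftsRing {a : ℕ} (ha : a ≤ k) :
    Ring.choose (C (D : ℂ) * X - 1 : ℂ[X]) a ∈ liftsRing (Int.castRingHom ℂ) := by
  induction a with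
  | zero => rw [Ring.choose_zero_right]; exact one_mem _
  | succ a ih =>
    obtain ⟨e, he⟩ := hD (a + 1) (by omega) ha
    have hfactor : (C (D : ℂ) * X - 1 - (a : ℂ[X]) : ℂ[X]) =
        (a + 1) • (C ((e : ℤ) : ℂ) * X - 1) := by
      rw [he]
      simp only [Nat.cast_mul, Nat.cast_add, Nat.cast_one, map_mul, map_add, map_natCast, map_one,
        Int.cast_natCast, nsmul_eq_mul]
      ring
    have hsucc := succ_nsmul_ringChoose_succ (C (D : ℂ) * X - 1 : ℂ[X]) a
    rw [hfactor, mul_smul_comm] at hsucc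
    rw [nsmul_right_injective (Nat.succ_ne_zero a) hsucc]
    exact mul_mem (ih (by omega)) (sub_mem (mul_mem ((lifts_iff_liftsRing _ _).1 (C_mem_lifts _ _))
      ((lifts_iff_liftsRing _ _).1 (X_mem_lifts _))) (one_mem _))

include hD in
lemma choose_natCast_mul_X_add_mem_liftsRing {a : ℕ} (ha : a ≤ k) (z : ℤ) :
    Ring.choose (C (D : ℂ) * X + C (z : ℂ) : ℂ[X]) a ∈ liftsRing (Int.castRingHom ℂ) := by
  have hshift : (C (D : ℂ) * X + C (z : ℂ) : ℂ[X]) =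
      (C (D : ℂ) * X - 1) + ((z + 1 : ℤ) : ℂ[X]) := by
    simp
  rw [hshift, Ring.add_choose_eq _ (Commute.all _ _)]
  refine sum_mem fun x hx => mul_mem (choose_natCast_mul_X_sub_one_mem_liftsRing hD
    ((HasAntidiagonal.antidiagonal.fst_le hx).trans ha)) ?_
  have hchoose := Ring.map_choose (Int.castRingHom ℂ[X]) (z + 1) x.2
  simp only [eq_intCast] at hchoose
  rw [← hchoose]
  exact intCast_mem _ _

end Integrality

/-- Feldman's polynomials: products of binomial polynomials of lower index at most `k`, one in each
degree `i`. -/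
noncomputable def feldman (k i : ℕ) : ℂ[X] :=
  Ring.choose X k ^ (i / k) * Ring.choose X (i % k)

lemma degree_choose_X (a : ℕ) : (Ring.choose (X : ℂ[X]) a).degree = a := by
  induction a with
  | zero => rw [Ring.choose_zero_right, degree_one, Nat.cast_zero]
  | succ a ih =>
    have hsucc := congrArg degree (succ_nsmul_ringChoose_succ (X : ℂ[X]) a)
    rw [nsmul_eq_mul, ← C_eq_natCast, ← C_eq_natCast, degree_mul, degree_mul, ih, degree_X_sub_C,
      degree_C (Nat.cast_ne_zero.2 a.succ_ne_zero), zero_add] at hsucc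
    exact_mod_cast hsucc

lemma degree_feldman (k i : ℕ) : (feldman k i).degree = i := by
  rw [feldman, degree_mul, degree_pow, degree_choose_X, degree_choose_X, nsmul_eq_mul]
  exact_mod_cast Nat.div_add_mod' i k

/-- Feldman's polynomials as a sequence of polynomials, one in each degree. -/
noncomputable def feldmanSequence (k : ℕ) : Polynomial.Sequence ℂ where
  elems' := feldman k
  degree_eq' := degree_feldman k

lemma feldman_comp_mem_liftsRing {D k : ℕ} (hk : 0 < k) (hD : ∀ i, 1 ≤ i → i ≤ k → i ∣ D) (i : ℕ)
    (z : ℤ) :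
    (feldman k i).comp (C (D : ℂ) * X + C (z : ℂ)) ∈ liftsRing (Int.castRingHom ℂ) := by
  have hchoose : ∀ a ≤ k, (Ring.choose (X : ℂ[X]) a).comp (C (D : ℂ) * X + C (z : ℂ)) ∈
      liftsRing (Int.castRingHom ℂ) := by
    intro a ha
    have hcomp := Ring.map_choose (compRingHom (C (D : ℂ) * X + C (z : ℂ))) (X : ℂ[X]) a
    simp only [coe_compRingHom_apply, X_comp] at hcomp
    rw [hcomp]
    exact choose_natCast_mul_X_add_mem_liftsRing hD ha z
  rw [feldman, mul_comp, pow_comp]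
  exact mul_mem (pow_mem (hchoose k le_rfl) _) (hchoose _ (Nat.mod_lt _ hk).le)

lemma exists_int_pow_mul_eval_hasseDeriv_feldman_eq {D k : ℕ} (hk : 0 < k)
    (hD : ∀ i, 1 ≤ i → i ≤ k → i ∣ D) (i j : ℕ) (z : ℤ) :
    ∃ d : ℤ, (D : ℂ) ^ j * (hasseDeriv j (feldman k i)).eval (z : ℂ) = d := by
  have htaylor : (feldman k i).comp (C (D : ℂ) * X + C (z : ℂ)) =
      (taylor (z : ℂ) (feldman k i)).comp (C (D : ℂ) * X) := by
    rw [taylor_apply, comp_assoc]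
    simp
  obtain ⟨d, hd⟩ := (lifts_iff_coeff_lifts _).1
    ((lifts_iff_liftsRing _ _).2 (feldman_comp_mem_liftsRing hk hD i z)) j
  refine ⟨d, ?_⟩
  rw [← eq_intCast (Int.castRingHom ℂ) d, hd, htaylor, comp_C_mul_X_coeff, taylor_coeff, mul_comm]

end FeldmanPolynomials

section TruncNormBounds

lemma truncNorm_choose_X_le (τ : ℕ) {r K : ℝ} (hr : 0 ≤ r) {a : ℕ} (ha : a ≤ K) :
    truncNorm τ r (Ring.choose (X : ℂ[X]) a) ≤ (r + K) ^ a / a.factorial := by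
  induction a with
  | zero => rw [Ring.choose_zero_right]; simpa using truncNorm_one_le τ r
  | succ a ih =>
    push_cast at ha
    have haK : (a : ℝ) ≤ K := by linarith
    have : 0 ≤ r + K := by linarith [a.cast_nonneg (α := ℝ)]
    have hfactor : truncNorm τ r (X - (a : ℂ[X])) ≤ r + K := by
      rw [sub_eq_add_neg, ← C_eq_natCast, ← C_neg]
      refine (truncNorm_add_le hr _ _).trans
        (add_le_add (truncNorm_X_le τ hr) ((truncNorm_C_le τ r _).trans ?_))
      rwa [norm_neg, Complex.norm_natCast]
    have hsucc := congrArg (truncNorm τ r) (succ_nsmul_ringChoose_succ (X : ℂ[X]) a)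
    rw [nsmul_eq_mul, ← C_eq_natCast, truncNorm_C_mul, Complex.norm_natCast] at hsucc
    rw [le_div_iff₀ (by positivity), Nat.factorial_succ]
    push_cast at hsucc ⊢
    calc truncNorm τ r (Ring.choose X (a + 1)) * ((a + 1) * a.factorial)
        = truncNorm τ r (Ring.choose X a * (X - (a : ℂ[X]))) * a.factorial := by
          rw [← hsucc]
          ring
      _ ≤ (truncNorm τ r (Ring.choose X a) * truncNorm τ r (X - (a : ℂ[X]))) * a.factorial := by
          gcongr
          exact truncNorm_mul_le hr _ _
      _ ≤ ((r + K) ^ a / a.factorial * (r + K)) * a.factorial := by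
          gcongr
          · exact truncNorm_nonneg hr _
          · exact ih haK
      _ = (r + K) ^ (a + 1) := by
          field_simp
          rw [pow_succ']

lemma pow_div_factorial_le_pow_div_factorial {b : ℝ} {a k : ℕ} (hb : k ≤ b) (ha : a ≤ k) :
    b ^ a / a.factorial ≤ b ^ k / k.factorial := by
  have hb0 : 0 ≤ b := k.cast_nonneg.trans hb
  induction k, ha using Nat.le_induction with
  | base => exact le_rfl
  | succ k _ ih =>
    push_cast at hb
    refine (ih (by linarith)).trans ?_
    rw [div_le_div_iff₀ (by positivity) (by positivity), Nat.factorial_succ]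
    push_cast
    calc b ^ k * ((k + 1) * k.factorial) = b ^ k * (k + 1) * k.factorial := by ring
      _ ≤ b ^ k * b * k.factorial := by gcongr
      _ = b ^ (k + 1) * k.factorial := by ring

lemma natCast_pow_div_factorial_le (k : ℕ) : (k : ℝ) ^ k / k.factorial ≤ 3 ^ k := by
  refine (Real.pow_div_factorial_le_exp (k : ℝ) k.cast_nonneg k).trans ?_
  rw [← mul_one (k : ℝ), Real.exp_nat_mul]
  exact pow_le_pow_left₀ (Real.exp_pos _).le (by linarith [Real.exp_one_lt_d9]) _

variable {r B : ℝ} {k : ℕ} (hr : 0 ≤ r) (hk : 0 < k) (hB : 3 * (r + k) ≤ B * k)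

include hr hk hB

lemma truncNorm_choose_X_le_pow (τ : ℕ) {a : ℕ} (ha : a ≤ k) :
    truncNorm τ r (Ring.choose (X : ℂ[X]) a) ≤ B ^ k := by
  have hk' : (0 : ℝ) < k := Nat.cast_pos.2 hk
  calc truncNorm τ r (Ring.choose X a) ≤ (r + k) ^ a / a.factorial :=
        truncNorm_choose_X_le τ hr (Nat.cast_le.2 ha)
    _ ≤ (r + k) ^ k / k.factorial :=
        pow_div_factorial_le_pow_div_factorial (le_add_of_nonneg_left hr) ha
    _ = ((r + k) / k) ^ k * ((k : ℝ) ^ k / k.factorial) := by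
        rw [div_pow]
        field_simp
    _ ≤ ((r + k) / k) ^ k * 3 ^ k := by
        gcongr
        exact natCast_pow_div_factorial_le k
    _ = (3 * (r + k) / k) ^ k := by
        rw [← mul_pow, div_mul_eq_mul_div, mul_comm (r + k)]
    _ ≤ B ^ k := by
        gcongr
        exact (div_le_iff₀ hk').2 hB

lemma truncNorm_feldman_le (τ : ℕ) {l i : ℕ} (hi : i < l * k) :
    truncNorm τ r (feldman k i) ≤ B ^ (k * l) := by
  have hB1 : 1 ≤ B := by
    by_contra! hB1
    nlinarith [(Nat.cast_pos (α := ℝ)).2 hk]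
  have hchoose : ∀ a ≤ k, truncNorm τ r (Ring.choose (X : ℂ[X]) a) ≤ B ^ k := fun a ha =>
    truncNorm_choose_X_le_pow hr hk hB τ ha
  calc truncNorm τ r (feldman k i)
      ≤ truncNorm τ r (Ring.choose X k ^ (i / k)) * truncNorm τ r (Ring.choose X (i % k)) :=
        truncNorm_mul_le hr _ _
    _ ≤ (B ^ k) ^ (i / k) * B ^ k := by
        gcongr
        · exact truncNorm_nonneg hr _
        · exact (truncNorm_pow_le hr _ _).trans
            (pow_le_pow_left₀ (truncNorm_nonneg hr _) (hchoose k le_rfl) _)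
        · exact hchoose _ (Nat.mod_lt _ hk).le
    _ = (B ^ k) ^ (i / k + 1) := by rw [pow_succ]
    _ ≤ (B ^ k) ^ l := pow_le_pow_right₀ (one_le_pow₀ hB1) ((Nat.div_lt_iff_lt_mul hk).2 hi)
    _ = B ^ (k * l) := by rw [← pow_mul]

end TruncNormBounds

section HasseDerivBounds

lemma choose_mul_pow_sub_le_add_one_pow {s : ℝ} (hs : 0 ≤ s) (i j : ℕ) :
    i.choose j * s ^ (i - j) ≤ (s + 1) ^ i := by
  rcases lt_or_ge i j with hij | hij
  · rw [Nat.choose_eq_zero_of_lt hij, Nat.cast_zero, zero_mul]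
    positivity
  · calc (i.choose j : ℝ) * s ^ (i - j)
        = s ^ (i - j) * 1 ^ (i - (i - j)) * i.choose (i - j) := by
          rw [one_pow, mul_one, Nat.choose_symm hij, mul_comm]
      _ ≤ (s + 1) ^ i := by
          rw [add_pow]
          exact single_le_sum (f := fun m => s ^ m * 1 ^ (i - m) * (i.choose m : ℝ))
            (fun m _ => by positivity) (mem_range.2 (by omega))

variable {D : ℕ} {p : ℂ[X]} (hp : p.natDegree < D)

include hp

lemma truncNorm_taylor_hasseDeriv_le (τ : ℕ) {g : ℝ} (hg : 0 ≤ g) (a : ℂ) (j : ℕ) :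
    truncNorm τ g (taylor a (hasseDeriv j p)) ≤ truncNorm D (‖a‖ + g + 1) p := by
  have htaylor : taylor a (hasseDeriv j p) =
      ∑ i ∈ range D, C (p.coeff i * (i.choose j : ℂ)) * (X + C a) ^ (i - j) := by
    conv_lhs => rw [p.as_sum_range' D hp]
    simp only [map_sum, hasseDeriv_monomial, taylor_monomial, mul_comm (p.coeff _)]
  rw [htaylor]
  refine (truncNorm_sum_le hg _ _).trans (sum_le_sum fun i _ => ?_)
  rw [truncNorm_C_mul, norm_mul, mul_assoc, Complex.norm_natCast]
  have hlinear : truncNorm τ g (X + C a) ≤ ‖a‖ + g := by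
    rw [add_comm ‖a‖]
    exact (truncNorm_add_le hg _ _).trans (add_le_add (truncNorm_X_le τ hg) (truncNorm_C_le τ g _))
  refine mul_le_mul_of_nonneg_left ?_ (norm_nonneg _)
  calc i.choose j * truncNorm τ g ((X + C a) ^ (i - j)) ≤ i.choose j * (‖a‖ + g) ^ (i - j) := by
        gcongr
        exact (truncNorm_pow_le hg _ _).trans
          (pow_le_pow_left₀ (truncNorm_nonneg hg _) hlinear _)
    _ ≤ (‖a‖ + g + 1) ^ i := choose_mul_pow_sub_le_add_one_pow (by positivity) i j

lemma norm_eval_hasseDeriv_le (z : ℂ) (j : ℕ) :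
    ‖(hasseDeriv j p).eval z‖ ≤ truncNorm D (‖z‖ + 1) p := by
  simpa [truncNorm, taylor_coeff_zero] using truncNorm_taylor_hasseDeriv_le hp 1 le_rfl z j

end HasseDerivBounds

section NumericalBounds

open Real

lemma natCast_mul_log_le_of_pow_le {a b : ℝ} (ha : 0 < a) {m n : ℕ} (h : a ^ m ≤ b ^ n) :
    m * log a ≤ n * log b := by
  simpa only [log_pow] using log_le_log (pow_pos ha m) h

lemma log_le_sqrt_mul_log_two {x : ℝ} (hx : 19 ≤ x) : log x ≤ √x * log 2 := by
  have hexp : exp 2 ≤ 19 := by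
    rw [← Nat.cast_ofNat, ← mul_one ((2 : ℕ) : ℝ), exp_nat_mul]
    nlinarith [exp_one_lt_d9, exp_pos 1]
  have h19 : log 19 ≤ log 2 * √19 := by
    have hsqrt : (4.35 : ℝ) ≤ √19 := le_sqrt_of_sq_le (by norm_num)
    have hlog := natCast_mul_log_le_of_pow_le (a := 19) (b := 2) (m := 20) (n := 85) (by norm_num)
      (by norm_num)
    push_cast at hlog
    nlinarith [log_two_gt_d9]
  have hdiv : log x / √x ≤ log 2 :=
    (log_div_sqrt_antitoneOn hexp (hexp.trans hx) hx).trans ((div_le_iff₀ (by positivity)).2 h19)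
  rwa [div_le_iff₀ (sqrt_pos.2 (by linarith)), mul_comm] at hdiv

lemma lcmUpto_le_two_pow {k : ℕ} (hk : 19 ≤ k) : Nat.lcmUpto k ≤ 2 ^ (4 * k) := by
  have hk' : (19 : ℝ) ≤ k := Nat.ofNat_le_cast.2 hk
  have hlog : log (Nat.lcmUpto k) ≤ log ((2 : ℝ) ^ (4 * k)) := by
    calc log (Nat.lcmUpto k) ≤ log 4 * k + 2 * √k * log k := by
          rw [← Chebyshev.psi_eq_log_lcmUpto]
          exact Chebyshev.psi_le (by linarith)
      _ ≤ 2 * log 2 * k + 2 * √k * (√k * log 2) := by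
        gcongr
        · simpa using natCast_mul_log_le_of_pow_le (a := 4) (b := 2) (m := 1) (n := 2) (by norm_num)
            (by norm_num)
        · exact log_le_sqrt_mul_log_two hk'
      _ = 2 * log 2 * k + 2 * (√k * √k) * log 2 := by ring
      _ = log ((2 : ℝ) ^ (4 * k)) := by
        rw [mul_self_sqrt k.cast_nonneg, log_pow]
        push_cast
        ring
  exact_mod_cast (log_le_log_iff (Nat.cast_pos.2 (Nat.lcmUpto_pos k)) (by positivity)).1 hlog

lemma goldenRatio_pow_succ_eq (m : ℕ) :
    goldenRatio ^ (m + 1) = Nat.fib (m + 1) * goldenRatio + Nat.fib m := by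
  rw [← goldenRatio_mul_fib_succ_add_fib, mul_comm]

lemma log_goldenRatio_pos : 0 < log goldenRatio :=
  log_pos one_lt_goldenRatio

lemma log_goldenRatio_le : 36 * log goldenRatio ≤ 25 * log 2 := by
  have hpow : goldenRatio ^ 36 ≤ 2 ^ 25 := by
    rw [goldenRatio_pow_succ_eq 35]
    norm_num [Nat.fib_add_two]
    nlinarith [goldenRatio_sq, one_lt_goldenRatio]
  exact_mod_cast natCast_mul_log_le_of_pow_le goldenRatio_pos hpow

lemma log_three_le : 41 * log 3 ≤ 65 * log 2 := by
  exact_mod_cast natCast_mul_log_le_of_pow_le (a := 3) (b := 2) (m := 41) (n := 65) (by norm_num)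
    (by norm_num)

lemma two_mul_log_goldenRatio_le : 2 * log goldenRatio ≤ log 3 := by
  have hpow : goldenRatio ^ 2 ≤ 3 ^ 1 := by
    rw [goldenRatio_sq]
    linarith [goldenRatio_lt_two]
  simpa using natCast_mul_log_le_of_pow_le goldenRatio_pos hpow

lemma five_mul_log_three_le : 5 * log 3 ≤ log 2 + 10 * log goldenRatio := by
  have hpow : (3 : ℝ) ^ 5 ≤ 2 * goldenRatio ^ 10 := by
    rw [goldenRatio_pow_succ_eq 9]
    norm_num [Nat.fib_add_two]
    nlinarith [goldenRatio_sq, one_lt_goldenRatio]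
  have hlog := log_le_log (by positivity) hpow
  rw [log_mul (by norm_num) (pow_ne_zero _ goldenRatio_ne_zero), log_pow, log_pow] at hlog
  exact_mod_cast hlog

end NumericalBounds

section ExponentVectors

open Real

/-- The box of exponent vectors. -/
def boxIdx (L : ℕ) : Finset (ℕ × ℕ × ℕ) := range L ×ˢ range L ×ˢ range L

/-- The exponent of `φ` attached to an exponent vector. With this choice the weights `logWeight` of
the vectors in `boxIdx L` fill an interval of length about `1.2 * log 2 * L` only. -/
def expPhi (v : ℕ × ℕ × ℕ) : ℤ := v.1 - v.2.1 - 2 * v.2.2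

/-- The logarithm of the element `φ ^ e * 2 ^ b * 3 ^ c` attached to an exponent vector. -/
noncomputable def logWeight (v : ℕ × ℕ × ℕ) : ℝ :=
  expPhi v * log goldenRatio + v.2.1 * log 2 + v.2.2 * log 3

lemma logWeight_eq (v : ℕ × ℕ × ℕ) : logWeight v = v.1 * log goldenRatio +
    v.2.1 * (log 2 - log goldenRatio) + v.2.2 * (log 3 - 2 * log goldenRatio) := by
  rw [logWeight, expPhi]
  push_cast
  ring

lemma log_goldenRatio_le_log_two : log goldenRatio ≤ log 2 := by
  linarith [log_goldenRatio_pos, log_goldenRatio_le]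

lemma logWeight_nonneg (v : ℕ × ℕ × ℕ) : 0 ≤ logWeight v := by
  rw [logWeight_eq]
  have := log_goldenRatio_pos
  have := sub_nonneg.2 log_goldenRatio_le_log_two
  have := sub_nonneg.2 two_mul_log_goldenRatio_le
  positivity

lemma mem_boxIdx {L : ℕ} {v : ℕ × ℕ × ℕ} : v ∈ boxIdx L ↔ v.1 < L ∧ v.2.1 < L ∧ v.2.2 < L := by
  simp [boxIdx]

lemma logWeight_le {L : ℕ} {v : ℕ × ℕ × ℕ} (hv : v ∈ boxIdx L) :
    logWeight v ≤ 1.2 * log 2 * L := by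
  obtain ⟨ha, hb, hc⟩ := mem_boxIdx.1 hv
  have := log_goldenRatio_pos
  have := sub_nonneg.2 log_goldenRatio_le_log_two
  have := sub_nonneg.2 two_mul_log_goldenRatio_le
  calc logWeight v = v.1 * log goldenRatio + v.2.1 * (log 2 - log goldenRatio) +
        v.2.2 * (log 3 - 2 * log goldenRatio) := logWeight_eq v
    _ ≤ L * log goldenRatio + L * (log 2 - log goldenRatio) +
        L * (log 3 - 2 * log goldenRatio) := by gcongr
    _ = (log 2 + log 3 - 2 * log goldenRatio) * L := by ring
    _ ≤ 1.2 * log 2 * L := by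
      gcongr
      linarith [five_mul_log_three_le]

lemma abs_expPhi_le {L : ℕ} {v : ℕ × ℕ × ℕ} (hv : v ∈ boxIdx L) : |expPhi v| ≤ 3 * L := by
  obtain ⟨ha, hb, hc⟩ := mem_boxIdx.1 hv
  rw [expPhi, abs_le]
  constructor <;> omega

end ExponentVectors

section Zphi

open Real

namespace Zphi

/-- The unit `φ` of `ℤ[φ]`. -/
def unit : Zphiˣ where
  val := ⟨0, 1⟩
  inv := ⟨-1, 1⟩
  val_inv := by ext <;> simp [QuadraticAlgebra.re_one, QuadraticAlgebra.im_one]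
  inv_val := by ext <;> simp [QuadraticAlgebra.re_one, QuadraticAlgebra.im_one]

/-- The element `φ ^ e * 2 ^ q * 3 ^ r`. -/
def monomial (e : ℤ) (q r : ℕ) : Zphi := ((unit ^ e : Zphiˣ) : Zphi) * 2 ^ q * 3 ^ r

lemma val_unit : val unit = goldenRatio := by simp [val, unit]

lemma conjVal_unit : conjVal unit = goldenConj := by simp [conjVal, unit]

lemma map_monomial (f : Zphi →+* ℝ) (e : ℤ) (q r : ℕ) :
    f (monomial e q r) = f unit ^ e * 2 ^ q * 3 ^ r := by
  have hunit : f ((unit ^ e : Zphiˣ) : Zphi) = f unit ^ e := by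
    rw [← MonoidHom.coe_coe f, ← Units.coe_map, map_zpow, Units.val_zpow_eq_zpow_val, Units.coe_map]
  rw [monomial, map_mul, map_mul, hunit, map_pow, map_pow, map_ofNat, map_ofNat]

lemma exp_zpow_mul_two_pow_mul_three_pow (x : ℝ) (e : ℤ) (q r : ℕ) :
    exp x ^ e * 2 ^ q * 3 ^ r = exp (e * x + q * log 2 + r * log 3) := by
  rw [exp_add, exp_add, mul_comm (e : ℝ), exp_mul, rpow_intCast, exp_nat_mul, exp_nat_mul,
    exp_log two_pos, exp_log three_pos]

lemma val_monomial (e : ℤ) (q r : ℕ) :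
    val (monomial e q r) = exp (e * log goldenRatio + q * log 2 + r * log 3) := by
  rw [map_monomial, val_unit, ← exp_zpow_mul_two_pow_mul_three_pow, exp_log goldenRatio_pos]

lemma abs_conjVal_monomial (e : ℤ) (q r : ℕ) :
    |conjVal (monomial e q r)| = exp (-(e * log goldenRatio) + q * log 2 + r * log 3) := by
  have hconj : |goldenConj| = exp (-log goldenRatio) := by
    rw [exp_neg, exp_log goldenRatio_pos, inv_goldenRatio, abs_of_neg goldenConj_neg]
  rw [map_monomial, conjVal_unit, ← mul_neg, ← exp_zpow_mul_two_pow_mul_three_pow, ← hconj, abs_mul,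
    abs_mul, abs_zpow, abs_of_pos (by positivity : (0 : ℝ) < 2 ^ q),
    abs_of_pos (by positivity : (0 : ℝ) < 3 ^ r)]

section MonomialBounds

variable {e : ℤ} (q r : ℕ) {H : ℝ} (he : |(e : ℝ)| ≤ H)

include he

lemma abs_val_monomial_le :
    |val (monomial e q r)| ≤ exp (H * log goldenRatio + q * log 2 + r * log 3) := by
  have := log_goldenRatio_pos
  rw [val_monomial, abs_exp]
  gcongr
  exact (abs_le.1 he).2

lemma abs_conjVal_monomial_le :
    |conjVal (monomial e q r)| ≤ exp (H * log goldenRatio + q * log 2 + r * log 3) := by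
  have := log_goldenRatio_pos
  rw [abs_conjVal_monomial, ← neg_mul]
  gcongr
  linarith [(abs_le.1 he).1]

end MonomialBounds

section CoordinateBounds

variable {z : Zphi} {B : ℝ} (h₁ : |val z| ≤ B) (h₂ : |conjVal z| ≤ B)

include h₁ h₂

lemma abs_im_le : |(z.im : ℝ)| ≤ 2 * B := by
  have hsqrt : 1 ≤ √5 := by
    rw [one_le_sqrt]
    norm_num
  have him : (z.im : ℝ) * √5 = val z - conjVal z := by
    simp only [val, conjVal, eval_apply, ← goldenRatio_sub_goldenConj]
    ring
  calc |(z.im : ℝ)| ≤ |(z.im : ℝ)| * √5 := le_mul_of_one_le_right (abs_nonneg _) hsqrt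
    _ = |val z - conjVal z| := by rw [← him, abs_mul, abs_of_nonneg (sqrt_nonneg 5)]
    _ ≤ |val z| + |conjVal z| := abs_sub _ _
    _ ≤ 2 * B := by linarith

lemma abs_re_le : |(z.re : ℝ)| ≤ 2 * B := by
  have hsqrt : (2 : ℝ) ≤ √5 := le_sqrt_of_sq_le (by norm_num)
  have hre : (z.re : ℝ) * √5 = goldenRatio * conjVal z - goldenConj * val z := by
    simp only [val, conjVal, eval_apply, ← goldenRatio_sub_goldenConj]
    ring
  have hmul : |(z.re : ℝ)| * √5 ≤ 2 * B + 1 * B := by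
    rw [← abs_of_nonneg (sqrt_nonneg 5), ← abs_mul, hre]
    refine (abs_sub _ _).trans ?_
    rw [abs_mul, abs_mul, abs_of_pos goldenRatio_pos, abs_of_neg goldenConj_neg]
    gcongr
    · exact goldenRatio_lt_two.le
    · linarith [neg_one_lt_goldenConj]
  nlinarith [abs_nonneg (z.re : ℝ), (abs_nonneg _).trans h₁]

end CoordinateBounds

end Zphi

end Zphi

section Siegel

lemma siegel_exponent_bound {m N a : ℝ} {e B : ℕ} (hm : 0 < m) (hmN : 59 * m ≤ 10 * N)
    (ha₀ : 0 ≤ a) (ha : a ≤ 2 ^ e) (hB : 10 * e ≤ 49 * B) : a ^ (m / (N - m)) ≤ 2 ^ B := by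
  have hexp : m / (N - m) ≤ 10 / 49 := by
    rw [div_le_div_iff₀ (by linarith) (by norm_num)]
    linarith
  have hB' : e * (10 / 49 : ℝ) ≤ B := by
    have : (10 : ℝ) * e ≤ 49 * B := by exact_mod_cast hB
    linarith
  calc a ^ (m / (N - m)) ≤ ((2 : ℝ) ^ e) ^ (m / (N - m)) :=
        Real.rpow_le_rpow ha₀ ha (div_nonneg hm.le (by linarith))
    _ ≤ ((2 : ℝ) ^ e) ^ (10 / 49 : ℝ) :=
        Real.rpow_le_rpow_of_exponent_le (one_le_pow₀ one_le_two) hexp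
    _ = (2 : ℝ) ^ (e * (10 / 49 : ℝ)) := by rw [Real.rpow_mul two_pos.le, Real.rpow_natCast]
    _ ≤ (2 : ℝ) ^ (B : ℝ) := Real.rpow_le_rpow_of_exponent_le one_le_two hB'
    _ = 2 ^ B := Real.rpow_natCast _ _

open scoped Matrix.Norms.Elementwise in
lemma exists_small_int_solution {α β : Type*} {s : Finset α} {t : Finset β} (hs : s.Nonempty)
    (A : α → β → ℤ) {b c B : ℕ} (hcard : 59 * #s ≤ 10 * #t) (ht : #t ≤ 2 ^ b)
    (hA : ∀ i ∈ s, ∀ j ∈ t, |A i j| ≤ 2 ^ c) (hB : 10 * (b + c) ≤ 49 * B) :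
    ∃ x : β → ℤ, (∃ j ∈ t, x j ≠ 0) ∧ (∀ i ∈ s, ∑ j ∈ t, A i j * x j = 0) ∧
      ∀ j, |x j| ≤ 2 ^ B := by
  classical
  let M : Matrix s t ℤ := Matrix.of fun i j => A i j
  have hspos : 0 < #s := hs.card_pos
  obtain ⟨x, hx0, hMx, hx⟩ := Int.Matrix.exists_ne_zero_int_vec_norm_le M
    (by rw [Fintype.card_coe, Fintype.card_coe]; omega) (by rwa [Fintype.card_coe])
  rw [Fintype.card_coe, Fintype.card_coe] at hx
  have hM : max 1 ‖M‖ ≤ 2 ^ c := by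
    refine max_le (one_le_pow₀ one_le_two) ((Matrix.norm_le_iff (by positivity)).2 fun i j => ?_)
    rw [Int.norm_eq_abs]
    exact_mod_cast hA i i.2 j j.2
  have hxB : ∀ j, |x j| ≤ 2 ^ B := by
    intro j
    have hbase : #t * max 1 ‖M‖ ≤ 2 ^ (b + c) := by
      rw [pow_add]
      gcongr
      exact_mod_cast ht
    have hj := (norm_le_pi_norm x j).trans <| hx.trans <| siegel_exponent_bound
      (Nat.cast_pos.2 hspos) (by exact_mod_cast hcard) (by positivity) hbase hB
    rw [Int.norm_eq_abs] at hj
    exact_mod_cast hj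
  let x' : β → ℤ := fun j => if hj : j ∈ t then x ⟨j, hj⟩ else 0
  have hx' : ∀ j : t, x' j = x j := fun j => dif_pos j.2
  refine ⟨x', ?_, fun i hi => ?_, fun j => ?_⟩
  · obtain ⟨j, hj⟩ := Function.ne_iff.1 hx0
    exact ⟨j, j.2, by rwa [hx']⟩
  · have hMi := congrFun hMx ⟨i, hi⟩
    simp only [Matrix.mulVec, dotProduct, M, Matrix.of_apply, Pi.zero_apply] at hMi
    rw [← hMi, ← sum_coe_sort]
    simp only [hx']
  · by_cases hj : j ∈ t
    · simpa only [x', dif_pos hj] using hxB _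
    · simp [x', hj]

end Siegel

section DerivativeOrders

/-- The triples `(j, m₂, m₃)` of natural numbers with `j + m₂ + m₃ < T`, as nested pairs. -/
def orderIdx (T : ℕ) : Finset (Σ _ : ℕ, Σ _ : ℕ, ℕ) :=
  (range T).sigma fun j => (range (T - j)).sigma fun m₂ => range (T - j - m₂)

lemma mem_orderIdx {T j m₂ m₃ : ℕ} : ⟨j, m₂, m₃⟩ ∈ orderIdx T ↔ j + m₂ + m₃ < T := by
  simp only [orderIdx, mem_sigma, mem_range]
  omega

lemma two_mul_sum_range_sub (T : ℕ) : 2 * ∑ m ∈ range T, (T - m) = T * (T + 1) := by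
  induction T with
  | zero => rfl
  | succ T ih =>
    simp only [sum_range_succ', Nat.add_sub_add_right, mul_add, ih, Nat.sub_zero]
    ring

lemma six_mul_card_orderIdx (T : ℕ) : 6 * #(orderIdx T) = T * (T + 1) * (T + 2) := by
  simp only [orderIdx, card_sigma, card_range]
  induction T with
  | zero => rfl
  | succ T ih =>
    have hsum := two_mul_sum_range_sub (T + 1)
    simp only [sum_range_succ' _ T, Nat.add_sub_add_right, mul_add, ih, Nat.sub_zero] at hsum ⊢
    linarith

end DerivativeOrders

section AuxiliaryFunction

/-- Numerical parameters of the auxiliary functions for the linear form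
`n * log φ - x * log 2 - y * log 3`: exponents are taken below `L` and divided by `L`, polynomials
have degree less than `N`, derivatives are taken up to order `T`, interpolation points lie below
`U`, and all sizes are measured in powers of `2 ^ u`. -/
structure AuxParams (k n x y L N T U u : ℕ) : Prop where
  le_k : 19 ≤ k
  L_eq : L = 2 ^ 25
  u_eq : u = 2 ^ 26 * k
  N_eq : N = 2 ^ 28 * k
  T_eq : T = 2 ^ 32
  U_eq : U = 64 * u
  n_pos : 0 < n
  x_le : x ≤ n
  y_le : y ≤ n
  four_mul_n_mul_L_le : 4 * n * L ≤ 2 ^ (4 * k)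

/-- The coefficient of `log 2` in `n * logWeight v` modulo the linear form. -/
def gamma₂ (n x : ℕ) (v : ℕ × ℕ × ℕ) : ℤ := n * v.2.1 + x * expPhi v

/-- The coefficient of `log 3` in `n * logWeight v` modulo the linear form. -/
def gamma₃ (n y : ℕ) (v : ℕ × ℕ × ℕ) : ℤ := n * v.2.2 + y * expPhi v

/-- The summand attached to the exponent vector `v` of the auxiliary function with polynomials `P`,
differentiated `j` times along the polynomial variable and `m₂`, `m₃` times along the variables
dual to `log 2` and `log 3`. -/
noncomputable def auxTerm (L n x y : ℕ) (P : ℕ × ℕ × ℕ → ℂ[X]) (j m₂ m₃ : ℕ) (z : ℂ)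
    (v : ℕ × ℕ × ℕ) : ℂ :=
  (hasseDeriv j (P v)).eval z * ((gamma₂ n x v : ℂ) ^ m₂ * (gamma₃ n y v : ℂ) ^ m₃) *
    Complex.exp ((logWeight v / L : ℝ) * z)

/-- The reduction of an exponent vector modulo `M`. -/
def resid (M : ℕ) (v : ℕ × ℕ × ℕ) : ℕ × ℕ × ℕ := (v.1 % M, v.2.1 % M, v.2.2 % M)

/-- The exponent vectors of `boxIdx L` that are congruent to `ρ` modulo `M`. -/
def classIdx (L M : ℕ) (ρ : ℕ × ℕ × ℕ) : Finset (ℕ × ℕ × ℕ) :=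
  (boxIdx L).filter fun v => resid M v = resid M ρ

/-- The invariant of the extrapolation: on each residue class modulo `M`, the derivatives of total
order less than `T` of the auxiliary function vanish at the odd multiples of `g` below `U`. -/
def Vanish (L U n x y : ℕ) (P : ℕ × ℕ × ℕ → ℂ[X]) (M g T : ℕ) : Prop :=
  ∀ (ρ : ℕ × ℕ × ℕ) (m j m₂ m₃ : ℕ), Odd m → g * m < U → j + m₂ + m₃ < T →
    ∑ v ∈ classIdx L M ρ, auxTerm L n x y P j m₂ m₃ ((g * m : ℕ) : ℂ) v = 0

/-- The polynomials with coefficients `p` in the Feldman basis. -/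
noncomputable def feldmanComb (k N : ℕ) (p : ℕ × ℕ × ℕ → ℕ → ℤ) (v : ℕ × ℕ × ℕ) : ℂ[X] :=
  ∑ i ∈ range N, C (p v i : ℂ) * feldman k i

/-- The integer `lcm (1, …, k) ^ j * (hasseDeriv j (feldman k i)).eval z`. The floor only serves to
give the definition the type `ℤ`, see `intCast_feldmanInt`. -/
noncomputable def feldmanInt (k i j : ℕ) (z : ℤ) : ℤ :=
  ⌊((Nat.lcmUpto k : ℂ) ^ j * (hasseDeriv j (feldman k i)).eval (z : ℂ)).re⌋

/-- The coefficient of `exp (Y * logWeight v / L)` in `auxTerm` at `Y` for the polynomials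
`feldmanComb k N p`, multiplied by `lcm (1, …, k) ^ j` to make it an integer. -/
noncomputable def auxCoeff (k n x y N : ℕ) (p : ℕ × ℕ × ℕ → ℕ → ℤ) (j m₂ m₃ Y : ℕ)
    (v : ℕ × ℕ × ℕ) : ℤ :=
  ∑ i ∈ range N, p v i * (feldmanInt k i j Y * (gamma₂ n x v ^ m₂ * gamma₃ n y v ^ m₃))

lemma eval_hasseDeriv_feldmanComb (k N : ℕ) (p : ℕ × ℕ × ℕ → ℕ → ℤ) (v : ℕ × ℕ × ℕ) (j : ℕ)
    (z : ℂ) : (hasseDeriv j (feldmanComb k N p v)).eval z =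
      ∑ i ∈ range N, (p v i : ℂ) * (hasseDeriv j (feldman k i)).eval z := by
  rw [feldmanComb, map_sum, eval_finsetSum]
  refine sum_congr rfl fun i _ => ?_
  rw [← smul_eq_C_mul, map_smul, eval_smul, smul_eq_mul]

section Integrality

variable {k : ℕ} (hk : 0 < k)

include hk

lemma intCast_feldmanInt (i j : ℕ) (z : ℤ) : (feldmanInt k i j z : ℂ) =
    (Nat.lcmUpto k : ℂ) ^ j * (hasseDeriv j (feldman k i)).eval (z : ℂ) := by
  have hdvd : ∀ i, 1 ≤ i → i ≤ k → i ∣ Nat.lcmUpto k := fun i h1 hik =>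
    dvd_lcm (f := id) (mem_Icc.2 ⟨h1, hik⟩)
  obtain ⟨d, hd⟩ := exists_int_pow_mul_eval_hasseDeriv_feldman_eq hk hdvd i j z
  rw [feldmanInt, hd, Complex.intCast_re, Int.floor_intCast]

lemma lcmUpto_pow_mul_auxTerm (L n x y N : ℕ) (p : ℕ × ℕ × ℕ → ℕ → ℤ) (j m₂ m₃ Y : ℕ)
    (v : ℕ × ℕ × ℕ) :
    (Nat.lcmUpto k : ℂ) ^ j * auxTerm L n x y (feldmanComb k N p) j m₂ m₃ (Y : ℂ) v =
      ((auxCoeff k n x y N p j m₂ m₃ Y v * Real.exp (logWeight v / L * Y) : ℝ) : ℂ) := by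
  rw [auxTerm, auxCoeff, eval_hasseDeriv_feldmanComb]
  push_cast
  rw [← mul_assoc, sum_mul, mul_sum]
  congr 1
  refine sum_congr rfl fun i _ => ?_
  rw [intCast_feldmanInt hk, Int.cast_natCast]
  ring

lemma sum_auxTerm_eq_zero_iff (L n x y N : ℕ) (p : ℕ × ℕ × ℕ → ℕ → ℤ) (j m₂ m₃ Y : ℕ)
    (s : Finset (ℕ × ℕ × ℕ)) :
    ∑ v ∈ s, auxTerm L n x y (feldmanComb k N p) j m₂ m₃ (Y : ℂ) v = 0 ↔
      ∑ v ∈ s, auxCoeff k n x y N p j m₂ m₃ Y v * Real.exp (logWeight v / L * Y) = 0 := by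
  have hlcm : (Nat.lcmUpto k : ℂ) ^ j ≠ 0 :=
    pow_ne_zero _ (Nat.cast_ne_zero.2 (Nat.lcmUpto_ne_zero k))
  rw [← mul_right_inj' hlcm, mul_zero, mul_sum]
  simp only [lcmUpto_pow_mul_auxTerm hk]
  rw [← Complex.ofReal_sum, Complex.ofReal_eq_zero]

end Integrality

lemma natDegree_feldman (k i : ℕ) : (feldman k i).natDegree = i :=
  natDegree_eq_of_degree_eq_some (degree_feldman k i)

namespace AuxParams

variable {k n x y L N T U u : ℕ} (h : AuxParams k n x y L N T U u)

include h

lemma k_pos : 0 < k := by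
  have := h.le_k
  omega

lemma L_pos : 0 < L := by
  rw [h.L_eq]
  positivity

lemma one_le_u : 1 ≤ u := by
  have := h.le_k
  have := h.u_eq
  omega

lemma two_pow_mul_k_le_two_pow {a : ℕ} (ha : a ≤ 2 ^ 29) : 2 ^ a * k ≤ 2 ^ u := by
  have hk := h.le_k
  have hu := h.u_eq
  calc 2 ^ a * k ≤ 2 ^ a * 2 ^ k := by
        gcongr
        exact Nat.lt_two_pow_self.le
    _ = 2 ^ (a + k) := (pow_add _ _ _).symm
    _ ≤ 2 ^ u := Nat.pow_le_pow_right two_pos (by omega)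

lemma N_le_two_pow : N ≤ 2 ^ u :=
  h.N_eq.trans_le (h.two_pow_mul_k_le_two_pow (by norm_num))

lemma four_mul_k_mul_le {a b : ℕ} (ha : a ≤ 2 ^ 24 * b) : 4 * k * a ≤ b * u := by
  calc 4 * k * a ≤ 4 * k * (2 ^ 24 * b) := by gcongr
    _ = b * u := by
      rw [h.u_eq]
      ring

lemma abs_mul_add_mul_expPhi_le {b w : ℕ} (hb : b < L) (hw : w ≤ n) {v : ℕ × ℕ × ℕ}
    (hv : v ∈ boxIdx L) : |(n * b + w * expPhi v : ℤ)| ≤ 2 ^ (4 * k) := by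
  calc |(n * b + w * expPhi v : ℤ)| ≤ |(n * b : ℤ)| + |w * expPhi v| := abs_add_le _ _
    _ = n * b + w * |expPhi v| := by
      rw [abs_mul (w : ℤ), Nat.abs_cast, abs_of_nonneg (a := (n * b : ℤ)) (by positivity)]
    _ ≤ n * L + n * (3 * L) := by
      gcongr
      exact abs_expPhi_le hv
    _ = ((4 * n * L : ℕ) : ℤ) := by
      push_cast
      ring
    _ ≤ 2 ^ (4 * k) := by exact_mod_cast h.four_mul_n_mul_L_le

lemma abs_gamma_pow_le {v : ℕ × ℕ × ℕ} (hv : v ∈ boxIdx L) (m₂ m₃ : ℕ) :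
    |(gamma₂ n x v : ℝ) ^ m₂ * (gamma₃ n y v : ℝ) ^ m₃| ≤ 2 ^ (4 * k * (m₂ + m₃)) := by
  obtain ⟨_, hb, hc⟩ := mem_boxIdx.1 hv
  have h₂ : |(gamma₂ n x v : ℝ)| ≤ 2 ^ (4 * k) := by
    exact_mod_cast h.abs_mul_add_mul_expPhi_le hb h.x_le hv
  have h₃ : |(gamma₃ n y v : ℝ)| ≤ 2 ^ (4 * k) := by
    exact_mod_cast h.abs_mul_add_mul_expPhi_le hc h.y_le hv
  rw [abs_mul, abs_pow, abs_pow, pow_mul, pow_add]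
  gcongr

lemma truncNorm_feldman_le_two_pow (τ : ℕ) {R : ℝ} (hR : 0 ≤ R) (hRU : R ≤ 66 * U) {i : ℕ}
    (hi : i < N) : truncNorm τ R (feldman k i) ≤ 2 ^ (160 * u) := by
  have hradius : 3 * (R + k) ≤ 2 ^ 40 * k := by
    rw [h.U_eq, h.u_eq] at hRU
    push_cast at hRU
    linarith [h.k_pos.le]
  calc truncNorm τ R (feldman k i) ≤ (2 ^ 40) ^ (k * 2 ^ 28) :=
        truncNorm_feldman_le hR h.k_pos hradius τ (h.N_eq ▸ hi)
    _ = 2 ^ (160 * u) := by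
      rw [← pow_mul, h.u_eq]
      ring_nf

lemma abs_feldmanInt_le {i Y : ℕ} (hi : i < N) (hY : Y ≤ U) (j : ℕ) :
    |(feldmanInt k i j Y : ℝ)| ≤ 2 ^ (4 * k * j + 160 * u) := by
  have hlcm : (Nat.lcmUpto k : ℝ) ≤ 2 ^ (4 * k) := by exact_mod_cast lcmUpto_le_two_pow h.le_k
  have hradius : ‖((Y : ℤ) : ℂ)‖ + 1 ≤ 66 * U := by
    have : (Y : ℝ) ≤ U := by exact_mod_cast hY
    have : (1 : ℝ) ≤ U := by
      have := h.one_le_u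
      have := h.U_eq
      exact_mod_cast (by omega : 1 ≤ U)
    rw [Int.cast_natCast, Complex.norm_natCast]
    linarith
  calc |(feldmanInt k i j Y : ℝ)| =
        (Nat.lcmUpto k : ℝ) ^ j * ‖(hasseDeriv j (feldman k i)).eval ((Y : ℤ) : ℂ)‖ := by
        rw [← Complex.norm_intCast, intCast_feldmanInt h.k_pos, norm_mul, norm_pow,
          Complex.norm_natCast]
    _ ≤ (2 ^ (4 * k)) ^ j * 2 ^ (160 * u) := by
        gcongr
        exact (norm_eval_hasseDeriv_le ((natDegree_feldman k i).trans_lt hi) _ j).trans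
          (h.truncNorm_feldman_le_two_pow N (by positivity) hradius hi)
    _ = 2 ^ (4 * k * j + 160 * u) := by ring

lemma abs_feldmanInt_mul_gamma_pow_le {i Y : ℕ} (hi : i < N) (hY : Y ≤ U) {v : ℕ × ℕ × ℕ}
    (hv : v ∈ boxIdx L) {j m₂ m₃ b : ℕ} (hj : j + m₂ + m₃ ≤ 2 ^ 24 * b) :
    |((feldmanInt k i j Y * (gamma₂ n x v ^ m₂ * gamma₃ n y v ^ m₃) : ℤ) : ℝ)| ≤
      2 ^ ((b + 160) * u) := by
  push_cast
  rw [abs_mul]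
  calc |(feldmanInt k i j Y : ℝ)| * |(gamma₂ n x v : ℝ) ^ m₂ * (gamma₃ n y v : ℝ) ^ m₃| ≤
        2 ^ (4 * k * j + 160 * u) * 2 ^ (4 * k * (m₂ + m₃)) := by
        gcongr
        · exact h.abs_feldmanInt_le hi hY j
        · exact h.abs_gamma_pow_le hv m₂ m₃
    _ = 2 ^ (4 * k * (j + m₂ + m₃) + 160 * u) := by ring
    _ ≤ 2 ^ ((b + 160) * u) := by
        rw [add_mul]
        exact pow_le_pow_right₀ one_le_two (Nat.add_le_add_right (h.four_mul_k_mul_le hj) _)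

lemma abs_auxCoeff_le {p : ℕ × ℕ × ℕ → ℕ → ℤ} (hp : ∀ v i, |p v i| ≤ 2 ^ (147 * u)) {Y : ℕ}
    (hY : Y ≤ U) {v : ℕ × ℕ × ℕ} (hv : v ∈ boxIdx L) {j m₂ m₃ : ℕ} (hj : j + m₂ + m₃ ≤ 2 ^ 31) :
    |(auxCoeff k n x y N p j m₂ m₃ Y v : ℝ)| ≤ 2 ^ (436 * u) := by
  rw [auxCoeff, Int.cast_sum]
  calc |∑ i ∈ range N, ((p v i * (feldmanInt k i j Y * (gamma₂ n x v ^ m₂ * gamma₃ n y v ^ m₃)) :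
          ℤ) : ℝ)| ≤ ∑ i ∈ range N, 2 ^ (147 * u) * 2 ^ ((128 + 160) * u) := by
        refine (abs_sum_le_sum_abs _ _).trans (sum_le_sum fun i hi => ?_)
        rw [Int.cast_mul, abs_mul]
        gcongr
        · exact_mod_cast hp v i
        · exact h.abs_feldmanInt_mul_gamma_pow_le (mem_range.1 hi) hY hv hj
    _ = N * (2 ^ (147 * u) * 2 ^ ((128 + 160) * u)) := by
        rw [sum_const, card_range, nsmul_eq_mul]
    _ ≤ 2 ^ u * (2 ^ (147 * u) * 2 ^ ((128 + 160) * u)) := by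
        gcongr
        exact_mod_cast h.N_le_two_pow
    _ = 2 ^ (436 * u) := by ring

end AuxParams

end AuxiliaryFunction

section MonomialSize

namespace Zphi

lemma exponent_bound {H q r u : ℝ} (hu : 0 ≤ u) (hH : H ≤ 192 * u) (hq : q ≤ 64 * u)
    (hr : r ≤ 64 * u) :
    H * Real.log Real.goldenRatio + q * Real.log 2 + r * Real.log 3 ≤ 300 * u * Real.log 2 := by
  have := log_goldenRatio_pos
  have : 0 < Real.log 3 := Real.log_pos (by norm_num)
  calc H * Real.log Real.goldenRatio + q * Real.log 2 + r * Real.log 3 ≤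
        192 * u * Real.log Real.goldenRatio + 64 * u * Real.log 2 + 64 * u * Real.log 3 := by gcongr
    _ = u * (192 * Real.log Real.goldenRatio + 64 * Real.log 2 + 64 * Real.log 3) := by ring
    _ ≤ u * (300 * Real.log 2) := by
      gcongr
      linarith [log_goldenRatio_le, log_three_le]
    _ = 300 * u * Real.log 2 := by ring

section

variable {e : ℤ} {q r u : ℕ} (he : |e| ≤ 192 * u) (hq : q ≤ 64 * u) (hr : r ≤ 64 * u)

include hq hr

lemma exp_exponent_le : Real.exp ((192 * u : ℝ) * Real.log Real.goldenRatio + q * Real.log 2 +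
    r * Real.log 3) ≤ 2 ^ (300 * u) := by
  rw [← Real.le_log_iff_exp_le (by positivity), Real.log_pow]
  push_cast
  exact exponent_bound u.cast_nonneg le_rfl (by exact_mod_cast hq) (by exact_mod_cast hr)

include he

lemma abs_val_monomial_le_two_pow : |val (monomial e q r)| ≤ 2 ^ (300 * u) :=
  (abs_val_monomial_le q r (by exact_mod_cast he)).trans (exp_exponent_le hq hr)

lemma abs_conjVal_monomial_le_two_pow : |conjVal (monomial e q r)| ≤ 2 ^ (300 * u) :=
  (abs_conjVal_monomial_le q r (by exact_mod_cast he)).trans (exp_exponent_le hq hr)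

end

/-- The two coordinates of an element of `ℤ[φ]` with respect to the basis `1, φ`. -/
def coord : Zphi ≃ₗ[ℤ] Fin 2 → ℤ := QuadraticAlgebra.linearEquivTuple 1 1

lemma abs_coord_le {z : Zphi} {B : ℝ} (h₁ : |val z| ≤ B) (h₂ : |conjVal z| ≤ B) (c : Fin 2) :
    |(coord z c : ℝ)| ≤ 2 * B := by
  fin_cases c
  · exact abs_re_le h₁ h₂
  · exact abs_im_le h₁ h₂

end Zphi

end MonomialSize

section InitialStep

/-- The matrix of the linear system for the coefficients of the auxiliary polynomials: the equation
with index `(m, ⟨j, m₂, m₃⟩, c)` expresses that the coordinate `c` in `ℤ[φ]` of the derivative of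
order `(j, m₂, m₃)` of the auxiliary function at `L * m` is zero. -/
noncomputable def siegelCoeff (k n x y L : ℕ) (a : ℕ × (Σ _ : ℕ, Σ _ : ℕ, ℕ) × Fin 2)
    (b : (ℕ × ℕ × ℕ) × ℕ) : ℤ :=
  feldmanInt k b.2 a.2.1.1 (L * a.1 : ℕ) *
      (gamma₂ n x b.1 ^ a.2.1.2.1 * gamma₃ n y b.1 ^ a.2.1.2.2) *
    Zphi.coord (Zphi.monomial (expPhi b.1 * a.1) (b.1.2.1 * a.1) (b.1.2.2 * a.1)) a.2.2

lemma exp_logWeight_mul (v : ℕ × ℕ × ℕ) (m : ℕ) : Real.exp (logWeight v * m) =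
    Zphi.val (Zphi.monomial (expPhi v * m) (v.2.1 * m) (v.2.2 * m)) := by
  rw [Zphi.val_monomial, logWeight]
  push_cast
  ring_nf

lemma sum_auxTerm_eq_zero_of_siegel {k n x y L N : ℕ} (hk : 0 < k) (hL : 0 < L)
    {p : ℕ × ℕ × ℕ → ℕ → ℤ} {m j m₂ m₃ : ℕ} {s : Finset (ℕ × ℕ × ℕ)}
    (hp : ∀ c, ∑ b ∈ s ×ˢ range N, siegelCoeff k n x y L (m, ⟨j, m₂, m₃⟩, c) b * p b.1 b.2 = 0) :
    ∑ v ∈ s, auxTerm L n x y (feldmanComb k N p) j m₂ m₃ ((L * m : ℕ) : ℂ) v = 0 := by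
  have hcomb : ∑ v ∈ s, auxCoeff k n x y N p j m₂ m₃ (L * m) v •
      Zphi.monomial (expPhi v * m) (v.2.1 * m) (v.2.2 * m) = 0 := by
    rw [← LinearEquiv.map_eq_zero_iff Zphi.coord]
    funext c
    rw [map_sum, Finset.sum_apply, Pi.zero_apply, ← hp c, sum_product]
    refine sum_congr rfl fun v _ => ?_
    rw [map_zsmul, Pi.smul_apply, smul_eq_mul, auxCoeff, sum_mul]
    refine sum_congr rfl fun i _ => ?_
    rw [siegelCoeff]
    ring
  rw [sum_auxTerm_eq_zero_iff hk, ← map_zero Zphi.val, ← hcomb, map_sum]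
  refine sum_congr rfl fun v _ => ?_
  have hL' : (L : ℝ) ≠ 0 := by positivity
  rw [map_zsmul, zsmul_eq_mul, ← exp_logWeight_mul, Nat.cast_mul, div_mul_eq_mul_div,
    mul_left_comm, mul_div_cancel_left₀ _ hL']

namespace AuxParams

variable {k n x y L N T U u : ℕ} (h : AuxParams k n x y L N T U u)

include h

lemma abs_siegelCoeff_le {m j m₂ m₃ : ℕ} (hm : L * m ≤ U) (hj : j + m₂ + m₃ ≤ T) (c : Fin 2)
    {v : ℕ × ℕ × ℕ} (hv : v ∈ boxIdx L) {i : ℕ} (hi : i < N) :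
    |siegelCoeff k n x y L (m, ⟨j, m₂, m₃⟩, c) (v, i)| ≤ 2 ^ (717 * u) := by
  obtain ⟨_, hb, hc⟩ := mem_boxIdx.1 hv
  have hlt : ∀ {q}, q < L → q * m ≤ 64 * u := fun hq =>
    (Nat.mul_le_mul_right m hq.le).trans (hm.trans_eq h.U_eq)
  have he : |expPhi v * m| ≤ 192 * u := by
    calc |expPhi v * m| = |expPhi v| * m := by rw [abs_mul, Nat.abs_cast]
      _ ≤ 3 * L * m := by
        gcongr
        exact abs_expPhi_le hv
      _ = 3 * (L * m : ℕ) := by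
        push_cast
        ring
      _ ≤ 3 * (64 * u : ℕ) := by
        exact_mod_cast Nat.mul_le_mul_left 3 (hm.trans_eq h.U_eq)
      _ = 192 * u := by
        push_cast
        ring
  have hcoord := Zphi.abs_coord_le (Zphi.abs_val_monomial_le_two_pow he (hlt hb) (hlt hc))
    (Zphi.abs_conjVal_monomial_le_two_pow he (hlt hb) (hlt hc)) c
  have hint := h.abs_feldmanInt_mul_gamma_pow_le hi hm hv (b := 256)
    (hj.trans_eq (h.T_eq.trans (by norm_num)))
  have hreal : |(siegelCoeff k n x y L (m, ⟨j, m₂, m₃⟩, c) (v, i) : ℝ)| ≤ 2 ^ (717 * u) := by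
    rw [siegelCoeff, Int.cast_mul, abs_mul]
    calc _ ≤ (2 : ℝ) ^ ((256 + 160) * u) * (2 * 2 ^ (300 * u)) :=
          mul_le_mul hint hcoord (abs_nonneg _) (by positivity)
      _ = 2 ^ (716 * u + 1) := by ring
      _ ≤ 2 ^ (717 * u) := pow_le_pow_right₀ one_le_two (by linarith [h.one_le_u])
  exact_mod_cast hreal

lemma card_boxIdx : #(boxIdx L) = 2 ^ 75 := by
  simp only [boxIdx, card_product, card_range, h.L_eq]
  norm_num

lemma mul_card_equations_le (f : ℕ ↪ ℕ) :
    59 * #((range (64 * k)).map f ×ˢ orderIdx T ×ˢ (univ : Finset (Fin 2))) ≤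
      10 * #(boxIdx L ×ˢ range N) := by
  have horder : 7552 * #(orderIdx T) ≤ 10 * 2 ^ 103 := by
    refine Nat.le_of_mul_le_mul_left (c := 6) ?_ (by norm_num)
    calc 6 * (7552 * #(orderIdx T)) = 7552 * (6 * #(orderIdx T)) := by ring
      _ ≤ 6 * (10 * 2 ^ 103) := by
        rw [six_mul_card_orderIdx, h.T_eq]
        norm_num
  simp only [card_product, card_map, card_range, card_univ, Fintype.card_fin, h.card_boxIdx, h.N_eq]
  calc 59 * (64 * k * (#(orderIdx T) * 2)) = 7552 * #(orderIdx T) * k := by ring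
    _ ≤ 10 * 2 ^ 103 * k := by gcongr
    _ = 10 * (2 ^ 75 * (2 ^ 28 * k)) := by ring

lemma card_unknowns_le : #(boxIdx L ×ˢ range N) ≤ 2 ^ u := by
  rw [card_product, h.card_boxIdx, card_range, h.N_eq, ← mul_assoc, ← pow_add]
  exact h.two_pow_mul_k_le_two_pow (by norm_num)

end AuxParams

lemma classIdx_one (L : ℕ) (ρ : ℕ × ℕ × ℕ) : classIdx L 1 ρ = boxIdx L :=
  filter_true_of_mem fun v _ => by simp only [resid, Nat.mod_one]

theorem AuxParams.exists_initial_vanish {k n x y L N T U u : ℕ}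
    (h : AuxParams k n x y L N T U u) :
    ∃ p : ℕ × ℕ × ℕ → ℕ → ℤ, (∃ v ∈ boxIdx L, ∃ i < N, p v i ≠ 0) ∧
      (∀ v i, |p v i| ≤ 2 ^ (147 * u)) ∧ Vanish L U n x y (feldmanComb k N p) 1 L T := by
  have hU : L * (128 * k) = U := by
    rw [h.L_eq, h.U_eq, h.u_eq]
    ring
  let odd : ℕ ↪ ℕ := ⟨fun s => 2 * s + 1, fun a b hab => by simpa using hab⟩
  let equations := (range (64 * k)).map odd ×ˢ orderIdx T ×ˢ (univ : Finset (Fin 2))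
  have hmem : ∀ {m j m₂ m₃ c}, (m, (⟨j, m₂, m₃⟩ : Σ _ : ℕ, Σ _ : ℕ, ℕ), c) ∈ equations ↔
      (∃ s < 64 * k, 2 * s + 1 = m) ∧ j + m₂ + m₃ < T := by
    intro m j m₂ m₃ c
    simp only [equations, mem_product, mem_map, mem_range, mem_orderIdx, mem_univ, and_true]
    rfl
  have hne : equations.Nonempty := by
    have hk := h.k_pos
    have hT := h.T_eq
    exact ⟨(1, ⟨0, 0, 0⟩, 0), hmem.2 ⟨⟨0, by omega, rfl⟩, by omega⟩⟩
  have hcoeff : ∀ a ∈ equations, ∀ b ∈ boxIdx L ×ˢ range N,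
      |siegelCoeff k n x y L a b| ≤ 2 ^ (717 * u) := by
    rintro ⟨m, ⟨j, m₂, m₃⟩, c⟩ ha ⟨v, i⟩ hb
    obtain ⟨⟨s, hs, rfl⟩, hj⟩ := hmem.1 ha
    obtain ⟨hv, hi⟩ := mem_product.1 hb
    refine h.abs_siegelCoeff_le ?_ hj.le c hv (mem_range.1 hi)
    rw [← hU]
    exact Nat.mul_le_mul_left L (by omega)
  obtain ⟨t, ⟨⟨v, i⟩, hvi, ht0⟩, hsol, ht⟩ := exists_small_int_solution hne _ (B := 147 * u)
    (h.mul_card_equations_le odd) h.card_unknowns_le hcoeff (by omega)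
  refine ⟨Function.curry t, ⟨v, (mem_product.1 hvi).1, i, mem_range.1 (mem_product.1 hvi).2, ht0⟩,
    fun v i => ht (v, i), fun ρ m j m₂ m₃ hm hmU hj => ?_⟩
  obtain ⟨s, rfl⟩ := hm
  rw [← hU, Nat.mul_lt_mul_left h.L_pos] at hmU
  rw [classIdx_one]
  exact sum_auxTerm_eq_zero_of_siegel h.k_pos h.L_pos fun c =>
    hsol _ (hmem.2 ⟨⟨s, by omega, rfl⟩, hj⟩)

end InitialStep

section ExponentialExpansion

/-- The truncated exponential series `∑_{q < τ} (w X)^q / q!`. -/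
noncomputable def expPoly (τ : ℕ) (w : ℂ) : ℂ[X] :=
  ∑ q ∈ range τ, C (w ^ q / q.factorial) * X ^ q

lemma coeff_expPoly (τ : ℕ) (w : ℂ) (q : ℕ) :
    (expPoly τ w).coeff q = if q < τ then w ^ q / q.factorial else 0 := by
  rw [expPoly, finsetSum_coeff]
  simp [coeff_C_mul, coeff_X_pow]

lemma exists_exp_eq_expPoly_add (τ : ℕ) (w : ℂ) : ∃ F : ℂ → ℂ, AnalyticAt ℂ F 0 ∧
    ∀ s, Complex.exp (w * s) = (expPoly τ w).eval s + s ^ τ * F s := by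
  have hexp : AnalyticAt ℂ (fun s => Complex.exp (w * s)) 0 := by fun_prop
  obtain ⟨F, hF, hF'⟩ := hexp.exists_eq_sum_add_pow_mul τ
  refine ⟨F, hF, fun s => ?_⟩
  rw [hF' s, expPoly, eval_finsetSum, smul_eq_mul]
  congr 1
  refine sum_congr rfl fun q _ => ?_
  rw [iteratedDeriv_cexp_const_mul]
  simp
  ring

lemma le_analyticOrderAt_expTerm (τ : ℕ) (Q : ℂ[X]) (c w a : ℂ) :
    (τ : ℕ∞) ≤ analyticOrderAt (fun z => Q.eval z * c * Complex.exp (w * z) -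
      (C (c * Complex.exp (w * a)) * taylor a Q * expPoly τ w).eval (z - a)) a := by
  obtain ⟨F, hF, hF'⟩ := exists_exp_eq_expPoly_add τ w
  have hd : Differentiable ℂ (fun z => Q.eval z * c * Complex.exp (w * z) -
      (C (c * Complex.exp (w * a)) * taylor a Q * expPoly τ w).eval (z - a)) := by fun_prop
  rw [natCast_le_analyticOrderAt (hd.analyticAt a)]
  refine ⟨fun z => Q.eval z * c * Complex.exp (w * a) * F (z - a), ?_, .of_forall fun z => ?_⟩
  · have hfactor : Differentiable ℂ (fun z => Q.eval z * c * Complex.exp (w * a)) := by fun_prop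
    have hFa : AnalyticAt ℂ F ((fun z : ℂ => z - a) a) := by simpa using hF
    exact (hfactor.analyticAt a).mul (hFa.fun_comp (f := fun z : ℂ => z - a) (by fun_prop))
  · have hexp : Complex.exp (w * z) = Complex.exp (w * a) * Complex.exp (w * (z - a)) := by
      rw [← Complex.exp_add]
      ring_nf
    rw [hexp, hF' (z - a), eval_mul, eval_mul, eval_C, taylor_eval, sub_add_cancel, smul_eq_mul]
    ring

section

variable {ι : Type*} {s : Finset ι} {τ : ℕ} {Q : ι → ℂ[X]} {c w w₀ : ι → ℂ} {a : ℂ}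
  (h : ∀ d q, d + q < τ → ∑ v ∈ s, (hasseDeriv d (Q v)).eval a * c v * w₀ v ^ q *
    Complex.exp (w v * a) = 0)

include h

lemma X_pow_dvd_sum_expPoly : (X : ℂ[X]) ^ τ ∣
    ∑ v ∈ s, C (c v * Complex.exp (w v * a)) * taylor a (Q v) * expPoly τ (w₀ v) := by
  rw [X_pow_dvd_iff]
  intro e he
  have hle : ∀ x ∈ antidiagonal e, x.1 + x.2 < τ := fun x hx =>
    (HasAntidiagonal.mem_antidiagonal.1 hx).trans_lt he
  rw [finsetSum_coeff]
  calc ∑ v ∈ s, (C (c v * Complex.exp (w v * a)) * taylor a (Q v) * expPoly τ (w₀ v)).coeff e =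
        ∑ v ∈ s, ∑ x ∈ antidiagonal e, (1 / (x.2.factorial : ℂ)) *
          ((hasseDeriv x.1 (Q v)).eval a * c v * w₀ v ^ x.2 * Complex.exp (w v * a)) := by
        refine sum_congr rfl fun v _ => ?_
        rw [mul_assoc, coeff_C_mul, coeff_mul, mul_sum]
        refine sum_congr rfl fun x hx => ?_
        rw [coeff_expPoly, if_pos ((Nat.le_add_left _ _).trans_lt (hle x hx)), taylor_coeff]
        ring
    _ = 0 := by
        rw [sum_comm]
        refine sum_eq_zero fun x hx => ?_
        rw [← mul_sum, h _ _ (hle x hx), mul_zero]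

/-- The vanishing sums involve `w₀` in place of `w` where powers are taken, so the exponential sum
need not vanish at `a`, but its Taylor polynomial is small when `w₀` is close to `w`. -/
lemma le_analyticOrderAt_sum_expTerm :
    (τ : ℕ∞) ≤ analyticOrderAt (fun z => ∑ v ∈ s, (Q v).eval z * c v * Complex.exp (w v * z) -
      (∑ v ∈ s, C (c v * Complex.exp (w v * a)) * taylor a (Q v) *
        (expPoly τ (w v) - expPoly τ (w₀ v))).eval (z - a)) a := by
  have hsum := le_analyticOrderAt_sum (τ := τ) (a := a) s (fun v z => (Q v).eval z * c v *
    Complex.exp (w v * z) - (C (c v * Complex.exp (w v * a)) * taylor a (Q v) *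
      expPoly τ (w v)).eval (z - a)) fun v _ => le_analyticOrderAt_expTerm τ _ _ _ _
  refine (le_min hsum (le_analyticOrderAt_of_X_pow_dvd (X_pow_dvd_sum_expPoly h) a)).trans
    (le_analyticOrderAt_add.trans_eq ?_)
  congr 1
  funext z
  simp only [Pi.add_apply, mul_sub, sum_sub_distrib, eval_sub, eval_finsetSum]
  ring

end

lemma norm_pow_succ_sub_pow_succ_le {𝕜 : Type*} [NormedField 𝕜] {w w₀ : 𝕜} {W : ℝ}
    (hw : ‖w‖ ≤ W) (hw₀ : ‖w₀‖ ≤ W) (q : ℕ) :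
    ‖w ^ (q + 1) - w₀ ^ (q + 1)‖ ≤ (q + 1) * ‖w - w₀‖ * W ^ q := by
  have hW : 0 ≤ W := (norm_nonneg _).trans hw
  induction q with
  | zero => simp
  | succ q ih =>
    calc ‖w ^ (q + 1 + 1) - w₀ ^ (q + 1 + 1)‖ =
          ‖w * (w ^ (q + 1) - w₀ ^ (q + 1)) + (w - w₀) * w₀ ^ (q + 1)‖ := by ring_nf
      _ ≤ ‖w‖ * ‖w ^ (q + 1) - w₀ ^ (q + 1)‖ + ‖w - w₀‖ * ‖w₀‖ ^ (q + 1) := by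
        refine (norm_add_le _ _).trans_eq ?_
        rw [norm_mul, norm_mul, norm_pow]
      _ ≤ W * ((q + 1) * ‖w - w₀‖ * W ^ q) + ‖w - w₀‖ * W ^ (q + 1) := by gcongr
      _ = ((q + 1 : ℕ) + 1) * ‖w - w₀‖ * W ^ (q + 1) := by
        push_cast
        ring

lemma truncNorm_expPoly_sub_le (τ : ℕ) {r W : ℝ} (hr : 0 ≤ r) {w w₀ : ℂ} (hw : ‖w‖ ≤ W)
    (hw₀ : ‖w₀‖ ≤ W) :
    truncNorm τ r (expPoly τ w - expPoly τ w₀) ≤ ‖w - w₀‖ * r * Real.exp (W * r) := by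
  have hW : 0 ≤ W := (norm_nonneg _).trans hw
  rcases τ with _ | τ
  · rw [truncNorm, range_zero, sum_empty]
    positivity
  have hzero : (expPoly (τ + 1) w - expPoly (τ + 1) w₀).coeff 0 = 0 := by
    simp [coeff_expPoly]
  have hsucc : ∀ q ∈ range τ, ‖(expPoly (τ + 1) w - expPoly (τ + 1) w₀).coeff (q + 1)‖ *
      r ^ (q + 1) ≤ ‖w - w₀‖ * r * ((W * r) ^ q / q.factorial) := by
    intro q hq
    have hqτ : q + 1 < τ + 1 := Nat.succ_lt_succ (mem_range.1 hq)
    rw [coeff_sub, coeff_expPoly, coeff_expPoly, if_pos hqτ, if_pos hqτ, ← sub_div, norm_div,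
      Complex.norm_natCast, Nat.factorial_succ]
    calc ‖w ^ (q + 1) - w₀ ^ (q + 1)‖ / ((q + 1) * q.factorial : ℕ) * r ^ (q + 1) ≤
          ((q + 1) * ‖w - w₀‖ * W ^ q) / ((q + 1) * q.factorial : ℕ) * r ^ (q + 1) := by
          gcongr
          exact norm_pow_succ_sub_pow_succ_le hw hw₀ q
      _ = ‖w - w₀‖ * r * ((W * r) ^ q / q.factorial) := by
          have := q.factorial_ne_zero
          push_cast
          field_simp
          ring
  rw [truncNorm, sum_range_succ', hzero, norm_zero, zero_mul, add_zero]
  calc ∑ q ∈ range τ, ‖(expPoly (τ + 1) w - expPoly (τ + 1) w₀).coeff (q + 1)‖ * r ^ (q + 1) ≤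
        ∑ q ∈ range τ, ‖w - w₀‖ * r * ((W * r) ^ q / q.factorial) := sum_le_sum hsucc
    _ = ‖w - w₀‖ * r * ∑ q ∈ range τ, (W * r) ^ q / q.factorial := by rw [mul_sum]
    _ ≤ ‖w - w₀‖ * r * Real.exp (W * r) := by
      gcongr
      exact Real.sum_le_exp_of_nonneg (by positivity) τ

end ExponentialExpansion

section LinearForm

/-- The linear form in logarithms to be bounded from below. -/
noncomputable def linearForm (n x y : ℕ) : ℝ :=
  n * Real.log Real.goldenRatio - x * Real.log 2 - y * Real.log 3

/-- The part of `logWeight v / L` that involves `log 2` and `log 3` only, obtained by replacing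
`log φ` by `(x * log 2 + y * log 3) / n`. -/
noncomputable def weight₀ (L n x y : ℕ) (v : ℕ × ℕ × ℕ) : ℝ :=
  (gamma₂ n x v * Real.log 2 + gamma₃ n y v * Real.log 3) / (n * L)

lemma logWeight_div_sub_weight₀ {L n : ℕ} (hL : 0 < L) (hn : 0 < n) (x y : ℕ) (v : ℕ × ℕ × ℕ) :
    logWeight v / L - weight₀ L n x y v = expPhi v * linearForm n x y / (n * L) := by
  have : (n : ℝ) ≠ 0 := by positivity
  have : (L : ℝ) ≠ 0 := by positivity
  rw [weight₀, logWeight, gamma₂, gamma₃, linearForm]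
  push_cast
  field_simp
  ring

lemma eval_hasseDeriv_mul_weight₀_pow (L n x y : ℕ) (P : ℕ × ℕ × ℕ → ℂ[X]) (j m₂ m₃ d q : ℕ)
    (z : ℂ) (v : ℕ × ℕ × ℕ) :
    (hasseDeriv d (hasseDeriv j (P v))).eval z *
      ((gamma₂ n x v : ℂ) ^ m₂ * (gamma₃ n y v : ℂ) ^ m₃) * ((weight₀ L n x y v : ℝ) : ℂ) ^ q *
      Complex.exp ((logWeight v / L : ℝ) * z) =
    ∑ s ∈ range (q + 1), (((d + j).choose d : ℂ) * (Real.log 2 : ℂ) ^ s *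
        (Real.log 3 : ℂ) ^ (q - s) * (q.choose s : ℂ) / (n * L) ^ q) *
      auxTerm L n x y P (d + j) (m₂ + s) (m₃ + (q - s)) z v := by
  have hcomp := LinearMap.congr_fun (hasseDeriv_comp (R := ℂ) d j) (P v)
  simp only [LinearMap.comp_apply, LinearMap.smul_apply] at hcomp
  rw [hcomp, weight₀]
  push_cast
  rw [div_pow, add_pow, sum_div, mul_sum, sum_mul]
  refine sum_congr rfl fun s _ => ?_
  rw [auxTerm, nsmul_eq_mul, eval_mul, eval_natCast]
  push_cast
  ring

lemma sum_auxTerm_weight₀_eq_zero {L U n x y : ℕ} {P : ℕ × ℕ × ℕ → ℂ[X]} {M g T₀ : ℕ}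
    (hV : Vanish L U n x y P M g T₀) (ρ : ℕ × ℕ × ℕ) {m j m₂ m₃ d q : ℕ} (hm : Odd m)
    (hgm : g * m < U) (hT : (d + j) + (m₂ + m₃ + q) < T₀) :
    ∑ v ∈ classIdx L M ρ, (hasseDeriv d (hasseDeriv j (P v))).eval ((g * m : ℕ) : ℂ) *
      ((gamma₂ n x v : ℂ) ^ m₂ * (gamma₃ n y v : ℂ) ^ m₃) * ((weight₀ L n x y v : ℝ) : ℂ) ^ q *
      Complex.exp ((logWeight v / L : ℝ) * ((g * m : ℕ) : ℂ)) = 0 := by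
  rw [sum_congr rfl fun v _ => eval_hasseDeriv_mul_weight₀_pow L n x y P j m₂ m₃ d q _ v, sum_comm]
  refine sum_eq_zero fun s hs => ?_
  have := mem_range.1 hs
  rw [← mul_sum, hV ρ m _ _ _ hm hgm (by omega), mul_zero]

end LinearForm

section Estimates

lemma exp_le_two_pow {t : ℝ} {m : ℕ} (ht : t ≤ m * Real.log 2) : Real.exp t ≤ 2 ^ m := by
  rwa [← Real.le_log_iff_exp_le (by positivity), Real.log_pow]

lemma logWeight_div_nonneg (L : ℕ) (v : ℕ × ℕ × ℕ) : 0 ≤ logWeight v / L :=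
  div_nonneg (logWeight_nonneg v) L.cast_nonneg

namespace AuxParams

variable {k n x y L N T U u : ℕ} (h : AuxParams k n x y L N T U u)

include h

lemma U_eq_cast : (U : ℝ) = 64 * u := by exact_mod_cast h.U_eq

lemma one_le_U : (1 : ℝ) ≤ U := by
  have : (1 : ℝ) ≤ u := by exact_mod_cast h.one_le_u
  linarith [h.U_eq_cast]

lemma natDegree_feldmanComb_lt (p : ℕ × ℕ × ℕ → ℕ → ℤ) (v : ℕ × ℕ × ℕ) :
    (feldmanComb k N p v).natDegree < N := by
  have hN : 0 < N := by
    have := h.N_eq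
    have := h.k_pos
    omega
  rw [Nat.lt_iff_le_pred hN]
  refine natDegree_sum_le_of_forall_le _ _ fun i hi => (natDegree_C_mul_le _ _).trans ?_
  rw [natDegree_feldman]
  exact Nat.le_pred_of_lt (mem_range.1 hi)

lemma card_classIdx_le (M : ℕ) (ρ : ℕ × ℕ × ℕ) : (#(classIdx L M ρ) : ℝ) ≤ 2 ^ u := by
  have hcard : #(classIdx L M ρ) ≤ 2 ^ u :=
    calc #(classIdx L M ρ) ≤ #(boxIdx L) := card_filter_le _ _
      _ = 2 ^ 75 := h.card_boxIdx
      _ ≤ 2 ^ 75 * k := Nat.le_mul_of_pos_right _ h.k_pos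
      _ ≤ 2 ^ u := h.two_pow_mul_k_le_two_pow (by norm_num)
  exact_mod_cast hcard

lemma sum_classIdx_le (M : ℕ) (ρ : ℕ × ℕ × ℕ) {f : ℕ × ℕ × ℕ → ℝ} {B : ℝ} (hB : 0 ≤ B)
    (hf : ∀ v ∈ boxIdx L, f v ≤ B) : ∑ v ∈ classIdx L M ρ, f v ≤ 2 ^ u * B := by
  calc ∑ v ∈ classIdx L M ρ, f v ≤ #(classIdx L M ρ) • B :=
        sum_le_card_nsmul _ _ _ fun v hv => hf v (mem_filter.1 hv).1
    _ = #(classIdx L M ρ) * B := nsmul_eq_mul _ _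
    _ ≤ 2 ^ u * B := by
      gcongr
      exact h.card_classIdx_le M ρ

lemma norm_gamma_pow_le {v : ℕ × ℕ × ℕ} (hv : v ∈ boxIdx L) {m₂ m₃ : ℕ}
    (hm : m₂ + m₃ ≤ 2 ^ 31) :
    ‖(gamma₂ n x v : ℂ) ^ m₂ * (gamma₃ n y v : ℂ) ^ m₃‖ ≤ 2 ^ (128 * u) := by
  rw [norm_mul, norm_pow, norm_pow, Complex.norm_intCast, Complex.norm_intCast, ← abs_pow,
    ← abs_pow, ← abs_mul]
  exact (h.abs_gamma_pow_le hv m₂ m₃).trans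
    (pow_le_pow_right₀ one_le_two (h.four_mul_k_mul_le (hm.trans_eq (by norm_num))))

lemma logWeight_div_le {v : ℕ × ℕ × ℕ} (hv : v ∈ boxIdx L) :
    logWeight v / L ≤ 1.2 * Real.log 2 :=
  (div_le_iff₀ (by exact_mod_cast h.L_pos)).2 (logWeight_le hv)

lemma norm_exp_logWeight_le {v : ℕ × ℕ × ℕ} (hv : v ∈ boxIdx L) {z : ℂ} (hz : ‖z‖ ≤ 65 * U) :
    ‖Complex.exp ((logWeight v / L : ℝ) * z)‖ ≤
      2 ^ (2496 * u) * Real.exp (0.6 * Real.log 2 * z.re) := by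
  have := Real.log_pos one_lt_two
  set w := logWeight v / L
  have hw : |w - 0.6 * Real.log 2| ≤ 0.6 * Real.log 2 :=
    abs_le.2 ⟨by linarith [logWeight_div_nonneg L v], by linarith [h.logWeight_div_le hv]⟩
  have hshift : (w - 0.6 * Real.log 2) * z.re ≤ (2496 * u : ℕ) * Real.log 2 := by
    calc (w - 0.6 * Real.log 2) * z.re ≤ |w - 0.6 * Real.log 2| * |z.re| := by
          rw [← abs_mul]
          exact le_abs_self _
      _ ≤ 0.6 * Real.log 2 * (65 * U) := by
          gcongr
          exact (Complex.abs_re_le_norm z).trans hz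
      _ = (2496 * u : ℕ) * Real.log 2 := by
          rw [h.U_eq_cast]
          push_cast
          ring
  rw [Complex.norm_exp, Complex.re_ofReal_mul]
  calc Real.exp (w * z.re) =
        Real.exp ((w - 0.6 * Real.log 2) * z.re) * Real.exp (0.6 * Real.log 2 * z.re) := by
        rw [← Real.exp_add]
        ring_nf
    _ ≤ 2 ^ (2496 * u) * Real.exp (0.6 * Real.log 2 * z.re) := by
        gcongr
        exact exp_le_two_pow hshift

lemma abs_logWeight_div_sub_weight₀_le {v : ℕ × ℕ × ℕ} (hv : v ∈ boxIdx L) :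
    |logWeight v / L - weight₀ L n x y v| ≤ 3 * |linearForm n x y| := by
  have hn : (1 : ℝ) ≤ n := by exact_mod_cast h.n_pos
  have hL : (0 : ℝ) < L := by exact_mod_cast h.L_pos
  have he : |(expPhi v : ℝ)| ≤ 3 * L := by exact_mod_cast abs_expPhi_le hv
  rw [logWeight_div_sub_weight₀ h.L_pos h.n_pos, abs_div, abs_mul,
    abs_of_pos (a := (n * L : ℝ)) (by positivity), div_le_iff₀ (by positivity)]
  calc |(expPhi v : ℝ)| * |linearForm n x y| ≤ 3 * L * |linearForm n x y| := by gcongr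
    _ ≤ 3 * L * |linearForm n x y| * n := le_mul_of_one_le_right (by positivity) hn
    _ = 3 * |linearForm n x y| * (n * L) := by ring

section

variable {p : ℕ × ℕ × ℕ → ℕ → ℤ} (hp : ∀ v i, |p v i| ≤ 2 ^ (147 * u))

include hp

lemma truncNorm_feldmanComb_le (τ : ℕ) {R : ℝ} (hR : 0 ≤ R) (hRU : R ≤ 66 * U)
    (v : ℕ × ℕ × ℕ) : truncNorm τ R (feldmanComb k N p v) ≤ 2 ^ (308 * u) := by
  have hterm : ∀ i ∈ range N, truncNorm τ R (C (p v i : ℂ) * feldman k i) ≤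
      2 ^ (147 * u) * 2 ^ (160 * u) := by
    intro i hi
    rw [truncNorm_C_mul, Complex.norm_intCast]
    exact mul_le_mul (by exact_mod_cast hp v i)
      (h.truncNorm_feldman_le_two_pow τ hR hRU (mem_range.1 hi))
      (truncNorm_nonneg hR _) (by positivity)
  calc truncNorm τ R (feldmanComb k N p v) ≤
        ∑ i ∈ range N, truncNorm τ R (C (p v i : ℂ) * feldman k i) := truncNorm_sum_le hR _ _
    _ ≤ ∑ i ∈ range N, (2 : ℝ) ^ (147 * u) * 2 ^ (160 * u) := sum_le_sum hterm
    _ = N * (2 ^ (147 * u) * 2 ^ (160 * u)) := by rw [sum_const, card_range, nsmul_eq_mul]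
    _ ≤ 2 ^ u * (2 ^ (147 * u) * 2 ^ (160 * u)) := by
      gcongr
      exact_mod_cast h.N_le_two_pow
    _ = 2 ^ (308 * u) := by ring

lemma norm_auxTerm_le {v : ℕ × ℕ × ℕ} (hv : v ∈ boxIdx L) (j : ℕ) {m₂ m₃ : ℕ}
    (hm : m₂ + m₃ ≤ 2 ^ 31) {z : ℂ} (hz : ‖z‖ ≤ 65 * U) :
    ‖auxTerm L n x y (feldmanComb k N p) j m₂ m₃ z v‖ ≤
      2 ^ (2932 * u) * Real.exp (0.6 * Real.log 2 * z.re) := by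
  have heval : ‖(hasseDeriv j (feldmanComb k N p v)).eval z‖ ≤ 2 ^ (308 * u) :=
    (norm_eval_hasseDeriv_le (h.natDegree_feldmanComb_lt p v) z j).trans
      (h.truncNorm_feldmanComb_le hp N (by positivity) (by linarith [h.one_le_U]) v)
  rw [auxTerm, norm_mul, norm_mul]
  calc _ ≤ 2 ^ (308 * u) * 2 ^ (128 * u) *
        (2 ^ (2496 * u) * Real.exp (0.6 * Real.log 2 * z.re)) := by
        gcongr
        · exact h.norm_gamma_pow_le hv hm
        · exact h.norm_exp_logWeight_le hv hz
    _ = 2 ^ (2932 * u) * Real.exp (0.6 * Real.log 2 * z.re) := by ring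

lemma norm_sum_auxTerm_le_of_norm_le (M : ℕ) (ρ : ℕ × ℕ × ℕ) (j : ℕ) {m₂ m₃ : ℕ}
    (hm : m₂ + m₃ ≤ 2 ^ 31) {z : ℂ} (hz : ‖z‖ ≤ 65 * U) :
    ‖∑ v ∈ classIdx L M ρ, auxTerm L n x y (feldmanComb k N p) j m₂ m₃ z v‖ ≤
      2 ^ (2933 * u) * Real.exp (0.6 * Real.log 2 * z.re) := by
  calc _ ≤ 2 ^ u * (2 ^ (2932 * u) * Real.exp (0.6 * Real.log 2 * z.re)) :=
        (norm_sum_le _ _).trans <| h.sum_classIdx_le M ρ (by positivity) fun _ hv =>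
          h.norm_auxTerm_le hp hv j hm hz
    _ = 2 ^ (2933 * u) * Real.exp (0.6 * Real.log 2 * z.re) := by ring

end

end AuxParams

end Estimates

section NodePolynomials

/-- The polynomial that, up to order `τ`, is the Taylor polynomial at a node `a` of the sum of
`auxTerm` over `s`, provided that the derivatives of the sum vanish as in `Vanish`. -/
noncomputable def nodePoly (L n x y : ℕ) (P : ℕ × ℕ × ℕ → ℂ[X]) (s : Finset (ℕ × ℕ × ℕ))
    (τ j m₂ m₃ : ℕ) (a : ℂ) : ℂ[X] :=
  ∑ v ∈ s, C ((gamma₂ n x v : ℂ) ^ m₂ * (gamma₃ n y v : ℂ) ^ m₃ *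
    Complex.exp ((logWeight v / L : ℝ) * a)) * taylor a (hasseDeriv j (P v)) *
    (expPoly τ ((logWeight v / L : ℝ) : ℂ) - expPoly τ ((weight₀ L n x y v : ℝ) : ℂ))

lemma le_analyticOrderAt_sub_nodePoly {L U n x y : ℕ} {P : ℕ × ℕ × ℕ → ℂ[X]} {M g τ : ℕ}
    (hV : Vanish L U n x y P M g (2 * τ)) (ρ : ℕ × ℕ × ℕ) {j m₂ m₃ : ℕ} (hj : j + m₂ + m₃ < τ)
    {i : ℕ} (hi : g * (2 * i + 1) < U) :
    (τ : ℕ∞) ≤ analyticOrderAt (fun z => ∑ v ∈ classIdx L M ρ, auxTerm L n x y P j m₂ m₃ z v -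
      (nodePoly L n x y P (classIdx L M ρ) τ j m₂ m₃ (oddNode g i)).eval (z - oddNode g i))
      (oddNode g i) := by
  have hnode : oddNode g i = ((g * (2 * i + 1) : ℕ) : ℂ) := by
    rw [oddNode]
    push_cast
    ring
  rw [hnode]
  exact le_analyticOrderAt_sum_expTerm fun d q hdq =>
    sum_auxTerm_weight₀_eq_zero hV ρ (odd_two_mul_add_one i) hi (by omega)

namespace AuxParams

variable {k n x y L N T U u : ℕ} (h : AuxParams k n x y L N T U u)
  (hΛ : |linearForm n x y| ≤ (2 ^ (44800 * u))⁻¹)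

include h hΛ

lemma abs_logWeight_div_sub_weight₀_le_inv {v : ℕ × ℕ × ℕ} (hv : v ∈ boxIdx L) :
    |logWeight v / L - weight₀ L n x y v| ≤ 3 * (2 ^ (44800 * u))⁻¹ :=
  (h.abs_logWeight_div_sub_weight₀_le hv).trans (by gcongr)

lemma abs_weight₀_le_two {v : ℕ × ℕ × ℕ} (hv : v ∈ boxIdx L) : |weight₀ L n x y v| ≤ 2 := by
  have hdiff := abs_le.1 (h.abs_logWeight_div_sub_weight₀_le_inv hΛ hv)
  have hsmall : ((2 : ℝ) ^ (44800 * u))⁻¹ ≤ (2 ^ 4)⁻¹ := by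
    gcongr
    · norm_num
    · linarith [h.one_le_u]
  have := logWeight_div_nonneg L v
  have := h.logWeight_div_le hv
  have := Real.log_two_lt_d9
  exact abs_le.2 ⟨by linarith, by linarith⟩

lemma truncNorm_expPoly_logWeight_sub_le {v : ℕ × ℕ × ℕ} (hv : v ∈ boxIdx L) (τ : ℕ) {G : ℝ}
    (hG0 : 0 ≤ G) (hG : G ≤ u) :
    truncNorm τ G (expPoly τ ((logWeight v / L : ℝ) : ℂ) -
      expPoly τ ((weight₀ L n x y v : ℝ) : ℂ)) ≤ 2 ^ (6 * u) * (2 ^ (44800 * u))⁻¹ := by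
  have hlog := Real.log_two_gt_d9
  have hw : ‖((logWeight v / L : ℝ) : ℂ)‖ ≤ 2 := by
    rw [Complex.norm_real, Real.norm_of_nonneg (logWeight_div_nonneg L v)]
    linarith [h.logWeight_div_le hv, Real.log_two_lt_d9]
  have hw₀ : ‖((weight₀ L n x y v : ℝ) : ℂ)‖ ≤ 2 := by
    rw [Complex.norm_real]
    exact h.abs_weight₀_le_two hΛ hv
  have hexp : Real.exp (2 * G) ≤ 2 ^ (3 * u) := exp_le_two_pow <| by
    push_cast
    nlinarith
  have hu : (3 : ℝ) * u ≤ 2 ^ (3 * u) := by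
    exact_mod_cast (Nat.lt_two_pow_self (n := 3 * u)).le
  refine (truncNorm_expPoly_sub_le τ hG0 hw hw₀).trans ?_
  rw [← Complex.ofReal_sub, Complex.norm_real]
  calc |logWeight v / L - weight₀ L n x y v| * G * Real.exp (2 * G) ≤
        3 * (2 ^ (44800 * u))⁻¹ * u * 2 ^ (3 * u) := by
        gcongr
        exact h.abs_logWeight_div_sub_weight₀_le_inv hΛ hv
    _ = 3 * u * 2 ^ (3 * u) * (2 ^ (44800 * u))⁻¹ := by ring
    _ ≤ 2 ^ (3 * u) * 2 ^ (3 * u) * (2 ^ (44800 * u))⁻¹ := by gcongr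
    _ = 2 ^ (6 * u) * (2 ^ (44800 * u))⁻¹ := by ring

omit hΛ in
lemma norm_exp_logWeight_le_two_pow {v : ℕ × ℕ × ℕ} (hv : v ∈ boxIdx L) {a : ℂ} (ha : ‖a‖ ≤ U) :
    ‖Complex.exp ((logWeight v / L : ℝ) * a)‖ ≤ 2 ^ (77 * u) := by
  rw [Complex.norm_exp, Complex.re_ofReal_mul]
  refine exp_le_two_pow ?_
  have := Real.log_pos one_lt_two
  calc logWeight v / L * a.re ≤ logWeight v / L * U := by
        gcongr
        · exact logWeight_div_nonneg L v
        · exact (Complex.re_le_norm a).trans ha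
    _ ≤ 1.2 * Real.log 2 * U := by
        gcongr
        exact h.logWeight_div_le hv
    _ = 76.8 * u * Real.log 2 := by
        rw [h.U_eq_cast]
        ring
    _ ≤ (77 * u : ℕ) * Real.log 2 := by
        push_cast
        gcongr
        norm_num

lemma truncNorm_nodePoly_le {p : ℕ × ℕ × ℕ → ℕ → ℤ} (hp : ∀ v i, |p v i| ≤ 2 ^ (147 * u))
    (M τ : ℕ) (ρ : ℕ × ℕ × ℕ) (j : ℕ) {m₂ m₃ : ℕ} (hm : m₂ + m₃ ≤ 2 ^ 31) {G : ℝ} (hG0 : 0 ≤ G)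
    (hG : G ≤ u) {a : ℂ} (ha : ‖a‖ ≤ U) :
    truncNorm τ G (nodePoly L n x y (feldmanComb k N p) (classIdx L M ρ) τ j m₂ m₃ a) ≤
      (2 ^ (44280 * u))⁻¹ := by
  have htaylor : ∀ v, truncNorm τ G (taylor a (hasseDeriv j (feldmanComb k N p v))) ≤
      2 ^ (308 * u) := fun v =>
    (truncNorm_taylor_hasseDeriv_le (h.natDegree_feldmanComb_lt p v) τ hG0 a j).trans
      (h.truncNorm_feldmanComb_le hp N (by positivity)
        (by linarith [h.one_le_U, h.U_eq_cast]) v)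
  have hterm : ∀ v ∈ boxIdx L, truncNorm τ G (C ((gamma₂ n x v : ℂ) ^ m₂ *
      (gamma₃ n y v : ℂ) ^ m₃ * Complex.exp ((logWeight v / L : ℝ) * a)) *
      taylor a (hasseDeriv j (feldmanComb k N p v)) *
      (expPoly τ ((logWeight v / L : ℝ) : ℂ) - expPoly τ ((weight₀ L n x y v : ℝ) : ℂ))) ≤
      2 ^ (519 * u) * (2 ^ (44800 * u))⁻¹ := by
    intro v hv
    refine (truncNorm_mul_le hG0 _ _).trans ?_
    rw [truncNorm_C_mul, norm_mul]
    calc _ ≤ 2 ^ (128 * u) * 2 ^ (77 * u) * 2 ^ (308 * u) *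
          (2 ^ (6 * u) * (2 ^ (44800 * u) : ℝ)⁻¹) := by
          gcongr
          · exact truncNorm_nonneg hG0 _
          · exact truncNorm_nonneg hG0 _
          · exact h.norm_gamma_pow_le hv hm
          · exact h.norm_exp_logWeight_le_two_pow hv ha
          · exact htaylor v
          · exact h.truncNorm_expPoly_logWeight_sub_le hΛ hv τ hG0 hG
      _ = 2 ^ (519 * u) * (2 ^ (44800 * u) : ℝ)⁻¹ := by ring
  calc _ ≤ _ := truncNorm_sum_le hG0 _ _
    _ ≤ 2 ^ u * (2 ^ (519 * u) * (2 ^ (44800 * u))⁻¹) :=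
      h.sum_classIdx_le M ρ (by positivity) hterm
    _ = (2 ^ (44280 * u))⁻¹ := by
      rw [show 44800 * u = 44280 * u + 520 * u by ring, pow_add]
      field_simp
      ring

end AuxParams

end NodePolynomials

section Extrapolation

lemma mul_pow_le_inv_two_pow {u : ℕ} {ν : ℝ} (hν : ν ≤ 2 ^ (32 * u)) :
    ν * (2 ^ (44280 * u) : ℝ)⁻¹ * (16 * (129 + 1)) ^ (2048 * u) ≤ (2 ^ (19672 * u))⁻¹ := by
  calc ν * (2 ^ (44280 * u) : ℝ)⁻¹ * (16 * (129 + 1)) ^ (2048 * u) ≤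
        2 ^ (32 * u) * (2 ^ (44280 * u))⁻¹ * (2 ^ 12) ^ (2048 * u) := by
        gcongr
        norm_num
    _ = (2 ^ (19672 * u))⁻¹ := by
        rw [← pow_mul, show 44280 * u = 32 * u + 12 * (2048 * u) + 19672 * u by ring, pow_add,
          pow_add]
        field_simp

lemma extrapolation_bound {u : ℕ} (hu : 1 ≤ u) {δ E : ℝ} (hδ : δ ≤ (2 ^ (19672 * u))⁻¹)
    (hE₀ : 0 ≤ E) (hE : E ≤ 2 ^ (39 * u)) :
    δ + E * (2 ^ (2933 * u) + δ * 2 ^ (2496 * u)) / (129 - 1) ^ (2048 * u) ≤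
      (2 ^ (11362 * u))⁻¹ := by
  have htwo : (2 : ℝ) ≤ 2 ^ u := le_self_pow₀ one_le_two (by omega)
  have hδ' : δ * 2 ^ (2496 * u) ≤ 2 ^ (2933 * u) := by
    calc δ * 2 ^ (2496 * u) ≤ (2 ^ (19672 * u))⁻¹ * 2 ^ (2496 * u) := by gcongr
      _ ≤ 1 * 2 ^ (2933 * u) := by
        gcongr
        · exact inv_le_one_of_one_le₀ (one_le_pow₀ one_le_two)
        · norm_num
        · norm_num
      _ = 2 ^ (2933 * u) := one_mul _
  have hquot : E * (2 ^ (2933 * u) + δ * 2 ^ (2496 * u)) / (129 - 1) ^ (2048 * u) ≤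
      (2 ^ (11363 * u))⁻¹ := by
    calc E * (2 ^ (2933 * u) + δ * 2 ^ (2496 * u)) / (129 - 1) ^ (2048 * u) ≤
          E * (2 * 2 ^ (2933 * u)) / (129 - 1) ^ (2048 * u) := by
          rw [two_mul]
          gcongr
      _ ≤ 2 ^ (39 * u) * (2 ^ u * 2 ^ (2933 * u)) / (2 ^ 7) ^ (2048 * u) := by
          rw [show (129 - 1 : ℝ) = 2 ^ 7 by norm_num]
          gcongr
      _ = (2 ^ (11363 * u))⁻¹ := by
          rw [← pow_mul, show 7 * (2048 * u) = 39 * u + u + 2933 * u + 11363 * u by ring, pow_add,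
            pow_add, pow_add]
          field_simp
  calc δ + E * (2 ^ (2933 * u) + δ * 2 ^ (2496 * u)) / (129 - 1) ^ (2048 * u) ≤
        (2 ^ (11363 * u))⁻¹ + (2 ^ (11363 * u))⁻¹ := by
        refine add_le_add (hδ.trans ?_) hquot
        gcongr
        · norm_num
        · norm_num
    _ = 2 * (2 ^ (11363 * u))⁻¹ := by ring
    _ ≤ 2 ^ u * (2 ^ (11363 * u))⁻¹ := by gcongr
    _ = (2 ^ (11362 * u))⁻¹ := by
        rw [show 11363 * u = u + 11362 * u by ring, pow_add]
        field_simp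

namespace AuxParams

variable {k n x y L N T U u : ℕ} (h : AuxParams k n x y L N T U u) {M g : ℕ}
  (hMg : M * (2 * g) = L)

include h hMg

lemma two_mul_g_pos : 0 < 2 * g :=
  Nat.pos_of_mul_pos_left (hMg ▸ h.L_pos)

lemma two_mul_g_le : 2 * g ≤ L :=
  Nat.le_of_dvd h.L_pos (hMg ▸ Nat.dvd_mul_left _ _)

lemma two_mul_g_mul_eq : 2 * g * (64 * k * M) = 32 * u := by
  calc 2 * g * (64 * k * M) = 64 * k * (M * (2 * g)) := by ring
    _ = 32 * u := by
      rw [hMg, h.L_eq, h.u_eq]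
      ring

lemma two_mul_g_mul_odd_lt {i : ℕ} (hi : i < 64 * k * M) : 2 * g * (2 * i + 1) < U := by
  calc 2 * g * (2 * i + 1) < 2 * g * (2 * (64 * k * M)) :=
        Nat.mul_lt_mul_of_pos_left (by omega) (h.two_mul_g_pos hMg)
    _ = 2 * (2 * g * (64 * k * M)) := by ring
    _ = U := by
      rw [h.two_mul_g_mul_eq hMg, h.U_eq]
      ring

lemma g_mul_nodes_eq : ((2 * g : ℕ) : ℝ) * (64 * k * M : ℕ) = 32 * u := by
  exact_mod_cast h.two_mul_g_mul_eq hMg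

lemma nodes_pos : 0 < 64 * k * M :=
  Nat.mul_pos (Nat.mul_pos (by norm_num) h.k_pos) (Nat.pos_of_mul_pos_right (hMg ▸ h.L_pos))

lemma nodes_le_two_pow : ((64 * k * M : ℕ) : ℝ) ≤ 2 ^ (32 * u) := by
  have hle : 64 * k * M ≤ 32 * u :=
    (Nat.le_mul_of_pos_left _ (h.two_mul_g_pos hMg)).trans_eq (h.two_mul_g_mul_eq hMg)
  exact_mod_cast hle.trans Nat.lt_two_pow_self.le

lemma truncNorm_nodePoly_oddNode_le {p : ℕ × ℕ × ℕ → ℕ → ℤ}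
    (hp : ∀ v i, |p v i| ≤ 2 ^ (147 * u)) (hΛ : |linearForm n x y| ≤ (2 ^ (44800 * u))⁻¹) (τ : ℕ)
    (ρ : ℕ × ℕ × ℕ) (j : ℕ) {m₂ m₃ : ℕ} (hm : m₂ + m₃ ≤ 2 ^ 31) {i : ℕ}
    (hi : i < 64 * k * M) :
    truncNorm τ ((2 * g : ℕ) : ℝ) (nodePoly L n x y (feldmanComb k N p) (classIdx L M ρ) τ j m₂ m₃
      (oddNode (2 * g : ℕ) i)) ≤ (2 ^ (44280 * u))⁻¹ := by
  have hgu : 2 * g ≤ u := by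
    have := h.two_mul_g_le hMg
    have := h.L_eq
    have := h.u_eq
    have := h.k_pos
    omega
  refine h.truncNorm_nodePoly_le hΛ hp M τ ρ j hm (by positivity) (by exact_mod_cast hgu) ?_
  rw [oddNode, Complex.norm_real, Real.norm_of_nonneg (by positivity)]
  exact_mod_cast (h.two_mul_g_mul_odd_lt hMg hi).le

omit hMg in
lemma norm_le_of_norm_sub_eq {z : ℂ} (hz : ‖z - (32 * u : ℝ)‖ = 129 * (32 * u)) :
    ‖z‖ ≤ 65 * U := by
  have hz' := norm_le_norm_sub_add z ((32 * u : ℝ) : ℂ)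
  rw [hz, Complex.norm_real, Real.norm_of_nonneg (by positivity)] at hz'
  linarith [h.U_eq_cast]

omit hMg in
lemma exp_mul_le_two_pow {t : ℝ} (ht : t ≤ U) :
    Real.exp (0.6 * Real.log 2 * t) ≤ 2 ^ (39 * u) := by
  refine exp_le_two_pow ?_
  have := Real.log_pos one_lt_two
  calc 0.6 * Real.log 2 * t ≤ 0.6 * Real.log 2 * U := by gcongr
    _ = 38.4 * u * Real.log 2 := by
      rw [h.U_eq_cast]
      ring
    _ ≤ (39 * u : ℕ) * Real.log 2 := by
      push_cast
      gcongr
      norm_num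

theorem norm_sum_auxTerm_le {p : ℕ × ℕ × ℕ → ℕ → ℤ} (hp : ∀ v i, |p v i| ≤ 2 ^ (147 * u))
    (hΛ : |linearForm n x y| ≤ (2 ^ (44800 * u))⁻¹)
    (hV : Vanish L U n x y (feldmanComb k N p) M (2 * g) (2 * (128 * g))) (ρ : ℕ × ℕ × ℕ)
    {j m₂ m₃ : ℕ} (hj : j + m₂ + m₃ < 128 * g) {t : ℝ} (ht0 : 0 ≤ t) (htU : t ≤ U) :
    ‖∑ v ∈ classIdx L M ρ, auxTerm L n x y (feldmanComb k N p) j m₂ m₃ (t : ℂ) v‖ ≤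
      (2 ^ (11362 * u))⁻¹ := by
  have hm : m₂ + m₃ ≤ 2 ^ 31 := by
    have := h.two_mul_g_le hMg
    have := h.L_eq
    omega
  have hdiff : Differentiable ℂ fun z =>
      ∑ v ∈ classIdx L M ρ, auxTerm L n x y (feldmanComb k N p) j m₂ m₃ z v := by
    unfold auxTerm
    fun_prop
  have hmain := norm_le_of_almost_vanishing (h.nodes_pos hMg)
    (Nat.cast_pos.2 (h.two_mul_g_pos hMg)) hdiff
    (fun i hi => le_analyticOrderAt_sub_nodePoly hV ρ hj (h.two_mul_g_mul_odd_lt hMg hi))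
    (fun i hi => h.truncNorm_nodePoly_oddNode_le hMg hp hΛ _ ρ j hm hi)
    (ρ := 129) (by norm_num) (κ := 0.6 * Real.log 2) (by positivity)
    (fun z hz => h.norm_sum_auxTerm_le_of_norm_le hp M ρ j hm
      (h.norm_le_of_norm_sub_eq (by rwa [h.g_mul_nodes_eq hMg] at hz)))
    ht0 (by linarith [h.U_eq_cast, h.g_mul_nodes_eq hMg])
  have hexp : Real.exp (0.6 * Real.log 2 * ((129 + 1) * (32 * u))) = 2 ^ (2496 * u) := by
    rw [← Real.rpow_natCast, Real.rpow_def_of_pos two_pos]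
    push_cast
    ring_nf
  have horder : 128 * g * (64 * k * M) = 2048 * u := by linarith [h.two_mul_g_mul_eq hMg]
  rw [horder, h.g_mul_nodes_eq hMg, hexp] at hmain
  exact hmain.trans <| extrapolation_bound h.one_le_u
    (mul_pow_le_inv_two_pow (h.nodes_le_two_pow hMg)) (Real.exp_nonneg _)
    (h.exp_mul_le_two_pow htU)

end AuxParams

end Extrapolation

section ParityClasses

/-- The parity of an integer, as an index of the Kummer basis `√a ^ 0, √a ^ 1`. -/
def par (z : ℤ) : Fin 2 := if Even z then 0 else 1

lemma par_eq_par_iff {z w : ℤ} : par z = par w ↔ z % 2 = w % 2 := by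
  unfold par
  split_ifs with hz hw hw <;> simp only [Int.even_iff] at hz hw <;> simp <;> omega

lemma two_mul_ediv_two_add_par {m : ℕ} (hm : Odd m) (z : ℤ) :
    2 * (z * m / 2) + (par z : ℕ) = z * m := by
  unfold par
  split_ifs with hz
  · simpa using Int.two_mul_ediv_two_of_even (hz.mul_right (m : ℤ))
  · have hodd : Odd (z * m) := (Int.not_even_iff_odd.1 hz).mul (by exact_mod_cast hm)
    simpa using Int.two_mul_ediv_two_add_one_of_odd hodd

/-- The entrywise quotient of an exponent vector by `M`, complementary to `resid M`. -/
def quo (M : ℕ) (v : ℕ × ℕ × ℕ) : ℕ × ℕ × ℕ := (v.1 / M, v.2.1 / M, v.2.2 / M)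

/-- The parities of the exponents of `φ`, `2` and `3` in `exp (logWeight μ)`. -/
def parTriple (μ : ℕ × ℕ × ℕ) : Fin 2 × Fin 2 × Fin 2 := (par (expPhi μ), par μ.2.1, par μ.2.2)

lemma mod_two_mul_eq_iff {M a b : ℕ} :
    a % (2 * M) = b % (2 * M) ↔ a % M = b % M ∧ a / M % 2 = b / M % 2 := by
  constructor
  · intro h
    have hmod : a % M = b % M := by
      rw [← Nat.mod_mul_left_mod a 2 M, h, Nat.mod_mul_left_mod]
    refine ⟨hmod, ?_⟩
    rw [mul_comm, Nat.mod_mul, Nat.mod_mul, hmod] at h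
    rcases M.eq_zero_or_pos with rfl | hM
    · simp
    · exact Nat.eq_of_mul_eq_mul_left hM (by omega)
  · rintro ⟨hmod, hdiv⟩
    rw [mul_comm, Nat.mod_mul, Nat.mod_mul, hmod, hdiv]

lemma mem_classIdx_two_mul {L M : ℕ} {v ρ : ℕ × ℕ × ℕ} : v ∈ classIdx L (2 * M) ρ ↔
    v ∈ classIdx L M ρ ∧ parTriple (quo M v) = parTriple (quo M ρ) := by
  simp only [classIdx, mem_filter, resid, parTriple, quo, expPhi, Prod.mk.injEq, par_eq_par_iff,
    mod_two_mul_eq_iff, and_assoc, and_congr_right_iff]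
  omega

lemma logWeight_eq_resid_add_quo (M : ℕ) (v : ℕ × ℕ × ℕ) :
    logWeight v = logWeight (resid M v) + M * logWeight (quo M v) := by
  have hdiv : ∀ a : ℕ, (a : ℝ) = (a % M : ℕ) + M * (a / M : ℕ) := fun a => by
    exact_mod_cast (Nat.mod_add_div a M).symm
  simp only [logWeight, expPhi, resid, quo, Int.cast_sub, Int.cast_mul, Int.cast_natCast,
    Int.cast_ofNat]
  linear_combination (hdiv v.1 - hdiv v.2.1 - 2 * hdiv v.2.2) * Real.log Real.goldenRatio +
    hdiv v.2.1 * Real.log 2 + hdiv v.2.2 * Real.log 3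

lemma logWeight_div_mul {L M g : ℕ} (hL : L ≠ 0) (hMg : M * (2 * g) = L) (m : ℕ)
    (v : ℕ × ℕ × ℕ) : logWeight v / L * (g * m : ℕ) =
      logWeight (resid M v) * m / (2 * M) + logWeight (quo M v) * m / 2 := by
  subst hMg
  have hM : (M : ℝ) ≠ 0 := Nat.cast_ne_zero.2 (left_ne_zero_of_mul hL)
  have hg : (g : ℝ) ≠ 0 := Nat.cast_ne_zero.2 (right_ne_zero_of_mul (right_ne_zero_of_mul hL))
  rw [logWeight_eq_resid_add_quo M v]
  push_cast
  field_simp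

lemma quo_mem_boxIdx {L M g : ℕ} (hMg : M * g = L) {v : ℕ × ℕ × ℕ} (hv : v ∈ boxIdx L) :
    quo M v ∈ boxIdx g := by
  obtain ⟨ha, hb, hc⟩ := mem_boxIdx.1 hv
  have hlt : ∀ {a}, a < L → a / M < g := fun ha => Nat.div_lt_of_lt_mul (by rwa [hMg])
  exact mem_boxIdx.2 ⟨hlt ha, hlt hb, hlt hc⟩

end ParityClasses

section KummerCoefficients

/-- The element of `ℤ[φ]` that remains of `exp (logWeight μ * m / 2)`, for odd `m`, after splitting
off the factors `√φ`, `√2`, `√3` of odd exponent. -/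
noncomputable def halfMonomial (m : ℕ) (μ : ℕ × ℕ × ℕ) : Zphi :=
  Zphi.monomial (expPhi μ * m / 2) (μ.2.1 * m / 2) (μ.2.2 * m / 2)

lemma exp_half_logWeight {m : ℕ} (hm : Odd m) (μ : ℕ × ℕ × ℕ) :
    Real.exp (logWeight μ * m / 2) = Zphi.val (halfMonomial m μ) *
      (√Real.goldenRatio ^ ((parTriple μ).1 : ℕ) * √2 ^ ((parTriple μ).2.1 : ℕ) *
        √3 ^ ((parTriple μ).2.2 : ℕ)) := by
  have hsqrt : ∀ {a : ℝ} (j : ℕ), 0 < a → √a ^ j = Real.exp (j * (Real.log a / 2)) := by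
    intro a j ha
    rw [Real.exp_nat_mul, ← Real.log_sqrt ha.le, Real.exp_log (Real.sqrt_pos.2 ha)]
  rw [hsqrt _ Real.goldenRatio_pos, hsqrt _ two_pos, hsqrt _ three_pos, halfMonomial,
    Zphi.val_monomial, ← Real.exp_add, ← Real.exp_add, ← Real.exp_add, logWeight]
  have hφ : (expPhi μ : ℝ) * m = 2 * ((expPhi μ * m / 2 : ℤ) : ℝ) + (par (expPhi μ) : ℕ) := by
    exact_mod_cast (two_mul_ediv_two_add_par hm (expPhi μ)).symm
  have hnat : ∀ b : ℕ, (b : ℝ) * m = 2 * ((b * m / 2 : ℕ) : ℝ) + (par b : ℕ) := fun b => by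
    exact_mod_cast (two_mul_ediv_two_add_par hm b).symm
  simp only [parTriple]
  congr 1
  linear_combination (Real.log Real.goldenRatio / 2) * hφ + (Real.log 2 / 2) * hnat μ.2.1 +
    (Real.log 3 / 2) * hnat μ.2.2

/-- The coefficient in `ℤ[φ]` of the Kummer basis element with exponents `t` in
`∑ v ∈ s, w v * exp (logWeight (quo M v) * m / 2)`. -/
noncomputable def kummerCoeff (M m : ℕ) (s : Finset (ℕ × ℕ × ℕ)) (w : ℕ × ℕ × ℕ → ℤ)
    (t : Fin 2 × Fin 2 × Fin 2) : Zphi :=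
  ∑ v ∈ s with parTriple (quo M v) = t, w v • halfMonomial m (quo M v)

lemma val_kummerCoeff_mul {m : ℕ} (hm : Odd m) (M : ℕ) (s : Finset (ℕ × ℕ × ℕ))
    (w : ℕ × ℕ × ℕ → ℤ) (t : Fin 2 × Fin 2 × Fin 2) : Zphi.val (kummerCoeff M m s w t) *
      (√Real.goldenRatio ^ (t.1 : ℕ) * √2 ^ (t.2.1 : ℕ) * √3 ^ (t.2.2 : ℕ)) =
      ∑ v ∈ s with parTriple (quo M v) = t, w v * Real.exp (logWeight (quo M v) * m / 2) := by
  rw [kummerCoeff, map_sum, sum_mul]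
  refine sum_congr rfl fun v hv => ?_
  rw [exp_half_logWeight hm, (mem_filter.1 hv).2, map_zsmul, zsmul_eq_mul]
  ring

lemma sum_val_kummerCoeff {m : ℕ} (hm : Odd m) (M : ℕ) (s : Finset (ℕ × ℕ × ℕ))
    (w : ℕ × ℕ × ℕ → ℤ) : ∑ i, ∑ j, ∑ l, Zphi.val (kummerCoeff M m s w (i, j, l)) *
      (√Real.goldenRatio ^ (i : ℕ) * √2 ^ (j : ℕ) * √3 ^ (l : ℕ)) =
      ∑ v ∈ s, w v * Real.exp (logWeight (quo M v) * m / 2) := by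
  rw [← sum_fiberwise s fun v => parTriple (quo M v)]
  simp only [← val_kummerCoeff_mul hm, Fintype.sum_prod_type]

lemma abs_map_kummerCoeff_le (f : Zphi →+* ℝ) {M m : ℕ} {s : Finset (ℕ × ℕ × ℕ)}
    {w : ℕ × ℕ × ℕ → ℤ} {B₁ B₂ : ℝ} (hB₁ : 0 ≤ B₁) (hB₂ : 0 ≤ B₂)
    (hw : ∀ v ∈ s, |(w v : ℝ)| ≤ B₁) (hf : ∀ v ∈ s, |f (halfMonomial m (quo M v))| ≤ B₂)
    (t : Fin 2 × Fin 2 × Fin 2) : |f (kummerCoeff M m s w t)| ≤ #s * (B₁ * B₂) := by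
  rw [kummerCoeff, map_sum]
  calc |∑ v ∈ s with parTriple (quo M v) = t, f (w v • halfMonomial m (quo M v))| ≤
        #{v ∈ s | parTriple (quo M v) = t} • (B₁ * B₂) := by
        refine (abs_sum_le_sum_abs _ _).trans (sum_le_card_nsmul _ _ _ fun v hv => ?_)
        obtain ⟨hvs, -⟩ := mem_filter.1 hv
        rw [map_zsmul, zsmul_eq_mul, abs_mul]
        exact mul_le_mul (hw v hvs) (hf v hvs) (abs_nonneg _) hB₁
    _ ≤ #s * (B₁ * B₂) := by
        rw [nsmul_eq_mul]
        gcongr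
        exact filter_subset _ _

end KummerCoefficients

section Halving

namespace AuxParams

variable {k n x y L N T U u : ℕ} (h : AuxParams k n x y L N T U u)
  {M g : ℕ} (hMg : M * (2 * g) = L)

include h

section

variable {m : ℕ} {μ : ℕ × ℕ × ℕ} (hgm : g * m ≤ U) (hμ : μ ∈ boxIdx (2 * g))

include hgm hμ

lemma half_exponents_le : |expPhi μ * m / 2| ≤ 192 * u ∧
    μ.2.1 * m / 2 ≤ 64 * u ∧ μ.2.2 * m / 2 ≤ 64 * u := by
  obtain ⟨-, hb, hc⟩ := mem_boxIdx.1 hμ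
  have hnat : ∀ {b}, b < 2 * g → b * m / 2 ≤ 64 * u := fun {b} hb => by
    have hbm : b * m ≤ 2 * (g * m) := by
      rw [← mul_assoc]
      gcongr
    have := h.U_eq
    omega
  have hφ : |expPhi μ * m| ≤ 384 * u := by
    calc |expPhi μ * m| = |expPhi μ| * m := by rw [abs_mul, Nat.abs_cast]
      _ ≤ 3 * (2 * g : ℕ) * m := by
        gcongr
        exact abs_expPhi_le hμ
      _ = 6 * (g * m : ℕ) := by
        push_cast
        ring
      _ ≤ 6 * (64 * u : ℕ) := by exact_mod_cast Nat.mul_le_mul_left 6 (hgm.trans_eq h.U_eq)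
      _ = 384 * u := by
        push_cast
        ring
  refine ⟨?_, hnat hb, hnat hc⟩
  rw [abs_le] at hφ ⊢
  omega

lemma abs_val_halfMonomial_le : |Zphi.val (halfMonomial m μ)| ≤ 2 ^ (300 * u) :=
  have ⟨he, hq, hr⟩ := h.half_exponents_le hgm hμ
  Zphi.abs_val_monomial_le_two_pow he hq hr

lemma abs_conjVal_halfMonomial_le : |Zphi.conjVal (halfMonomial m μ)| ≤ 2 ^ (300 * u) :=
  have ⟨he, hq, hr⟩ := h.half_exponents_le hgm hμ
  Zphi.abs_conjVal_monomial_le_two_pow he hq hr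

end

include hMg

lemma kummerCoeff_eq_zero {ρ : ℕ × ℕ × ℕ} {m : ℕ} (hm : Odd m) (hgm : g * m ≤ U)
    {w : ℕ × ℕ × ℕ → ℤ} (hw : ∀ v ∈ classIdx L M ρ, |(w v : ℝ)| ≤ 2 ^ (436 * u))
    (hS : |∑ v ∈ classIdx L M ρ, w v * Real.exp (logWeight (quo M v) * m / 2)| ≤
      (2 ^ (11234 * u))⁻¹) (t : Fin 2 × Fin 2 × Fin 2) :
    kummerCoeff M m (classIdx L M ρ) w t = 0 := by
  have hbox : ∀ v ∈ classIdx L M ρ, quo M v ∈ boxIdx (2 * g) := fun v hv =>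
    quo_mem_boxIdx hMg (mem_filter.1 hv).1
  have hcoeff : ∀ f : Zphi →+* ℝ,
      (∀ v ∈ classIdx L M ρ, |f (halfMonomial m (quo M v))| ≤ 2 ^ (300 * u)) →
      ∀ i j l, |f (kummerCoeff M m (classIdx L M ρ) w (i, j, l))| ≤ 2 ^ (737 * u) := by
    intro f hf i j l
    calc |f (kummerCoeff M m (classIdx L M ρ) w (i, j, l))| ≤
          #(classIdx L M ρ) * (2 ^ (436 * u) * 2 ^ (300 * u)) :=
          abs_map_kummerCoeff_le f (by positivity) (by positivity) hw hf _
      _ ≤ 2 ^ u * (2 ^ (436 * u) * 2 ^ (300 * u)) := by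
        gcongr
        exact h.card_classIdx_le M ρ
      _ = 2 ^ (737 * u) := by ring
  refine eq_zero_of_kummer_sum_small
    (hcoeff Zphi.val fun v hv => h.abs_val_halfMonomial_le hgm (hbox v hv))
    (hcoeff Zphi.conjVal fun v hv => h.abs_conjVal_halfMonomial_le hgm (hbox v hv)) ?_
    t.1 t.2.1 t.2.2
  rw [sum_val_kummerCoeff hm]
  have hu : 4 ≤ u := by
    have := h.u_eq
    have := h.k_pos
    omega
  have hsize : (16 : ℝ) * 2 ^ (737 * u) ≤ 2 ^ (738 * u) := by
    calc (16 : ℝ) * 2 ^ (737 * u) = 2 ^ (737 * u + 4) := by ring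
      _ ≤ 2 ^ (738 * u) := pow_le_pow_right₀ one_le_two (by omega)
  calc _ ≤ (2 ^ (11234 * u))⁻¹ * (2 ^ (738 * u)) ^ 7 * ((2 : ℝ) ^ (738 * u)) ^ 8 := by gcongr
    _ = (2 ^ (164 * u))⁻¹ := by
      rw [show 11234 * u = 738 * u * 7 + 738 * u * 8 + 164 * u by ring, pow_add, pow_add,
        pow_mul _ (738 * u) 7, pow_mul _ (738 * u) 8]
      field_simp
    _ < 1 := inv_lt_one_of_one_lt₀ (one_lt_pow₀ one_lt_two (by omega))

lemma lcmUpto_pow_mul_sum_auxTerm (p : ℕ × ℕ × ℕ → ℕ → ℤ) (ρ : ℕ × ℕ × ℕ) (j m₂ m₃ m : ℕ)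
    {s : Finset (ℕ × ℕ × ℕ)} (hs : s ⊆ classIdx L M ρ) :
    (Nat.lcmUpto k : ℂ) ^ j *
        ∑ v ∈ s, auxTerm L n x y (feldmanComb k N p) j m₂ m₃ ((g * m : ℕ) : ℂ) v =
      ((Real.exp (logWeight (resid M ρ) * m / (2 * M)) * ∑ v ∈ s,
        auxCoeff k n x y N p j m₂ m₃ (g * m) v * Real.exp (logWeight (quo M v) * m / 2) : ℝ) :
        ℂ) := by
  rw [mul_sum, mul_sum, Complex.ofReal_sum]
  refine sum_congr rfl fun v hv => ?_
  rw [lcmUpto_pow_mul_auxTerm h.k_pos, logWeight_div_mul h.L_pos.ne' hMg,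
    (mem_filter.1 (hs hv)).2, Real.exp_add, mul_left_comm]

lemma abs_sum_auxCoeff_mul_exp_le {p : ℕ × ℕ × ℕ → ℕ → ℤ} {ρ : ℕ × ℕ × ℕ} {j m₂ m₃ m : ℕ}
    (hj : j ≤ 2 ^ 31)
    (hsmall : ‖∑ v ∈ classIdx L M ρ,
      auxTerm L n x y (feldmanComb k N p) j m₂ m₃ ((g * m : ℕ) : ℂ) v‖ ≤ (2 ^ (11362 * u))⁻¹) :
    |∑ v ∈ classIdx L M ρ,
      auxCoeff k n x y N p j m₂ m₃ (g * m) v * Real.exp (logWeight (quo M v) * m / 2)| ≤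
      (2 ^ (11234 * u))⁻¹ := by
  set S := ∑ v ∈ classIdx L M ρ,
    auxCoeff k n x y N p j m₂ m₃ (g * m) v * Real.exp (logWeight (quo M v) * m / 2)
  have hnorm := congrArg norm
    (h.lcmUpto_pow_mul_sum_auxTerm hMg p ρ j m₂ m₃ m (Subset.refl (classIdx L M ρ)))
  rw [norm_mul, norm_pow, Complex.norm_natCast, Complex.norm_real, norm_mul, Real.norm_eq_abs,
    Real.norm_eq_abs, Real.abs_exp] at hnorm
  have hlcm : (Nat.lcmUpto k : ℝ) ^ j ≤ 2 ^ (128 * u) := by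
    calc (Nat.lcmUpto k : ℝ) ^ j ≤ (2 ^ (4 * k)) ^ j := by
          gcongr
          exact_mod_cast lcmUpto_le_two_pow h.le_k
      _ = 2 ^ (4 * k * j) := (pow_mul _ _ _).symm
      _ ≤ 2 ^ (128 * u) :=
        pow_le_pow_right₀ one_le_two (h.four_mul_k_mul_le (hj.trans (by norm_num)))
  have hexp : 1 ≤ Real.exp (logWeight (resid M ρ) * m / (2 * M)) := by
    have := logWeight_nonneg (resid M ρ)
    exact Real.one_le_exp (by positivity)
  calc |S| ≤ Real.exp (logWeight (resid M ρ) * m / (2 * M)) * |S| :=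
        le_mul_of_one_le_left (abs_nonneg _) hexp
    _ ≤ 2 ^ (128 * u) * (2 ^ (11362 * u))⁻¹ := by
        rw [← hnorm]
        gcongr
    _ = (2 ^ (11234 * u))⁻¹ := by
        rw [show 11362 * u = 128 * u + 11234 * u by ring, pow_add]
        field_simp

theorem vanish_half {p : ℕ × ℕ × ℕ → ℕ → ℤ} (hp : ∀ v i, |p v i| ≤ 2 ^ (147 * u))
    (hΛ : |linearForm n x y| ≤ (2 ^ (44800 * u))⁻¹)
    (hV : Vanish L U n x y (feldmanComb k N p) M (2 * g) (2 * (128 * g))) :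
    Vanish L U n x y (feldmanComb k N p) (2 * M) g (128 * g) := by
  intro ρ m j m₂ m₃ hm hgm hj
  have hj31 : j + m₂ + m₃ ≤ 2 ^ 31 := by
    have := h.two_mul_g_le hMg
    have := h.L_eq
    omega
  have hsmall := h.norm_sum_auxTerm_le hMg hp hΛ hV ρ hj (t := (g * m : ℕ)) (Nat.cast_nonneg _)
    (by exact_mod_cast hgm.le)
  rw [Complex.ofReal_natCast] at hsmall
  have hcoeff := h.kummerCoeff_eq_zero hMg hm hgm.le
    (fun v hv => h.abs_auxCoeff_le hp hgm.le (mem_filter.1 hv).1 hj31)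
    (h.abs_sum_auxCoeff_mul_exp_le hMg (by omega) hsmall) (parTriple (quo M ρ))
  have hclass : classIdx L (2 * M) ρ =
      {v ∈ classIdx L M ρ | parTriple (quo M v) = parTriple (quo M ρ)} := by
    ext v
    rw [mem_classIdx_two_mul, mem_filter]
  have hlcm : (Nat.lcmUpto k : ℂ) ^ j ≠ 0 :=
    pow_ne_zero _ (Nat.cast_ne_zero.2 (Nat.lcmUpto_ne_zero k))
  refine (mul_eq_zero.1 ?_).resolve_left hlcm
  rw [hclass, h.lcmUpto_pow_mul_sum_auxTerm hMg p ρ j m₂ m₃ m (filter_subset _ _),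
    ← val_kummerCoeff_mul hm, hcoeff, map_zero, zero_mul, mul_zero, Complex.ofReal_zero]

end AuxParams

end Halving

section LowerBound

lemma classIdx_self {L : ℕ} {v : ℕ × ℕ × ℕ} (hv : v ∈ boxIdx L) : classIdx L L v = {v} := by
  have hresid : ∀ {w}, w ∈ boxIdx L → resid L w = w := fun hw => by
    obtain ⟨ha, hb, hc⟩ := mem_boxIdx.1 hw
    rw [resid, Nat.mod_eq_of_lt ha, Nat.mod_eq_of_lt hb, Nat.mod_eq_of_lt hc]
  ext w
  rw [classIdx, mem_filter, mem_singleton, hresid hv]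
  constructor
  · rintro ⟨hw, hwv⟩
    rwa [hresid hw] at hwv
  · rintro rfl
    exact ⟨hv, hresid hv⟩

namespace AuxParams

variable {k n x y L N T U u : ℕ} (h : AuxParams k n x y L N T U u)

include h

lemma eq_zero_of_vanish {p : ℕ × ℕ × ℕ → ℕ → ℤ} {T₀ : ℕ} (hT₀ : 0 < T₀)
    (hV : Vanish L U n x y (feldmanComb k N p) L 1 T₀) {v : ℕ × ℕ × ℕ} (hv : v ∈ boxIdx L) {i : ℕ}
    (hi : i < N) : p v i = 0 := by
  have hroot : ∀ a : Fin (32 * u), (feldmanComb k N p v).eval ((2 * (a : ℕ) + 1 : ℕ) : ℂ) = 0 := by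
    intro a
    have hsum := hV v (2 * (a : ℕ) + 1) 0 0 0 ⟨a, rfl⟩ (by have := h.U_eq; omega) hT₀
    rw [classIdx_self hv, sum_singleton, auxTerm] at hsum
    simpa only [one_mul, pow_zero, mul_one, hasseDeriv_zero', mul_eq_zero, Complex.exp_ne_zero,
      or_false] using hsum
  have hinj : Function.Injective fun a : Fin (32 * u) => ((2 * (a : ℕ) + 1 : ℕ) : ℂ) :=
    fun a b hab => Fin.ext (by have := Nat.cast_injective hab; omega)
  have hdeg : (feldmanComb k N p v).natDegree < Fintype.card (Fin (32 * u)) := by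
    refine (h.natDegree_feldmanComb_lt p v).trans_le ?_
    rw [Fintype.card_fin, h.N_eq, h.u_eq]
    omega
  have hzero := eq_zero_of_natDegree_lt_card_of_eval_eq_zero _ hinj hroot hdeg
  simp only [feldmanComb, ← smul_eq_C_mul] at hzero
  exact_mod_cast linearIndependent_iff'.1 (feldmanSequence k).linearIndependent _ _ hzero i
    (mem_range.2 hi)

theorem lt_abs_linearForm : (2 ^ (44800 * u))⁻¹ < |linearForm n x y| := by
  by_contra! hΛ
  obtain ⟨p, ⟨v, hv, i, hi, hne⟩, hp, hV⟩ := h.exists_initial_vanish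
  have hdescent : ∀ r s : ℕ, r + s = 25 →
      Vanish L U n x y (feldmanComb k N p) (2 ^ r) (2 ^ s) (128 * 2 ^ s) := by
    intro r
    induction r with
    | zero =>
      intro s hs
      obtain rfl : s = 25 := by omega
      have hT : 128 * 2 ^ 25 = T := by rw [h.T_eq]; norm_num
      rwa [hT, ← h.L_eq, pow_zero]
    | succ r ih =>
      intro s hs
      have hV' := ih (s + 1) (by omega)
      rw [pow_succ' 2 s, mul_left_comm] at hV'
      rw [pow_succ' 2 r]
      refine h.vanish_half ?_ hp hΛ hV'
      rw [h.L_eq, ← hs]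
      ring
  have hlast := hdescent 25 0 rfl
  rw [← h.L_eq, pow_zero] at hlast
  exact hne (h.eq_zero_of_vanish (by norm_num) hlast hv hi)

end AuxParams

section

variable {n : ℕ} (hn : 2 ^ 46 ≤ n)

include hn

lemma forty_six_le_log_two : 46 ≤ Nat.log 2 n :=
  (Nat.le_log_iff_pow_le one_lt_two (by omega)).2 hn

lemma auxParams_of_two_pow_le {x y k : ℕ} (hx : x ≤ n) (hy : y ≤ n)
    (hk : k = (Nat.log 2 n + 31) / 4) :
    AuxParams k n x y (2 ^ 25) (2 ^ 28 * k) (2 ^ 32) (64 * (2 ^ 26 * k)) (2 ^ 26 * k) where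
  le_k := by
    have := forty_six_le_log_two hn
    omega
  L_eq := rfl
  u_eq := rfl
  N_eq := rfl
  T_eq := rfl
  U_eq := rfl
  n_pos := by omega
  x_le := hx
  y_le := hy
  four_mul_n_mul_L_le := by
    calc 4 * n * 2 ^ 25 ≤ 4 * 2 ^ (Nat.log 2 n + 1) * 2 ^ 25 := by
          gcongr
          exact (Nat.lt_pow_succ_log_self one_lt_two n).le
      _ = 2 ^ (Nat.log 2 n + 28) := by ring
      _ ≤ 2 ^ (4 * k) := Nat.pow_le_pow_right two_pos (by omega)

theorem lt_abs_linearForm_of_two_pow_le {x y : ℕ} (hx : x ≤ n) (hy : y ≤ n) :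
    2 * ((2 : ℝ) ^ (1700000000000 * Nat.log 2 n))⁻¹ < |linearForm n x y| := by
  have hparams := auxParams_of_two_pow_le hn hx hy rfl
  refine lt_of_le_of_lt ?_ hparams.lt_abs_linearForm
  generalize hu : 2 ^ 26 * ((Nat.log 2 n + 31) / 4) = u
  have hexp : 44800 * u + 1 ≤ 1700000000000 * Nat.log 2 n := by
    have := forty_six_le_log_two hn
    omega
  calc 2 * ((2 : ℝ) ^ (1700000000000 * Nat.log 2 n))⁻¹ ≤ 2 * (2 ^ (44800 * u + 1))⁻¹ := by
        gcongr
        exact one_le_two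
    _ = (2 ^ (44800 * u))⁻¹ := by
        rw [pow_succ, mul_inv]
        ring

end

end LowerBound

section LucasNumbers

lemma coe_lucas_eq (n : ℕ) : (lucas n : ℝ) = Real.goldenRatio ^ n + Real.goldenConj ^ n := by
  induction n using Nat.twoStepInduction with
  | zero => norm_num [lucas]
  | one => simp [lucas, Real.goldenRatio_add_goldenConj]
  | more n h0 h1 =>
    rw [lucas, Int.cast_add, h0, h1]
    linear_combination (-Real.goldenRatio ^ n) * Real.goldenRatio_sq -
      Real.goldenConj ^ n * Real.goldenConj_sq

lemma lucas_pos (n : ℕ) : 0 < lucas n := by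
  induction n using Nat.twoStepInduction with
  | zero => norm_num [lucas]
  | one => norm_num [lucas]
  | more n h0 h1 =>
    rw [lucas]
    omega

lemma four_mul_lucas_le {n : ℕ} (hn : 2 ≤ n) : 4 * lucas n ≤ 3 * 2 ^ n := by
  obtain ⟨n, rfl⟩ := Nat.exists_eq_add_of_le' hn
  induction n using Nat.twoStepInduction with
  | zero => norm_num [lucas]
  | one => norm_num [lucas]
  | more n h0 h1 =>
    have hrec : lucas (n + 2 + 2) = lucas (n + 1 + 2) + lucas (n + 2) := rfl
    have hpow₃ : (2 : ℤ) ^ (n + 1 + 2) = 2 * 2 ^ (n + 2) := by ring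
    have hpow₄ : (2 : ℤ) ^ (n + 2 + 2) = 4 * 2 ^ (n + 2) := by ring
    have : (0 : ℤ) < 2 ^ (n + 2) := by positivity
    specialize h0 (by omega)
    specialize h1 (by omega)
    omega

lemma abs_lucas_sub_goldenRatio_pow_le (n : ℕ) : |(lucas n : ℝ) - Real.goldenRatio ^ n| ≤ 1 := by
  rw [coe_lucas_eq, add_sub_cancel_left, abs_pow]
  refine pow_le_one₀ (abs_nonneg _) (abs_le.2 ⟨Real.neg_one_lt_goldenConj.le, ?_⟩)
  linarith [Real.goldenConj_neg]

end LucasNumbers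

section TwoRepresentations

lemma abs_log_sub_log_le {s t ε : ℝ} (hs : 0 < s) (ht : 0 < t) (hε : ε ≤ 1 / 2)
    (h : |s - t| ≤ ε * t) : |Real.log s - Real.log t| ≤ 2 * ε := by
  obtain ⟨hlow, hhigh⟩ := abs_le.1 h
  have hε₀ : 0 ≤ ε := nonneg_of_mul_nonneg_left ((abs_nonneg _).trans h) ht
  have hquot : s / t ≤ 1 + ε := by
    rw [div_le_iff₀ ht]
    linarith
  have hinv : (s / t)⁻¹ ≤ 1 + 2 * ε := by
    have : 0 ≤ (1 + 2 * ε) * (s - (1 - ε) * t) := mul_nonneg (by linarith) (by linarith)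
    have : 0 ≤ ε * (1 - 2 * ε) * t := mul_nonneg (mul_nonneg hε₀ (by linarith)) ht.le
    rw [inv_div, div_le_iff₀ hs]
    linarith
  rw [← Real.log_div hs.ne' ht.ne', abs_le]
  constructor
  · linarith [Real.one_sub_inv_le_log_of_pos (div_pos hs ht)]
  · linarith [Real.log_le_sub_one_of_pos (div_pos hs ht)]

lemma log_two_pow_mul_three_pow (x y : ℕ) :
    Real.log (2 ^ x * 3 ^ y) = x * Real.log 2 + y * Real.log 3 := by
  rw [Real.log_mul (by positivity) (by positivity), Real.log_pow, Real.log_pow]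

lemma abs_linearForm_le {c : ℤ} {n n₁ x x₁ y y₁ A : ℕ} (hc : c ≤ 0)
    (h1 : c = lucas n - 2 ^ x * 3 ^ y) (h2 : c = lucas n₁ - 2 ^ x₁ * 3 ^ y₁) (hA : 1 ≤ A)
    (hgap : (2 : ℝ) ^ A * (2 ^ x₁ * 3 ^ y₁) ≤ 2 ^ x * 3 ^ y) :
    |linearForm n x y| ≤ 2 * (2 ^ A)⁻¹ := by
  have hc_le : -(c : ℝ) + 1 ≤ 2 ^ x₁ * 3 ^ y₁ := by
    have := lucas_pos n₁
    exact_mod_cast (by omega : -c + 1 ≤ 2 ^ x₁ * 3 ^ y₁)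
  have hdiff : |Real.goldenRatio ^ n - 2 ^ x * 3 ^ y| ≤ 2 ^ x₁ * 3 ^ y₁ := by
    have h1' : (c : ℝ) = lucas n - 2 ^ x * 3 ^ y := by exact_mod_cast h1
    have hc' : (c : ℝ) ≤ 0 := by exact_mod_cast hc
    obtain ⟨hlow, hhigh⟩ := abs_le.1 (abs_lucas_sub_goldenRatio_pow_le n)
    rw [abs_le]
    constructor <;> linarith
  have hhalf : ((2 : ℝ) ^ A)⁻¹ ≤ 1 / 2 := by
    rw [one_div]
    exact inv_anti₀ two_pos (le_self_pow₀ one_le_two (by omega))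
  have hlog := abs_log_sub_log_le (pow_pos Real.goldenRatio_pos n)
    (by positivity : (0 : ℝ) < 2 ^ x * 3 ^ y) hhalf (by
      rw [inv_mul_eq_div, le_div_iff₀' (by positivity)]
      refine le_trans ?_ hgap
      gcongr)
  rwa [Real.log_pow, log_two_pow_mul_three_pow, ← sub_sub] at hlog

lemma two_pow_mul_three_pow_le {c : ℤ} {n n₁ x x₁ y y₁ : ℕ}
    (h1 : c = lucas n - 2 ^ x * 3 ^ y) (h2 : c = lucas n₁ - 2 ^ x₁ * 3 ^ y₁) (hn : 2 ≤ n)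
    (hgap : 4 * ((2 : ℝ) ^ x₁ * 3 ^ y₁) ≤ 2 ^ x * 3 ^ y) : 2 ^ x * 3 ^ y ≤ 2 ^ n := by
  have hgap' : 4 * ((2 : ℤ) ^ x₁ * 3 ^ y₁) ≤ 2 ^ x * 3 ^ y := by exact_mod_cast hgap
  have := lucas_pos n₁
  have := four_mul_lucas_le hn
  exact_mod_cast (by omega : (2 : ℤ) ^ x * 3 ^ y ≤ 2 ^ n)

lemma le_and_le_of_two_pow_mul_three_pow_le {n x y : ℕ} (h : 2 ^ x * 3 ^ y ≤ 2 ^ n) :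
    x ≤ n ∧ y ≤ n := by
  constructor
  · exact (Nat.pow_le_pow_iff_right one_lt_two).1
      ((Nat.le_mul_of_pos_right _ (by positivity)).trans h)
  · exact (Nat.pow_le_pow_iff_right one_lt_two).1 ((Nat.pow_le_pow_left (by norm_num) y).trans
      ((Nat.le_mul_of_pos_left _ (by positivity)).trans h))

lemma natLog_two_mul_log_two_le {n : ℕ} (hn : n ≠ 0) :
    Nat.log 2 n * Real.log 2 ≤ Real.log n := by
  rw [← Real.log_pow]
  exact Real.log_le_log (by positivity) (by exact_mod_cast Nat.pow_log_le_self 2 hn)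

lemma two_pow_mul_le_of_log_le {n x x₁ y y₁ : ℕ} (hn : n ≠ 0) {a : ℕ}
    (h : a * Real.log n ≤
      (x * Real.log 2 + y * Real.log 3) - (x₁ * Real.log 2 + y₁ * Real.log 3)) :
    (2 : ℝ) ^ (a * Nat.log 2 n) * (2 ^ x₁ * 3 ^ y₁) ≤ 2 ^ x * 3 ^ y := by
  have hlog := mul_le_mul_of_nonneg_left (natLog_two_mul_log_two_le hn) a.cast_nonneg
  rw [← Real.log_le_log_iff (by positivity) (by positivity),
    Real.log_mul (by positivity) (by positivity), Real.log_pow, log_two_pow_mul_three_pow,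
    log_two_pow_mul_three_pow]
  push_cast
  linarith

lemma two_pow_le_of_mul_log_le {n : ℕ} (hn : 2 ≤ n)
    (h : 1.7 * 10 ^ 12 * Real.log n ≤ n * Real.log 2) : 2 ^ 46 ≤ n := by
  have hboot : ∀ {a b : ℕ}, 2 ^ a ≤ n → 2 ^ b ≤ 1700000000000 * a → 2 ^ b ≤ n := by
    intro a b ha hb
    have halog : (a : ℝ) * Real.log 2 ≤ Real.log n := by
      rw [← Real.log_pow]
      exact Real.log_le_log (by positivity) (by exact_mod_cast ha)
    have hle : (1700000000000 * a : ℝ) ≤ n :=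
      le_of_mul_le_mul_right (by linarith) (Real.log_pos one_lt_two)
    exact hb.trans (by exact_mod_cast hle)
  have h40 : 2 ^ 40 ≤ n := hboot (a := 1) hn (by norm_num)
  have h45 : 2 ^ 45 ≤ n := hboot h40 (by norm_num)
  exact hboot h45 (by norm_num)

end TwoRepresentations

end

theorem neg_c_gap_X_bound_general (c : ℤ) (hc : c ≤ 0) (n n₁ x x₁ y y₁ : ℕ)
    (h1 : c = lucas n - 2 ^ x * 3 ^ y) (h2 : c = lucas n₁ - 2 ^ x₁ * 3 ^ y₁) (hn : 2 ≤ n) :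
    let X : ℝ := x * Real.log 2 + y * Real.log 3
    let X₁ : ℝ := x₁ * Real.log 2 + y₁ * Real.log 3
    X - X₁ < 1.7 * 10 ^ 12 * Real.log n := by
  intro X X₁
  by_contra! hX
  set A := 1700000000000 * Nat.log 2 n
  have hA : 2 ≤ A := by
    have := Nat.log_pos one_lt_two hn
    omega
  have hgap : (2 : ℝ) ^ A * (2 ^ x₁ * 3 ^ y₁) ≤ 2 ^ x * 3 ^ y :=
    two_pow_mul_le_of_log_le (by omega) (by push_cast; linarith)
  have hle : 2 ^ x * 3 ^ y ≤ 2 ^ n := by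
    refine two_pow_mul_three_pow_le h1 h2 hn (le_trans ?_ hgap)
    gcongr
    exact (by norm_num : (4 : ℝ) = 2 ^ 2).trans_le (pow_le_pow_right₀ one_le_two hA)
  have hXn : X ≤ n * Real.log 2 := by
    rw [← Real.log_pow]
    exact (log_two_pow_mul_three_pow x y).ge.trans
      (Real.log_le_log (by positivity) (by exact_mod_cast hle))
  have hX₁ : 0 ≤ X₁ := by positivity
  have hn46 : 2 ^ 46 ≤ n := two_pow_le_of_mul_log_le hn (by linarith)
  obtain ⟨hx, hy⟩ := le_and_le_of_two_pow_mul_three_pow_le hle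
  exact (lt_abs_linearForm_of_two_pow_le hn46 hx hy).not_ge
    (abs_linearForm_le hc h1 h2 (by omega) hgap)

theorem neg_c_gap_X_bound (c : ℤ) (hc : c < 0) (n n₁ x x₁ y y₁ : ℕ)
    (h1 : c = lucas n - 2 ^ x * 3 ^ y) (h2 : c = lucas n₁ - 2 ^ x₁ * 3 ^ y₁)
    (hnn : n₁ < n) (hn₁ : 500 < n₁) :
    let X : ℝ := x * Real.log 2 + y * Real.log 3
    let X₁ : ℝ := x₁ * Real.log 2 + y₁ * Real.log 3
    X - X₁ < 1.7 * 10 ^ 12 * Real.log n :=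
  neg_c_gap_X_bound_general c hc.le n n₁ x x₁ y y₁ h1 h2 (by omega)
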